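/- There exist a natural number r, a constant c > 0, and x₀ such that for all x ≥ x₀, the number of primes p with x < p ≤ 2x and Ω(|H(p)|) ≤ r is at least c·x/(log x)^{g+1}. -/

import Mathlib

/-!
A sieve proof which uses no prime number theorem in progressions: the large sieve supplies the
distribution of primes, and Chebyshev's bounds supply the main term.

**Setting.** Put `H = h₁ ⋯ h_g`. For primes `Q₀ < l < z`, with `z = 2 ^ 2 ^ t`, the bad classes
modulo `l` are the nonzero roots of `H`. Let `y = z ^ 2 ^ a` and let `X` lie between `y ^ E` and
`y ^ (2 E)`. If a prime `p ∈ (X, 2X]` is in no bad class, then `H(p)` has no prime factor in `(Q₀, z)`, and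
`|H(p)| ≤ z ^ R` with `R` fixed bounds the number of its prime factors `≥ z`.

**Sieve.** A combinatorial sieve over doubly exponential blocks of primes (`IsSieve.lower`,
`IsSieve.upper_trunc`) produces a majorant `Theta` of the indicator of the good integers, namely
those that avoid every bad class.

**Lower bound for primes.** For `n` we have `log n = ∑_{dm = n} Λ(d)`, hence
`Λ(n) = log n - ∑_{dm = n, m > 1} Λ(d)`. Summing over good `y`-rough `n`, the first term is bounded
below by the lower bound sieve and the last one is bounded above through `Theta` (`good_ge`).
Expand `Theta` in functions of mean zero modulo squarefree `q` (`Theta_expand`), and these in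
primitive Dirichlet characters (`bilinear_prod_le`). The resulting bilinear sums over rough `d`, `m`
in short boxes are controlled by the large sieve, in a form that gains from roughness
(`large_sieve`, `bilinear_main`); as every conductor other than `1` exceeds `Q₀`, the total error is
small once `Q₀` is large. So `Theta` may be replaced by its density `VH`, after which the sum is
compared with the same identity over all rough integers; Chebyshev's bound
`θ(2X) - θ(X) ≥ X / 5` then gives `∑_{good} Λ(n) ≥ VH · X / 10` (`main_lower`).

**Density.** Each irreducible factor of `H` has on average at most one root modulo `l`, in the sense
that `∑ rootNum / l ≤ t log 2 + C` over the primes `l` of the sieve (`sum_rootNum_le`): the roots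
correspond to prime ideals of degree one in the field generated by a root of the factor, and the
Dedekind zeta function has a simple pole at `1`, which is used at the point `s = 1 + 1 / log z`.
Hence `VH ≥ c / (log z) ^ g` (`VH_badH_ge`).

**Small primes.** The primes `p` for which `H(p)` is divisible by a high power of some prime `≤ Q₀`
are removed by an upper bound sieve (`count_ge`). For the remaining `p` the number `Ω(|H(p)|)` is
bounded (`bigOmega_bound`), and every large `X` lies in an admissible range (`exists_scale`).
-/

/-- `Ω`, the number of prime factors counted with multiplicity. -/
noncomputable def bigOmega (n : ℕ) : ℕ := ArithmeticFunction.cardFactors n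

namespace APS

open Finset

/-! ### Sums of periodic functions -/

theorem sum_range_mul_of_coprime {R : Type*} [CommSemiring R] {m n : ℕ} (hm : 0 < m) (hn : 0 < n)
    (hmn : m.Coprime n) (f g : ℕ → R) (hf : Function.Periodic f m) (hg : Function.Periodic g n) :
    ∑ a ∈ range (m * n), f a * g a = (∑ a ∈ range m, f a) * ∑ a ∈ range n, g a := by
  rw [sum_mul_sum, ← sum_product']
  refine sum_bij' (fun a _ => (a % m, a % n))
    (fun p _ => (Nat.chineseRemainder hmn p.1 p.2 : ℕ)) ?_ ?_ ?_ ?_ ?_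
  · intro a _
    simp [Nat.mod_lt _ hm, Nat.mod_lt _ hn]
  · intro p _
    exact mem_range.2 (Nat.chineseRemainder_lt_mul hmn _ _ hm.ne' hn.ne')
  · intro a ha
    have h1 := (Nat.chineseRemainder hmn (a % m) (a % n)).2
    have h2 : (Nat.chineseRemainder hmn (a % m) (a % n) : ℕ) ≡ a [MOD m * n] := by
      rw [← Nat.modEq_and_modEq_iff_modEq_mul hmn]
      exact ⟨h1.1.trans (Nat.mod_modEq _ _), h1.2.trans (Nat.mod_modEq _ _)⟩
    exact h2.eq_of_lt_of_lt (Nat.chineseRemainder_lt_mul hmn _ _ hm.ne' hn.ne') (mem_range.1 ha)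
  · intro p hp
    simp only [mem_product, mem_range] at hp
    have h1 := (Nat.chineseRemainder hmn p.1 p.2).2
    ext
    · exact Nat.mod_eq_of_modEq h1.1 hp.1
    · exact Nat.mod_eq_of_modEq h1.2 hp.2
  · intro a _
    simp [hf.map_mod_nat, hg.map_mod_nat]

theorem periodic_of_dvd {R : Type*} {f : ℕ → R} {m n : ℕ} (hf : Function.Periodic f m)
    (h : m ∣ n) : Function.Periodic f n := by
  obtain ⟨k, rfl⟩ := h
  intro a
  rw [mul_comm]
  exact (hf.nat_mul k) a

theorem periodic_prod {R : Type*} [CommMonoid R] (s : Finset ℕ) (f : ℕ → ℕ → R)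
    (hf : ∀ l ∈ s, Function.Periodic (f l) l) :
    Function.Periodic (fun a => ∏ l ∈ s, f l a) (∏ l ∈ s, l) := by
  intro a
  exact prod_congr rfl fun l hl => periodic_of_dvd (hf l hl) (dvd_prod_of_mem _ hl) a

/-- Chinese remainder theorem: the complete sum of a product of functions with pairwise coprime
periods factors. -/
theorem sum_range_prod {R : Type*} [CommSemiring R] (s : Finset ℕ) (hs : ∀ l ∈ s, l.Prime)
    (w : ℕ) (hw : 0 < w) (hws : ∀ l ∈ s, w.Coprime l) (q : ℕ → R) (hq : Function.Periodic q w)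
    (f : ℕ → ℕ → R) (hf : ∀ l ∈ s, Function.Periodic (f l) l) :
    ∑ a ∈ range (w * ∏ l ∈ s, l), q a * ∏ l ∈ s, f l a =
      (∑ a ∈ range w, q a) * ∏ l ∈ s, ∑ a ∈ range l, f l a := by
  induction s using Finset.induction_on with
  | empty => simp
  | insert p s hp ih =>
    have ih' := ih (fun l hl => hs l (mem_insert_of_mem hl)) (fun l hl => hws l (mem_insert_of_mem hl))
      (fun l hl => hf l (mem_insert_of_mem hl))
    have hpp := hs p (mem_insert_self _ _)
    rw [prod_insert hp, prod_insert hp, show w * (p * ∏ l ∈ s, l) = (w * ∏ l ∈ s, l) * p by ring,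
      mul_left_comm, mul_comm (∑ a ∈ range p, f p a), ← ih', ← sum_range_mul_of_coprime]
    · refine sum_congr rfl fun a _ => ?_
      rw [prod_insert hp]; ring
    · exact Nat.mul_pos hw (prod_pos fun l hl => (hs l (mem_insert_of_mem hl)).pos)
    · exact hpp.pos
    · refine Nat.Coprime.mul_left (hws p (mem_insert_self _ _)) ?_
      refine Nat.Coprime.prod_left fun l hl => ?_
      rw [Nat.coprime_primes (hs l (mem_insert_of_mem hl)) hpp]
      rintro rfl; exact hp hl
    · intro a
      have h1 := periodic_of_dvd hq (dvd_mul_right w (∏ l ∈ s, l)) a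
      have h2 := periodic_of_dvd (periodic_prod s f (fun l hl => hf l (mem_insert_of_mem hl)))
        (dvd_mul_left (∏ l ∈ s, l) w) a
      simp only at h1 h2 ⊢
      rw [h1, h2]
    · exact hf p (mem_insert_self _ _)

theorem sum_Ioc_periodic_full {R : Type*} [AddCommMonoid R] (f : ℕ → R) {w : ℕ} (hf : Function.Periodic f w)
    (A : ℕ) : ∑ a ∈ Ioc A (A + w), f a = ∑ a ∈ range w, f a := by
  have h0 : Ioc A (A + w) = Ico (A + 1) (A + 1 + w) := by
    ext x; simp; omega
  have h2 := Nat.image_Ico_mod (A + 1) w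
  have h3 : ∑ a ∈ range w, f a = ∑ a ∈ (Ico (A + 1) (A + 1 + w)).image (· % w), f a := by rw [h2]
  rw [h3, h0, sum_image]
  · exact sum_congr rfl fun a _ => (hf.map_mod_nat a).symm
  · exact Nat.mod_injOn_Ico _ _

theorem sum_Ioc_periodic_mul {R : Type*} [Semiring R] (f : ℕ → R) {w : ℕ} (hf : Function.Periodic f w)
    (A k : ℕ) : ∑ a ∈ Ioc A (A + k * w), f a = k * ∑ a ∈ range w, f a := by
  induction k with
  | zero => simp
  | succ k ih =>
    have h := sum_Ioc_consecutive f (Nat.le_add_right A (k * w)) (Nat.le_add_right (A + k * w) w)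
    rw [show A + (k + 1) * w = A + k * w + w by ring, ← h, ih, sum_Ioc_periodic_full f hf]
    push_cast; rw [add_mul, one_mul]

/-- A nonnegative periodic function has the expected sum over an interval, up to one period. -/
theorem abs_sum_Ioc_sub_le (f : ℕ → ℝ) {w : ℕ} (hw : 0 < w) (hf : Function.Periodic f w)
    (hf0 : ∀ a, 0 ≤ f a) {A B : ℕ} (hAB : A ≤ B) :
    |∑ a ∈ Ioc A B, f a - ((B : ℝ) - A) / w * ∑ a ∈ range w, f a| ≤ ∑ a ∈ range w, f a := by
  set S := ∑ a ∈ range w, f a with hS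
  have hS0 : 0 ≤ S := sum_nonneg fun a _ => hf0 a
  set k := (B - A) / w
  set r := (B - A) % w
  have hkr : B = A + k * w + r := by
    have := Nat.div_add_mod (B - A) w
    have h2 : w * k + r = B - A := this
    rw [mul_comm] at h2; omega
  have hr : r < w := Nat.mod_lt _ hw
  have h := sum_Ioc_consecutive f (Nat.le_add_right A (k * w)) (Nat.le_add_right (A + k * w) r)
  rw [← hkr, sum_Ioc_periodic_mul f hf] at h
  rw [← h]
  have h1 : 0 ≤ ∑ a ∈ Ioc (A + k * w) B, f a := sum_nonneg fun a _ => hf0 a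
  have h2 : ∑ a ∈ Ioc (A + k * w) B, f a ≤ S := by
    rw [hS, ← sum_Ioc_periodic_full f hf (A + k * w)]
    refine sum_le_sum_of_subset_of_nonneg ?_ fun a _ _ => hf0 a
    exact Ioc_subset_Ioc_right (by omega)
  have hwR : (0 : ℝ) < w := by exact_mod_cast hw
  have h3 : ((B : ℝ) - A) / w * S = k * S + (r / w : ℝ) * S := by
    rw [hkr]; push_cast; field_simp; ring
  have h4 : (r / w : ℝ) * S ≤ S := by
    have : (r / w : ℝ) ≤ 1 := by rw [div_le_one hwR]; exact_mod_cast hr.le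
    nlinarith
  have h5 : 0 ≤ (r / w : ℝ) * S := by positivity
  rw [h3, abs_le]
  constructor <;> linarith

/-- Incomplete sums of a bounded periodic function of mean zero are bounded by the period. -/
theorem norm_sum_Ioc_le (f : ℕ → ℂ) {w : ℕ} (hw : 0 < w) (hf : Function.Periodic f w)
    (hf1 : ∀ a, ‖f a‖ ≤ 1) (hf0 : ∑ a ∈ range w, f a = 0) (A B : ℕ) :
    ‖∑ a ∈ Ioc A B, f a‖ ≤ w := by
  rcases le_total B A with hAB | hAB
  · rw [Ioc_eq_empty_of_le hAB]; simp
  set k := (B - A) / w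
  set r := (B - A) % w
  have hkr : B = A + k * w + r := by
    have := Nat.div_add_mod (B - A) w
    have h2 : w * k + r = B - A := this
    rw [mul_comm] at h2; omega
  have hr : r < w := Nat.mod_lt _ hw
  have h := sum_Ioc_consecutive f (Nat.le_add_right A (k * w)) (Nat.le_add_right (A + k * w) r)
  rw [← hkr, sum_Ioc_periodic_mul f hf, hf0, mul_zero, zero_add] at h
  rw [← h]
  refine (norm_sum_le_of_le _ fun a _ => hf1 a).trans ?_
  simp only [sum_const, Nat.card_Ioc, nsmul_eq_mul, mul_one]
  exact_mod_cast (by omega : B - (A + k * w) ≤ w)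

/-! ### Truncated inclusion-exclusion -/

/-- The sum of `∏ l ∈ d, w l` over the subsets `d` of `P` with at most `k` elements. -/
noncomputable def trunc {R : Type*} [CommRing R] (P : Finset ℕ) (k : ℕ) (w : ℕ → R) : R :=
  ∑ d ∈ P.powerset with d.card ≤ k, ∏ l ∈ d, w l

/-- The `k`-th elementary symmetric function of the values of `w` on `P`. -/
noncomputable def esym {R : Type*} [CommRing R] (P : Finset ℕ) (k : ℕ) (w : ℕ → R) : R :=
  ∑ d ∈ P.powersetCard k, ∏ l ∈ d, w l

section trunc

variable {R : Type*} [CommRing R]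

theorem trunc_zero (P : Finset ℕ) (w : ℕ → R) : trunc P 0 w = 1 := by
  have : P.powerset.filter (fun d => d.card ≤ 0) = {∅} := by
    ext d; simp
    rintro rfl; simp
  rw [trunc, this]; simp

theorem trunc_empty (k : ℕ) (w : ℕ → R) : trunc ∅ k w = 1 := by
  simp [trunc, Finset.filter_singleton]

theorem trunc_insert {P : Finset ℕ} {a : ℕ} (ha : a ∉ P) (k : ℕ) (w : ℕ → R) :
    trunc (insert a P) (k + 1) w = trunc P (k + 1) w + w a * trunc P k w := by
  unfold trunc
  rw [sum_filter, sum_powerset_insert ha, sum_filter, sum_filter, mul_sum]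
  congr 1
  refine sum_congr rfl fun d hd => ?_
  have had : a ∉ d := fun h => ha (mem_powerset.1 hd h)
  rw [card_insert_of_notMem had, prod_insert had]
  simp only [Nat.succ_le_succ_iff, mul_ite, mul_zero]

theorem trunc_succ (P : Finset ℕ) (k : ℕ) (w : ℕ → R) :
    trunc P (k + 1) w = trunc P k w + esym P (k + 1) w := by
  unfold trunc esym
  rw [← sum_union]
  · refine sum_congr ?_ fun _ _ => rfl
    ext d; simp only [mem_filter, mem_powerset, mem_union, mem_powersetCard]
    constructor
    · rintro ⟨h1, h2⟩
      rcases Nat.lt_or_ge d.card (k + 1) with h | h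
      · left; exact ⟨h1, by omega⟩
      · right; exact ⟨h1, by omega⟩
    · rintro (⟨h1, h2⟩ | ⟨h1, h2⟩)
      · exact ⟨h1, by omega⟩
      · exact ⟨h1, by omega⟩
  · rw [disjoint_left]
    intro d h1 h2
    simp only [mem_filter, mem_powersetCard] at h1 h2
    omega

theorem esym_neg (P : Finset ℕ) (k : ℕ) (w : ℕ → R) :
    esym P k (fun l => - w l) = (-1) ^ k * esym P k w := by
  unfold esym
  rw [mul_sum]
  refine sum_congr rfl fun d hd => ?_
  rw [prod_neg, (mem_powersetCard.1 hd).2]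

theorem esym_insert {P : Finset ℕ} {a : ℕ} (ha : a ∉ P) (k : ℕ) (w : ℕ → R) :
    esym (insert a P) (k + 1) w = esym P (k + 1) w + w a * esym P k w := by
  have h1 := trunc_succ (insert a P) k w
  have h2 := trunc_succ P k w
  rcases k with _ | k
  · rw [trunc_insert ha] at h1
    simp only [trunc_zero] at h1 h2
    have : esym P 0 w = 1 := by simp [esym]
    rw [this]
    linear_combination h2 - h1
  · rw [trunc_insert ha, trunc_insert ha] at h1
    have h3 := trunc_succ P k w
    linear_combination h2 + w a * h3 - h1

end trunc

/-- Bonferroni's inequalities, for weights in `[0, 1]`. -/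
theorem bonferroni (P : Finset ℕ) (g : ℕ → ℝ) (hg : ∀ l ∈ P, 0 ≤ g l ∧ g l ≤ 1) (b : ℕ) :
    trunc P (2 * b + 1) (fun l => - g l) ≤ ∏ l ∈ P, (1 - g l) ∧
      ∏ l ∈ P, (1 - g l) ≤ trunc P (2 * b) (fun l => - g l) := by
  induction P using Finset.induction_on generalizing b with
  | empty => simp [trunc_empty]
  | insert a P ha ih =>
    have ih' := ih (fun l hl => hg l (mem_insert_of_mem hl))
    have hga := hg a (mem_insert_self _ _)
    rw [prod_insert ha]
    constructor
    · rw [trunc_insert ha]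
      have h1 := (ih' b).1
      have h2 := (ih' b).2
      nlinarith [mul_le_mul_of_nonneg_left h2 hga.1]
    · rcases b with _ | b
      · rw [mul_zero, trunc_zero]
        have h0 : 0 ≤ ∏ l ∈ P, (1 - g l) :=
          prod_nonneg fun l hl => by linarith [(hg l (mem_insert_of_mem hl)).2]
        have h1 : ∏ l ∈ P, (1 - g l) ≤ 1 := by
          have := (ih' 0).2
          rwa [mul_zero, trunc_zero] at this
        nlinarith [hga.1, hga.2]
      · rw [show 2 * (b + 1) = 2 * b + 1 + 1 by ring, trunc_insert ha]
        have h1 := (ih' b).1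
        have h2 := (ih' (b + 1)).2
        rw [show 2 * (b + 1) = 2 * b + 1 + 1 by ring] at h2
        nlinarith [mul_le_mul_of_nonneg_left h1 hga.1]

/-- The truncation at an even level overshoots by at most the next elementary symmetric function. -/
theorem trunc_le_add_esym (P : Finset ℕ) (g : ℕ → ℝ) (hg : ∀ l ∈ P, 0 ≤ g l ∧ g l ≤ 1) (b : ℕ) :
    trunc P (2 * b) (fun l => - g l) ≤ ∏ l ∈ P, (1 - g l) + esym P (2 * b + 1) g := by
  have h := (bonferroni P g hg b).1
  rw [trunc_succ, esym_neg] at h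
  have : (-1 : ℝ) ^ (2 * b + 1) = -1 := by rw [pow_succ, pow_mul]; simp
  rw [this] at h
  linarith

theorem esym_nonneg (P : Finset ℕ) (k : ℕ) (g : ℕ → ℝ) (hg : ∀ l ∈ P, 0 ≤ g l) :
    0 ≤ esym P k g :=
  sum_nonneg fun _ hd => prod_nonneg fun l hl => hg l ((mem_powersetCard.1 hd).1 hl)

theorem esym_le (P : Finset ℕ) (g : ℕ → ℝ) (hg : ∀ l ∈ P, 0 ≤ g l) (k : ℕ) :
    esym P k g ≤ (∑ l ∈ P, g l) ^ k / k.factorial := by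
  induction P using Finset.induction_on generalizing k with
  | empty =>
    rcases k with _ | k
    · simp [esym]
    · rw [esym, powersetCard_eq_empty.2 (by simp)]; simp
  | insert a P ha ih =>
    have ih' := ih (fun l hl => hg l (mem_insert_of_mem hl))
    have hga := hg a (mem_insert_self _ _)
    have hS : 0 ≤ ∑ l ∈ P, g l := sum_nonneg fun l hl => hg l (mem_insert_of_mem hl)
    rw [sum_insert ha]
    rcases k with _ | k
    · simp [esym]
    · rw [esym_insert ha]
      set S := ∑ l ∈ P, g l
      have h1 := ih' (k + 1)
      have h2 := mul_le_mul_of_nonneg_left (ih' k) hga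
      have hk : (0 : ℝ) < (k.factorial : ℝ) := by exact_mod_cast k.factorial_pos
      have h3 : S ^ (k + 1) + (k + 1) * g a * S ^ k ≤ (g a + S) ^ (k + 1) := by
        have key : ∀ n : ℕ, S ^ (n + 1) + (n + 1) * g a * S ^ n ≤ (g a + S) ^ (n + 1) := by
          intro n
          induction n with
          | zero => simp; linarith
          | succ n ihn =>
            have hp : 0 ≤ S ^ n := pow_nonneg hS n
            have := mul_le_mul_of_nonneg_right ihn (add_nonneg hga hS)
            rw [pow_succ (g a + S) (n + 1)]
            refine le_trans ?_ this
            have h5 : 0 ≤ (n + 1) * g a * S ^ n * g a := by positivity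
            push_cast
            rw [show S ^ (n + 1 + 1) = S ^ n * S * S by ring, show S ^ (n + 1) = S ^ n * S by ring]
            nlinarith
        exact key k
      calc esym P (k + 1) g + g a * esym P k g
          ≤ S ^ (k + 1) / ((k + 1).factorial : ℝ) + g a * (S ^ k / (k.factorial : ℝ)) := by linarith
        _ = (S ^ (k + 1) + (k + 1) * g a * S ^ k) / ((k + 1).factorial : ℝ) := by
            rw [Nat.factorial_succ]; push_cast; field_simp
        _ ≤ _ := by gcongr

theorem trunc_le_pow (P : Finset ℕ) (g : ℕ → ℝ) (hg : ∀ l ∈ P, 0 ≤ g l) (k : ℕ) :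
    trunc P k g ≤ (1 + ∑ l ∈ P, g l) ^ k := by
  induction P using Finset.induction_on generalizing k with
  | empty => simp [trunc_empty]
  | insert a P ha ih =>
    have ih' := ih (fun l hl => hg l (mem_insert_of_mem hl))
    have hga := hg a (mem_insert_self _ _)
    have hS : 0 ≤ ∑ l ∈ P, g l := sum_nonneg fun l hl => hg l (mem_insert_of_mem hl)
    rcases k with _ | k
    · simp [trunc_zero]
    · rw [trunc_insert ha, sum_insert ha]
      set S := ∑ l ∈ P, g l
      have h1 := ih' (k + 1)
      have h2 := mul_le_mul_of_nonneg_left (ih' k) hga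
      have h3 : (1 + S) ^ k ≤ (1 + (g a + S)) ^ k := by gcongr; linarith
      calc _ ≤ (1 + S) ^ (k + 1) + g a * (1 + S) ^ k := by linarith
        _ = (1 + S) ^ k * (1 + (g a + S)) := by ring
        _ ≤ (1 + (g a + S)) ^ k * (1 + (g a + S)) := by gcongr
        _ = _ := by ring

/-- Hooley's lower bound for a product of indicator-like quantities in terms of
upper bounds `U` and one-sided error bounds `E`: the
factors `U i` are replaced by `x i` one at a time. -/
theorem hooley_lower {ι : Type*} [DecidableEq ι] (s : Finset ι) (x U E : ι → ℝ)
    (hx : ∀ i ∈ s, 0 ≤ x i) (hxU : ∀ i ∈ s, x i ≤ U i) (hE : ∀ i ∈ s, U i ≤ x i + E i) :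
    ∏ i ∈ s, U i - ∑ j ∈ s, E j * ∏ i ∈ s.erase j, U i ≤ ∏ i ∈ s, x i := by
  induction s using Finset.induction_on with
  | empty => simp
  | insert a s ha ih =>
    have ih' := ih (fun i hi => hx i (mem_insert_of_mem hi)) (fun i hi => hxU i (mem_insert_of_mem hi))
      (fun i hi => hE i (mem_insert_of_mem hi))
    have ha0 := hx a (mem_insert_self _ _)
    have haU := hxU a (mem_insert_self _ _)
    have haE := hE a (mem_insert_self _ _)
    have h1 : ∏ i ∈ s, x i ≤ ∏ i ∈ s, U i :=
      prod_le_prod (fun i hi => hx i (mem_insert_of_mem hi)) (fun i hi => hxU i (mem_insert_of_mem hi))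
    have h0 : 0 ≤ ∏ i ∈ s, x i := prod_nonneg fun i hi => hx i (mem_insert_of_mem hi)
    rw [prod_insert ha, prod_insert ha, sum_insert ha, erase_insert ha]
    have h2 : ∑ j ∈ s, E j * ∏ i ∈ (insert a s).erase j, U i
        = U a * ∑ j ∈ s, E j * ∏ i ∈ s.erase j, U i := by
      rw [mul_sum]
      refine sum_congr rfl fun j hj => ?_
      have hja : a ≠ j := fun h => ha (h ▸ hj)
      rw [erase_insert_of_ne hja, prod_insert (fun h => ha (mem_of_mem_erase h))]
      ring
    rw [h2]
    have h3 : U a * (∏ i ∈ s, U i - ∑ j ∈ s, E j * ∏ i ∈ s.erase j, U i) ≤ U a * ∏ i ∈ s, x i :=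
      mul_le_mul_of_nonneg_left ih' (ha0.trans haU)
    have h4 : (U a - x a) * ∏ i ∈ s, x i ≤ (U a - x a) * ∏ i ∈ s, U i :=
      mul_le_mul_of_nonneg_left h1 (by linarith)
    have h5 : (U a - x a) * ∏ i ∈ s, U i ≤ E a * ∏ i ∈ s, U i :=
      mul_le_mul_of_nonneg_right (by linarith) (h0.trans h1)
    nlinarith

/-! ### Products of sums over families of subsets of disjoint blocks -/

/-- The sets `d ⊆ ⋃_{i < t} P i` whose trace on each block `P i` belongs to `F i`. -/
def dfam (P : ℕ → Finset ℕ) (F : ℕ → Finset (Finset ℕ)) (t : ℕ) : Finset (Finset ℕ) :=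
  ((range t).biUnion P).powerset.filter fun d => ∀ i ∈ range t, d ∩ P i ∈ F i

/-- Expanding a product over disjoint blocks `P i` of sums over subsets of the blocks: a choice of one
subset for each block is the same as the union `d`, from which the choices are recovered as `d ∩ P i`. -/
theorem prod_sum_eq_sum_dfam {R : Type*} [CommSemiring R] (P : ℕ → Finset ℕ)
    (F : ℕ → Finset (Finset ℕ)) (hP : ∀ i j, i ≠ j → Disjoint (P i) (P j))
    (hF : ∀ i, F i ⊆ (P i).powerset) (c : ℕ → Finset ℕ → R) (t : ℕ) :
    ∏ i ∈ range t, ∑ e ∈ F i, c i e = ∑ d ∈ dfam P F t, ∏ i ∈ range t, c i (d ∩ P i) := by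
  induction t with
  | zero =>
    have : dfam P F 0 = {∅} := by simp [dfam, Finset.filter_singleton]
    rw [this]; simp
  | succ t ih =>
    rw [prod_range_succ, ih, sum_mul_sum, ← sum_product']
    have hd : Disjoint ((range t).biUnion P) (P t) := by
      rw [disjoint_biUnion_left]
      intro i hi
      exact hP i t (mem_range.1 hi).ne
    have hU : (range (t + 1)).biUnion P = (range t).biUnion P ∪ P t := by
      rw [range_add_one, biUnion_insert, union_comm]
    -- traces of a union
    have h1 : ∀ d e, d ⊆ (range t).biUnion P → e ⊆ P t → (d ∪ e) ∩ P t = e := by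
      intro d e hd' he
      rw [union_inter_distrib_right, disjoint_iff_inter_eq_empty.1 (disjoint_of_subset_left hd' hd),
        empty_union, inter_eq_left.2 he]
    have h2 : ∀ d e, e ⊆ P t → ∀ i ∈ range t, (d ∪ e) ∩ P i = d ∩ P i := by
      intro d e he i hi
      rw [union_inter_distrib_right, disjoint_iff_inter_eq_empty.1
        (disjoint_of_subset_left he (hP t i (mem_range.1 hi).ne')), union_empty]
    have h3 : ∀ d, ∀ i ∈ range t, (d ∩ (range t).biUnion P) ∩ P i = d ∩ P i := by
      intro d i hi
      rw [inter_assoc, inter_eq_right.2 (subset_biUnion_of_mem P hi)]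
    refine sum_bij' (fun x _ => x.1 ∪ x.2) (fun d _ => (d ∩ (range t).biUnion P, d ∩ P t)) ?_ ?_ ?_ ?_ ?_
    · rintro ⟨d, e⟩ hde
      simp only [mem_product, dfam, mem_filter, mem_powerset] at hde
      obtain ⟨⟨hd1, hd2⟩, he⟩ := hde
      have he' := mem_powerset.1 (hF t he)
      simp only [dfam, mem_filter, mem_powerset, hU]
      refine ⟨union_subset_union hd1 he', fun i hi => ?_⟩
      rcases Nat.lt_succ_iff_lt_or_eq.1 (mem_range.1 hi) with h | rfl
      · rw [h2 d e he' i (mem_range.2 h)]; exact hd2 i (mem_range.2 h)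
      · rw [h1 d e hd1 he']; exact he
    · intro d hd'
      simp only [dfam, mem_filter, mem_powerset] at hd'
      simp only [mem_product, dfam, mem_filter, mem_powerset]
      refine ⟨⟨inter_subset_right, fun i hi => ?_⟩, hd'.2 t (self_mem_range_succ t)⟩
      rw [h3 d i hi]
      exact hd'.2 i (mem_range.2 ((mem_range.1 hi).trans (Nat.lt_succ_self t)))
    · rintro ⟨d, e⟩ hde
      simp only [mem_product, dfam, mem_filter, mem_powerset] at hde
      obtain ⟨⟨hd1, hd2⟩, he⟩ := hde
      have he' := mem_powerset.1 (hF t he)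
      simp only [Prod.mk.injEq]
      refine ⟨?_, h1 d e hd1 he'⟩
      rw [union_inter_distrib_right, inter_eq_left.2 hd1, inter_comm,
        disjoint_iff_inter_eq_empty.1 (disjoint_of_subset_right he' hd), union_empty]
    · intro d hd'
      simp only [dfam, mem_filter, mem_powerset, hU] at hd'
      simp only
      rw [← inter_union_distrib_left, inter_eq_left.2 hd'.1]
    · rintro ⟨d, e⟩ hde
      simp only [mem_product, dfam, mem_filter, mem_powerset] at hde
      obtain ⟨⟨hd1, hd2⟩, he⟩ := hde
      have he' := mem_powerset.1 (hF t he)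
      simp only
      rw [prod_range_succ, h1 d e hd1 he']
      congr 1
      exact prod_congr rfl fun i hi => by rw [h2 d e he' i hi]

theorem prod_inter_blocks {R : Type*} [CommMonoid R] (P : ℕ → Finset ℕ)
    (hP : ∀ i j, i ≠ j → Disjoint (P i) (P j)) (t : ℕ) (w : ℕ → R) (d : Finset ℕ)
    (hd : d ⊆ (range t).biUnion P) :
    ∏ i ∈ range t, ∏ l ∈ d ∩ P i, w l = ∏ l ∈ d, w l := by
  rw [← prod_biUnion]
  · rw [← inter_biUnion, inter_eq_left.2 hd]
  · intro i _ j _ hij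
    exact disjoint_of_subset_left inter_subset_right (disjoint_of_subset_right inter_subset_right (hP i j hij))

/-! ### Periodic indicators over blocks: counting -/

/-- Mean value, over an interval, of a product of truncated expansions of periodic
`{0,1}`-valued functions, with a periodic weight `q`. -/
theorem abs_sum_prod_expand_sub_le (P : ℕ → Finset ℕ)
    (F : ℕ → Finset (Finset ℕ)) (hP : ∀ i j, i ≠ j → Disjoint (P i) (P j))
    (hF : ∀ i, F i ⊆ (P i).powerset) (hprime : ∀ i, ∀ l ∈ P i, l.Prime)
    (s : ℕ → Finset ℕ → ℝ) (hs : ∀ i e, |s i e| ≤ 1)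
    (f : ℕ → ℕ → ℝ) (hf0 : ∀ l n, 0 ≤ f l n) (hper : ∀ l, Function.Periodic (f l) l)
    (t w : ℕ) (hw : 0 < w) (hwP : ∀ i < t, ∀ l ∈ P i, w.Coprime l)
    (q : ℕ → ℝ) (hq0 : ∀ n, 0 ≤ q n) (hq : Function.Periodic q w) {A B : ℕ} (hAB : A ≤ B) :
    |∑ n ∈ Ioc A B, q n * ∏ i ∈ range t, ∑ e ∈ F i, s i e * ∏ l ∈ e, f l n
      - ((B : ℝ) - A) / w * (∑ n ∈ range w, q n) *
        ∏ i ∈ range t, ∑ e ∈ F i, s i e * ∏ l ∈ e, ((∑ n ∈ range l, f l n) / l)|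
      ≤ (∑ n ∈ range w, q n) * ∏ i ∈ range t, ∑ e ∈ F i, ∏ l ∈ e, ∑ n ∈ range l, f l n := by
  set ρ : ℕ → ℝ := fun l => ∑ n ∈ range l, f l n with hρ
  have hρ0 : ∀ l, 0 ≤ ρ l := fun l => sum_nonneg fun n _ => hf0 l n
  set σ := ∑ n ∈ range w, q n with hσ
  have hσ0 : 0 ≤ σ := sum_nonneg fun n _ => hq0 n
  have e1 : ∀ x : ℕ → ℝ, ∏ i ∈ range t, ∑ e ∈ F i, s i e * ∏ l ∈ e, x l
      = ∑ d ∈ dfam P F t, (∏ i ∈ range t, s i (d ∩ P i)) * ∏ l ∈ d, x l := by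
    intro x
    rw [prod_sum_eq_sum_dfam P F hP hF]
    refine sum_congr rfl fun d hd => ?_
    rw [prod_mul_distrib, prod_inter_blocks P hP t x d (mem_powerset.1 (mem_filter.1 hd).1)]
  have e2 : ∏ i ∈ range t, ∑ e ∈ F i, ∏ l ∈ e, ρ l = ∑ d ∈ dfam P F t, ∏ l ∈ d, ρ l := by
    rw [prod_sum_eq_sum_dfam P F hP hF]
    refine sum_congr rfl fun d hd => ?_
    rw [prod_inter_blocks P hP t ρ d (mem_powerset.1 (mem_filter.1 hd).1)]
  simp only [e1]
  change |_| ≤ σ * ∏ i ∈ range t, ∑ e ∈ F i, ∏ l ∈ e, ρ l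
  rw [e2]
  have e4 : ∀ x : ℕ → Finset ℕ → ℝ, ∑ n ∈ Ioc A B, q n * ∑ d ∈ dfam P F t, x n d
      = ∑ d ∈ dfam P F t, ∑ n ∈ Ioc A B, q n * x n d := by
    intro x
    simp_rw [mul_sum]
    exact sum_comm
  rw [e4, mul_sum (dfam P F t), mul_sum (dfam P F t), ← sum_sub_distrib]
  refine (abs_sum_le_sum_abs _ _).trans (sum_le_sum fun d hd => ?_)
  have hdU := mem_powerset.1 (mem_filter.1 hd).1
  have hdm : ∀ l ∈ d, ∃ i < t, l ∈ P i := by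
    intro l hl
    obtain ⟨i, hi, hli⟩ := mem_biUnion.1 (hdU hl)
    exact ⟨i, mem_range.1 hi, hli⟩
  have hdp : ∀ l ∈ d, l.Prime := fun l hl => by
    obtain ⟨i, _, hli⟩ := hdm l hl; exact hprime i l hli
  have hdw : ∀ l ∈ d, w.Coprime l := fun l hl => by
    obtain ⟨i, hi, hli⟩ := hdm l hl; exact hwP i hi l hli
  set S := ∏ i ∈ range t, s i (d ∩ P i) with hS
  have hS1 : |S| ≤ 1 := by
    rw [hS, abs_prod]
    exact prod_le_one (fun _ _ => abs_nonneg _) fun i _ => hs i _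
  have hW : 0 < w * ∏ l ∈ d, l := Nat.mul_pos hw (prod_pos fun l hl => (hdp l hl).pos)
  have key := abs_sum_Ioc_sub_le (fun n => q n * ∏ l ∈ d, f l n) hW
    (by
      intro a
      have h1 := periodic_of_dvd hq (dvd_mul_right w (∏ l ∈ d, l)) a
      have h2 := periodic_of_dvd (periodic_prod d f fun l _ => hper l)
        (dvd_mul_left (∏ l ∈ d, l) w) a
      simp only at h1 h2 ⊢
      rw [h1, h2])
    (fun a => mul_nonneg (hq0 a) (prod_nonneg fun l _ => hf0 l a)) hAB
  rw [sum_range_prod d hdp w hw hdw q hq f fun l _ => hper l] at key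
  change |_ - _ * (σ * ∏ l ∈ d, ρ l)| ≤ σ * ∏ l ∈ d, ρ l at key
  have e3 : ∑ n ∈ Ioc A B, q n * (S * ∏ l ∈ d, f l n) - ((B : ℝ) - A) / w * σ * (S * ∏ l ∈ d, ρ l / l)
      = S * (∑ n ∈ Ioc A B, q n * ∏ l ∈ d, f l n
        - ((B : ℝ) - A) / (w * ∏ l ∈ d, l : ℕ) * (σ * ∏ l ∈ d, ρ l)) := by
    rw [mul_sub, mul_sum (Ioc A B), prod_div_distrib]
    congr 1
    · exact sum_congr rfl fun n _ => by ring
    · push_cast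
      have : (∏ l ∈ d, (l : ℝ)) ≠ 0 := prod_ne_zero_iff.2 fun l hl => by
        exact_mod_cast (hdp l hl).ne_zero
      have hw' : (w : ℝ) ≠ 0 := by exact_mod_cast hw.ne'
      field_simp
  rw [e3, abs_mul]
  have h0 : 0 ≤ σ * ∏ l ∈ d, ρ l := mul_nonneg hσ0 (prod_nonneg fun l _ => hρ0 l)
  calc _ ≤ 1 * (σ * ∏ l ∈ d, ρ l) := by
        refine mul_le_mul hS1 key (abs_nonneg _) zero_le_one
    _ = _ := one_mul _

/-! ### Chebyshev bounds on doubly exponential blocks of primes -/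

/-- The primes `l` with `2 ^ 2 ^ i ≤ l < 2 ^ 2 ^ (i + 1)`. -/
def Blk (i : ℕ) : Finset ℕ := {l ∈ range (2 ^ 2 ^ (i + 1)) | l.Prime ∧ 2 ^ 2 ^ i ≤ l}

theorem mem_Blk {i l : ℕ} : l ∈ Blk i ↔ l < 2 ^ 2 ^ (i + 1) ∧ l.Prime ∧ 2 ^ 2 ^ i ≤ l := by
  simp [Blk]

theorem Blk_disjoint {i j : ℕ} (h : i ≠ j) : Disjoint (Blk i) (Blk j) := by
  wlog hij : i < j generalizing i j
  · exact (this h.symm (by omega)).symm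
  rw [disjoint_left]
  intro l h1 h2
  rw [mem_Blk] at h1 h2
  have : 2 ^ 2 ^ (i + 1) ≤ 2 ^ 2 ^ j :=
    Nat.pow_le_pow_right (by norm_num) (Nat.pow_le_pow_right (by norm_num) hij)
  omega

theorem exists_Blk {t l : ℕ} (hl : l.Prime) (h : l < 2 ^ 2 ^ t) : ∃ i < t, l ∈ Blk i := by
  induction t with
  | zero => have := hl.two_le; simp at h; omega
  | succ t ih =>
    by_cases h' : l < 2 ^ 2 ^ t
    · obtain ⟨i, hi, hl⟩ := ih h'; exact ⟨i, by omega, hl⟩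
    · exact ⟨t, by omega, mem_Blk.2 ⟨h, hl, by omega⟩⟩

theorem lt_of_mem_Blk {t i l : ℕ} (hi : i < t) (hl : l ∈ Blk i) : l < 2 ^ 2 ^ t :=
  (mem_Blk.1 hl).1.trans_le
    (Nat.pow_le_pow_right (by norm_num) (Nat.pow_le_pow_right (by norm_num) hi))

/-- Follows from the bound `θ(n) ≤ n log 4` of Chebyshev. -/
theorem sum_inv_dyadic_le (j : ℕ) (hj : 1 ≤ j) :
    ∑ l ∈ range (2 ^ (j + 1)) with l.Prime ∧ 2 ^ j ≤ l, (1 : ℝ) / l ≤ 4 / j := by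
  set D := {l ∈ range (2 ^ (j + 1)) | l.Prime ∧ 2 ^ j ≤ l} with hD
  have h2 : Real.log 2 > 0 := Real.log_pos (by norm_num)
  have h1 : (D.card : ℝ) * (j * Real.log 2) ≤ Real.log 4 * 2 ^ (j + 1) := by
    have ht := Chebyshev.theta_le_log4_mul_x (x := (2 : ℝ) ^ (j + 1)) (by positivity)
    refine le_trans ?_ ht
    rw [Chebyshev.theta]
    rw [← nsmul_eq_mul]
    refine le_trans (card_nsmul_le_sum D (fun l => Real.log l) _ ?_) ?_
    · intro l hl
      rw [← Real.log_pow]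
      refine Real.log_le_log (by positivity) ?_
      exact_mod_cast (mem_filter.1 hl).2.2
    · refine sum_le_sum_of_subset_of_nonneg ?_ ?_
      · intro l hl
        simp only [hD, mem_filter, mem_range, mem_Ioc] at hl ⊢
        refine ⟨⟨hl.2.1.pos, ?_⟩, hl.2.1⟩
        refine Nat.le_floor ?_
        exact_mod_cast hl.1.le
      · intro l hl _
        exact Real.log_natCast_nonneg l
  have h4 : Real.log 4 = 2 * Real.log 2 := by
    rw [show (4 : ℝ) = 2 ^ 2 by norm_num, Real.log_pow]; norm_num
  rw [h4] at h1
  have hj0 : (0 : ℝ) < j := by exact_mod_cast hj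
  have h5 : (D.card : ℝ) * j ≤ 4 * 2 ^ j := by
    have : ((D.card : ℝ) * j) * Real.log 2 ≤ (4 * 2 ^ j) * Real.log 2 := by
      rw [pow_succ] at h1; linarith
    exact le_of_mul_le_mul_right this h2
  calc ∑ l ∈ D, (1 : ℝ) / l ≤ ∑ l ∈ D, (1 : ℝ) / 2 ^ j := by
        refine sum_le_sum fun l hl => ?_
        have : 2 ^ j ≤ l := (mem_filter.1 hl).2.2
        have : (2 : ℝ) ^ j ≤ l := by exact_mod_cast this
        gcongr
    _ = D.card / 2 ^ j := by rw [sum_const, nsmul_eq_mul]; ring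
    _ ≤ 4 / j := by
        rw [div_le_div_iff₀ (by positivity) hj0]; exact h5

theorem sum_biUnion_le_of_nonneg {ι α : Type*} [DecidableEq α] (s : Finset ι) (u : ι → Finset α)
    (f : α → ℝ) (hf : ∀ a, 0 ≤ f a) : ∑ a ∈ s.biUnion u, f a ≤ ∑ i ∈ s, ∑ a ∈ u i, f a := by
  classical
  induction s using Finset.induction_on with
  | empty => simp
  | insert i s hi ih =>
    rw [biUnion_insert, sum_insert hi]
    have h := sum_union_inter (s₁ := u i) (s₂ := s.biUnion u) (f := f)
    have h0 : 0 ≤ ∑ a ∈ u i ∩ s.biUnion u, f a := sum_nonneg fun a _ => hf a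
    linarith

/-- The sum of `1 / l` over a doubly exponential block is bounded, being a sum of `O(1 / j)` over
`2 ^ i ≤ j < 2 ^ (i + 1)`. -/
theorem sum_inv_Blk_le (i : ℕ) : ∑ l ∈ Blk i, (1 : ℝ) / l ≤ 4 := by
  have h1 : Blk i ⊆ (Ico (2 ^ i) (2 ^ (i + 1))).biUnion
      (fun j => {l ∈ range (2 ^ (j + 1)) | l.Prime ∧ 2 ^ j ≤ l}) := by
    intro l hl
    rw [mem_Blk] at hl
    have hl0 : l ≠ 0 := hl.2.1.ne_zero
    refine mem_biUnion.2 ⟨Nat.log 2 l, ?_, ?_⟩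
    · rw [mem_Ico]
      exact ⟨Nat.le_log_of_pow_le (by norm_num) hl.2.2, Nat.log_lt_of_lt_pow hl0 hl.1⟩
    · simp only [mem_filter, mem_range]
      exact ⟨Nat.lt_pow_succ_log_self (by norm_num) l, hl.2.1, Nat.pow_log_le_self 2 hl0⟩
  have hpos : ∀ l : ℕ, (0 : ℝ) ≤ 1 / l := fun l => by positivity
  calc ∑ l ∈ Blk i, (1 : ℝ) / l ≤ _ := sum_le_sum_of_subset_of_nonneg h1 fun l _ _ => hpos l
    _ ≤ ∑ j ∈ Ico (2 ^ i) (2 ^ (i + 1)), ∑ l ∈ range (2 ^ (j + 1)) with l.Prime ∧ 2 ^ j ≤ l,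
        (1 : ℝ) / l := by
        exact sum_biUnion_le_of_nonneg _ _ _ hpos
    _ ≤ ∑ j ∈ Ico (2 ^ i) (2 ^ (i + 1)), (4 : ℝ) / 2 ^ i := by
        refine sum_le_sum fun j hj => ?_
        rw [mem_Ico] at hj
        have hj1 : 1 ≤ j := le_trans Nat.one_le_two_pow hj.1
        refine (sum_inv_dyadic_le j hj1).trans ?_
        have : ((2 : ℝ) ^ i) ≤ j := by exact_mod_cast hj.1
        gcongr
    _ = 4 := by
        rw [sum_const, Nat.card_Ico, pow_succ, show 2 ^ i * 2 - 2 ^ i = 2 ^ i by omega, nsmul_eq_mul]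
        push_cast; field_simp

/-! ### The block sieve -/

/-- The number of excluded residues modulo `l`, for an excluded-class indicator `f l`. -/
noncomputable def rho (f : ℕ → ℕ → ℝ) (l : ℕ) : ℝ := ∑ n ∈ range l, f l n

/-- A sieve problem: primes `P i` in the `i`-th doubly exponential block, and for each prime `l`
the `l`-periodic indicator function `f l` of at most `κ` excluded classes. They make up
at most half of all classes. -/
structure IsSieve (κ : ℕ) (P : ℕ → Finset ℕ) (f : ℕ → ℕ → ℝ) : Prop where
  one_le : 1 ≤ κ
  sub : ∀ i, P i ⊆ Blk i
  zo : ∀ l n, f l n = 0 ∨ f l n = 1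
  per : ∀ l, Function.Periodic (f l) l
  le : ∀ i, ∀ l ∈ P i, rho f l ≤ κ
  half : ∀ i, ∀ l ∈ P i, 2 * rho f l ≤ l

/-- The density factor of the `i`-th block. -/
noncomputable def Vb (P : ℕ → Finset ℕ) (f : ℕ → ℕ → ℝ) (i : ℕ) : ℝ :=
  ∏ l ∈ P i, (1 - rho f l / l)

/-- The expected density of the sifted set. -/
noncomputable def VV (P : ℕ → Finset ℕ) (f : ℕ → ℕ → ℝ) (t : ℕ) : ℝ := ∏ i ∈ range t, Vb P f i

/-- Half the truncation level on the `i`-th block; smaller primes get a larger level. -/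
def bI (b t i : ℕ) : ℕ := b + (t - 1 - i)

/-- The relative error made on the `i`-th block. -/
noncomputable def aI (κ b t i : ℕ) : ℝ := Real.exp (40 * κ) * (1 / 8) ^ (2 * bI b t i + 1)

/-- The relative error of the block sieve. -/
noncomputable def eps (κ b : ℕ) : ℝ := Real.exp (40 * κ) * (1 / 64) ^ b

/-- The exponent of the sifting level in the error term of the block sieve. -/
def Cx (κ b : ℕ) : ℕ := (κ + 1) * (4 * b + 6)

theorem eps_pos (κ b : ℕ) : 0 < eps κ b := by unfold eps; positivity

theorem aI_pos (κ b t i : ℕ) : 0 < aI κ b t i := by unfold aI; positivity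

theorem sum_aI_le (κ b t : ℕ) : ∑ i ∈ range t, aI κ b t i ≤ eps κ b / 6 := by
  have h1 : ∀ i, aI κ b t i = eps κ b / 8 * (1 / 64) ^ (t - 1 - i) := by
    intro i
    have h64 : (1 / 8 : ℝ) ^ 2 = 1 / 64 := by norm_num
    rw [aI, eps, bI, pow_succ, pow_mul, h64, pow_add]; ring
  rw [sum_congr rfl fun i _ => h1 i, ← mul_sum, sum_range_reflect (fun i => (1 / 64 : ℝ) ^ i)]
  have h2 : ∑ i ∈ range t, (1 / 64 : ℝ) ^ i ≤ 64 / 63 := by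
    rw [geom_sum_eq (by norm_num)]
    have : (0 : ℝ) ≤ (1 / 64) ^ t := by positivity
    rw [div_le_iff_of_neg (by norm_num)]
    linarith
  have h3 := mul_le_mul_of_nonneg_left h2 (by have := (eps_pos κ b).le; positivity : 0 ≤ eps κ b / 8)
  have := eps_pos κ b
  linarith

theorem prod_one_add_aI_le (κ b t : ℕ) (s : Finset ℕ) (hs : s ⊆ range t) (he : eps κ b ≤ 1) :
    ∏ i ∈ s, (1 + aI κ b t i) ≤ 1 + eps κ b / 3 := by
  have h0 := eps_pos κ b
  have h1 : ∑ i ∈ s, aI κ b t i ≤ eps κ b / 6 :=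
    (sum_le_sum_of_subset_of_nonneg hs fun i _ _ => (aI_pos κ b t i).le).trans (sum_aI_le κ b t)
  calc ∏ i ∈ s, (1 + aI κ b t i) ≤ ∏ i ∈ s, Real.exp (aI κ b t i) :=
        prod_le_prod (fun i _ => by have := aI_pos κ b t i; positivity)
          fun i _ => by linarith [Real.add_one_le_exp (aI κ b t i)]
    _ = Real.exp (∑ i ∈ s, aI κ b t i) := (Real.exp_sum _ _).symm
    _ ≤ Real.exp (eps κ b / 6) := Real.exp_le_exp.2 h1
    _ ≤ 1 + eps κ b / 3 := by
        have h2 := Real.abs_exp_sub_one_le (x := eps κ b / 6) (by rw [abs_of_pos (by positivity)]; linarith)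
        rw [abs_of_pos (a := eps κ b / 6) (by positivity)] at h2
        have := (abs_le.1 h2).2
        linarith

theorem exp_neg_le_one_sub {x : ℝ} (h0 : 0 ≤ x) (h1 : x ≤ 1 / 2) : Real.exp (-(2 * x)) ≤ 1 - x := by
  rw [Real.exp_neg, inv_le_comm₀ (Real.exp_pos _) (by linarith)]
  have h2 : 0 < 1 - x := by linarith
  have h3 := Real.add_one_le_exp (2 * x)
  refine le_trans ?_ h3
  rw [inv_le_iff_one_le_mul₀ h2]
  nlinarith

namespace IsSieve

variable {κ : ℕ} {P : ℕ → Finset ℕ} {f : ℕ → ℕ → ℝ} (h : IsSieve κ P f)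

include h

theorem prime {i l : ℕ} (hl : l ∈ P i) : l.Prime := (mem_Blk.1 (h.sub i hl)).2.1

theorem nonneg (l n : ℕ) : 0 ≤ f l n := by rcases h.zo l n with h | h <;> simp [h]

theorem le_one (l n : ℕ) : f l n ≤ 1 := by rcases h.zo l n with h | h <;> simp [h]

theorem rho_nonneg (l : ℕ) : 0 ≤ rho f l := sum_nonneg fun n _ => h.nonneg l n

theorem ratio {i l : ℕ} (hl : l ∈ P i) : 0 ≤ rho f l / l ∧ rho f l / l ≤ 1 / 2 := by
  have h0 : (0 : ℝ) < l := by exact_mod_cast (h.prime hl).pos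
  refine ⟨div_nonneg (h.rho_nonneg l) h0.le, ?_⟩
  rw [div_le_iff₀ h0]
  linarith [h.half i l hl]

theorem ratio' {i l : ℕ} (hl : l ∈ P i) : 0 ≤ rho f l / l ∧ rho f l / l ≤ 1 :=
  ⟨(h.ratio hl).1, (h.ratio hl).2.trans (by norm_num)⟩

theorem sum_ratio_le (i : ℕ) : ∑ l ∈ P i, rho f l / l ≤ 4 * κ := by
  calc ∑ l ∈ P i, rho f l / l ≤ ∑ l ∈ P i, κ * ((1 : ℝ) / l) := by
        refine sum_le_sum fun l hl => ?_
        have := h.le i l hl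
        rw [mul_one_div]; gcongr
    _ ≤ ∑ l ∈ Blk i, κ * ((1 : ℝ) / l) :=
        sum_le_sum_of_subset_of_nonneg (h.sub i) fun l _ _ => by positivity
    _ = κ * ∑ l ∈ Blk i, (1 : ℝ) / l := (mul_sum _ _ _).symm
    _ ≤ κ * 4 := mul_le_mul_of_nonneg_left (sum_inv_Blk_le i) (by positivity)
    _ = 4 * κ := by ring

/-- The density factor of a block is bounded below, since `1 - x ≥ exp (-2 x)` for `x ≤ 1 / 2`. -/
theorem Vb_ge (i : ℕ) : Real.exp (-(8 * κ)) ≤ Vb P f i := by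
  calc Real.exp (-(8 * κ)) ≤ Real.exp (∑ l ∈ P i, -(2 * (rho f l / l))) := by
        refine Real.exp_le_exp.2 ?_
        rw [sum_neg_distrib, ← mul_sum]
        linarith [h.sum_ratio_le i]
    _ = ∏ l ∈ P i, Real.exp (-(2 * (rho f l / l))) := Real.exp_sum _ _
    _ ≤ _ := prod_le_prod (fun _ _ => (Real.exp_pos _).le)
        fun l hl => exp_neg_le_one_sub (h.ratio hl).1 (h.ratio hl).2

theorem Vb_pos (i : ℕ) : 0 < Vb P f i := (Real.exp_pos _).trans_le (h.Vb_ge i)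

theorem VV_pos (t : ℕ) : 0 < VV P f t := prod_pos fun i _ => h.Vb_pos i

/-- The truncation error of a block decays geometrically in the truncation level, because the sum of
the densities over the block is at most `4 * κ`. -/
theorem esym_le_aI (b t i : ℕ) :
    esym (P i) (2 * bI b t i + 1) (fun l => rho f l / l) ≤ aI κ b t i * Vb P f i := by
  set n := 2 * bI b t i + 1 with hn
  have h1 := esym_le (P i) (fun l => rho f l / l) (fun l hl => (h.ratio hl).1) n
  have hS0 : 0 ≤ ∑ l ∈ P i, rho f l / l := sum_nonneg fun l hl => (h.ratio hl).1
  have h2 : (∑ l ∈ P i, rho f l / l) ^ n / (n.factorial : ℝ) ≤ (4 * κ : ℝ) ^ n / n.factorial := by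
    gcongr; exact h.sum_ratio_le i
  have h3 : (4 * κ : ℝ) ^ n / n.factorial = (1 / 8) ^ n * ((32 * κ) ^ n / n.factorial) := by
    rw [show (32 * κ : ℝ) = 8 * (4 * κ) by ring, mul_pow 8]
    have : (1 / 8 : ℝ) ^ n * 8 ^ n = 1 := by rw [← mul_pow]; norm_num
    rw [← mul_div_assoc, ← mul_assoc, this, one_mul]
  have h4 : (32 * κ : ℝ) ^ n / n.factorial ≤ Real.exp (32 * κ) :=
    Real.pow_div_factorial_le_exp _ (by positivity) n
  have h5 := h.Vb_ge i
  calc _ ≤ (1 / 8 : ℝ) ^ n * Real.exp (32 * κ) := by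
        refine h1.trans (h2.trans (h3.le.trans ?_)); gcongr
    _ = Real.exp (40 * κ) * (1 / 8) ^ n * Real.exp (-(8 * κ)) := by
        rw [mul_right_comm, ← Real.exp_add]; ring_nf
    _ ≤ _ := by rw [aI]; gcongr

theorem Vb_le_trunc (i c : ℕ) : Vb P f i ≤ trunc (P i) (2 * c) (fun l => -(rho f l / l)) :=
  (bonferroni (P i) _ (fun _ hl => h.ratio' hl) c).2

theorem trunc_le_Vb (b t i : ℕ) :
    trunc (P i) (2 * bI b t i) (fun l => -(rho f l / l)) ≤ (1 + aI κ b t i) * Vb P f i := by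
  have h1 := trunc_le_add_esym (P i) (fun l => rho f l / l) (fun l hl => h.ratio' hl) (bI b t i)
  have h2 := h.esym_le_aI b t i
  rw [one_add_mul]
  exact h1.trans (add_le_add le_rfl h2)

theorem one_add_sum_rho_le (i : ℕ) :
    1 + ∑ l ∈ P i, rho f l ≤ ((2 : ℝ) ^ 2 ^ (i + 1)) ^ (κ + 1) := by
  set z : ℕ := 2 ^ 2 ^ (i + 1) with hz
  have hz4 : 2 ≤ z := Nat.le_self_pow (n := 2 ^ (i + 1)) (by positivity) 2
  have hc : (P i).card ≤ z - 2 := by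
    have : P i ⊆ Ico 2 z := fun l hl => by
      have := mem_Blk.1 (h.sub i hl)
      exact mem_Ico.2 ⟨this.2.1.two_le, this.1⟩
    simpa using card_le_card this
  have h1 : ∑ l ∈ P i, rho f l ≤ (P i).card * κ := by
    rw [← nsmul_eq_mul]; exact sum_le_card_nsmul _ _ _ (h.le i)
  have hκ : (1 : ℝ) ≤ κ := by exact_mod_cast h.one_le
  have hc' : ((P i).card : ℝ) + 1 ≤ z := by exact_mod_cast (by omega : (P i).card + 1 ≤ z)
  have hk2 : (κ : ℝ) ≤ (z : ℝ) ^ κ := by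
    have h1 : κ < 2 ^ κ := Nat.lt_two_pow_self
    have h2 : 2 ^ κ ≤ z ^ κ := Nat.pow_le_pow_left hz4 κ
    exact_mod_cast h1.le.trans h2
  calc 1 + ∑ l ∈ P i, rho f l ≤ ((P i).card + 1) * κ := by linarith
    _ ≤ z * (z : ℝ) ^ κ := by gcongr
    _ = _ := by rw [hz]; push_cast; ring

end IsSieve

theorem sum_bI (b t : ℕ) : ∑ i ∈ range t, 2 ^ (i + 1) * (2 * bI b t i + 1) ≤ 2 ^ t * (4 * b + 6) := by
  induction t generalizing b with
  | zero => simp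
  | succ t ih =>
    rw [sum_range_succ]
    have h1 : ∑ i ∈ range t, 2 ^ (i + 1) * (2 * bI b (t + 1) i + 1)
        = ∑ i ∈ range t, 2 ^ (i + 1) * (2 * bI (b + 1) t i + 1) := by
      refine sum_congr rfl fun i hi => ?_
      have := mem_range.1 hi
      simp only [bI]
      rw [show b + (t + 1 - 1 - i) = b + 1 + (t - 1 - i) by omega]
    rw [h1, show bI b (t + 1) t = b by simp [bI]]
    have := ih (b + 1)
    rw [pow_succ]
    nlinarith

namespace IsSieve

variable {κ : ℕ} {P : ℕ → Finset ℕ} {f : ℕ → ℕ → ℝ} (h : IsSieve κ P f)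

include h

/-- The number of terms of the expansion, weighted by the number of excluded classes, is at most a
fixed power of the sifting level: the truncation level of the `i`-th block grows linearly in `t - i`
while the logarithms of its primes decay like `2 ^ (i - t)`. -/
theorem prod_pow_le (b t : ℕ) : ∏ i ∈ range t, (1 + ∑ l ∈ P i, rho f l) ^ (2 * bI b t i + 1)
    ≤ ((2 : ℝ) ^ 2 ^ t) ^ Cx κ b := by
  have hS : ∀ i, 0 ≤ ∑ l ∈ P i, rho f l := fun i => sum_nonneg fun l _ => h.rho_nonneg l
  calc _ ≤ ∏ i ∈ range t, (2 : ℝ) ^ ((κ + 1) * (2 ^ (i + 1) * (2 * bI b t i + 1))) := by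
        refine prod_le_prod (fun i _ => by have := hS i; positivity) fun i _ => ?_
        refine (pow_le_pow_left₀ (by have := hS i; positivity) (h.one_add_sum_rho_le i) _).trans (le_of_eq ?_)
        rw [← pow_mul, ← pow_mul]; ring_nf
    _ = (2 : ℝ) ^ ((κ + 1) * ∑ i ∈ range t, (2 ^ (i + 1) * (2 * bI b t i + 1))) := by
        rw [prod_pow_eq_pow_sum, mul_sum]
    _ ≤ (2 : ℝ) ^ ((κ + 1) * (2 ^ t * (4 * b + 6))) := by
        refine pow_le_pow_right₀ (by norm_num) ?_
        exact Nat.mul_le_mul_left _ (sum_bI b t)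
    _ = _ := by rw [← pow_mul, Cx]; ring_nf

theorem disj {i j : ℕ} (hij : i ≠ j) : Disjoint (P i) (P j) :=
  disjoint_of_subset_left (h.sub i) (disjoint_of_subset_right (h.sub j) (Blk_disjoint hij))

/-- The error term of `abs_sum_prod_expand_sub_le` for families of sets with at most
`2 * bI b t i + 1` elements. -/
theorem abs_sum_expand_le (b t : ℕ) (F : ℕ → Finset (Finset ℕ))
    (hF : ∀ i, F i ⊆ {e ∈ (P i).powerset | e.card ≤ 2 * bI b t i + 1})
    (s : ℕ → Finset ℕ → ℝ) (hs : ∀ i e, |s i e| ≤ 1)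
    (w : ℕ) (hw : 0 < w) (hwP : ∀ i < t, ∀ l ∈ P i, w.Coprime l)
    (q : ℕ → ℝ) (hq0 : ∀ n, 0 ≤ q n) (hq : Function.Periodic q w) {A B : ℕ} (hAB : A ≤ B) :
    |∑ n ∈ Ioc A B, q n * ∏ i ∈ range t, ∑ e ∈ F i, s i e * ∏ l ∈ e, f l n
      - ((B : ℝ) - A) / w * (∑ n ∈ range w, q n) *
        ∏ i ∈ range t, ∑ e ∈ F i, s i e * ∏ l ∈ e, (rho f l / l)|
      ≤ (∑ n ∈ range w, q n) * ((2 : ℝ) ^ 2 ^ t) ^ Cx κ b := by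
  have h1 := abs_sum_prod_expand_sub_le P F (fun i j => h.disj)
    (fun i e he => (mem_filter.1 (hF i he)).1) (fun i l hl => h.prime hl) s hs f h.nonneg h.per t w hw hwP
    q hq0 hq hAB
  refine h1.trans (mul_le_mul_of_nonneg_left ?_ (sum_nonneg fun n _ => hq0 n))
  refine le_trans (prod_le_prod (fun i _ => sum_nonneg fun e _ => prod_nonneg fun l _ => h.rho_nonneg l)
    fun i _ => ?_) (h.prod_pow_le b t)
  exact (sum_le_sum_of_subset_of_nonneg (hF i) fun e _ _ => prod_nonneg fun l _ => h.rho_nonneg l).trans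
    (trunc_le_pow (P i) (rho f) (fun l _ => h.rho_nonneg l) _)

omit h in
theorem _root_.APS.trunc_neg_eq (Q : Finset ℕ) (k : ℕ) (x : ℕ → ℝ) :
    trunc Q k (fun l => - x l) = ∑ e ∈ Q.powerset with e.card ≤ k, (-1) ^ e.card * ∏ l ∈ e, x l := by
  unfold trunc
  exact sum_congr rfl fun e _ => by rw [prod_neg]

theorem trunc_nonneg (c i n : ℕ) : 0 ≤ trunc (P i) (2 * c) (fun l => - f l n) :=
  (prod_nonneg fun l _ => by linarith [h.le_one l n]).trans
    (bonferroni (P i) (fun l => f l n) (fun l _ => ⟨h.nonneg l n, h.le_one l n⟩) c).2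

theorem prod_le_trunc (c i n : ℕ) : ∏ l ∈ P i, (1 - f l n) ≤ trunc (P i) (2 * c) (fun l => - f l n) :=
  (bonferroni (P i) (fun l => f l n) (fun l _ => ⟨h.nonneg l n, h.le_one l n⟩) c).2

theorem prod_block_nonneg (i n : ℕ) : 0 ≤ ∏ l ∈ P i, (1 - f l n) :=
  prod_nonneg fun l _ => by linarith [h.le_one l n]

theorem main_prod_le (b t : ℕ) (he : eps κ b ≤ 1) (s : Finset ℕ) (hs : s ⊆ range t) :
    ∏ i ∈ s, trunc (P i) (2 * bI b t i) (fun l => -(rho f l / l)) ≤ (1 + eps κ b / 3) * ∏ i ∈ s, Vb P f i := by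
  calc _ ≤ ∏ i ∈ s, ((1 + aI κ b t i) * Vb P f i) :=
        prod_le_prod (fun i _ => (h.Vb_pos i).le.trans (h.Vb_le_trunc i _)) fun i _ => h.trunc_le_Vb b t i
    _ = (∏ i ∈ s, (1 + aI κ b t i)) * ∏ i ∈ s, Vb P f i := prod_mul_distrib
    _ ≤ _ := mul_le_mul_of_nonneg_right (prod_one_add_aI_le κ b t s hs he)
        (prod_nonneg fun i _ => (h.Vb_pos i).le)

/-- Upper bound for the mean value of the block sieve majorant. -/
theorem upper_trunc (b t : ℕ) (he : eps κ b ≤ 1)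
    (w : ℕ) (hw : 0 < w) (hwP : ∀ i < t, ∀ l ∈ P i, w.Coprime l)
    (q : ℕ → ℝ) (hq0 : ∀ n, 0 ≤ q n) (hq : Function.Periodic q w) {A B : ℕ} (hAB : A ≤ B) :
    ∑ n ∈ Ioc A B, q n * ∏ i ∈ range t, trunc (P i) (2 * bI b t i) (fun l => - f l n)
      ≤ ((B : ℝ) - A) / w * (∑ n ∈ range w, q n) * ((1 + eps κ b) * VV P f t)
        + (∑ n ∈ range w, q n) * ((2 : ℝ) ^ 2 ^ t) ^ Cx κ b := by
  have h1 := h.abs_sum_expand_le b t (fun i => {e ∈ (P i).powerset | e.card ≤ 2 * bI b t i})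
    (fun i e he => by
      simp only [mem_filter] at he ⊢
      exact ⟨he.1, by omega⟩) (fun i e => (-1) ^ e.card) (fun i e => by simp [abs_pow]) w hw hwP q hq0 hq hAB
  simp only [← trunc_neg_eq] at h1
  have h2 := h.main_prod_le b t he (range t) subset_rfl
  have h3 := (abs_le.1 h1).2
  have hσ : 0 ≤ ∑ n ∈ range w, q n := sum_nonneg fun n _ => hq0 n
  have hBA : (0 : ℝ) ≤ (B : ℝ) - A := by
    have : (A : ℝ) ≤ B := by exact_mod_cast hAB
    linarith
  have h4 : ((B : ℝ) - A) / w * (∑ n ∈ range w, q n) *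
      ∏ i ∈ range t, trunc (P i) (2 * bI b t i) (fun l => -(rho f l / l))
      ≤ ((B : ℝ) - A) / w * (∑ n ∈ range w, q n) * ((1 + eps κ b) * VV P f t) := by
    refine mul_le_mul_of_nonneg_left (h2.trans ?_) (by positivity)
    refine mul_le_mul_of_nonneg_right ?_ (h.VV_pos t).le
    linarith [eps_pos κ b]
  linarith

theorem upper (b t : ℕ) (he : eps κ b ≤ 1)
    (w : ℕ) (hw : 0 < w) (hwP : ∀ i < t, ∀ l ∈ P i, w.Coprime l)
    (q : ℕ → ℝ) (hq0 : ∀ n, 0 ≤ q n) (hq : Function.Periodic q w) {A B : ℕ} (hAB : A ≤ B) :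
    ∑ n ∈ Ioc A B, q n * ∏ i ∈ range t, ∏ l ∈ P i, (1 - f l n)
      ≤ ((B : ℝ) - A) / w * (∑ n ∈ range w, q n) * ((1 + eps κ b) * VV P f t)
        + (∑ n ∈ range w, q n) * ((2 : ℝ) ^ 2 ^ t) ^ Cx κ b := by
  refine le_trans (sum_le_sum fun n _ => mul_le_mul_of_nonneg_left ?_ (hq0 n))
    (h.upper_trunc b t he w hw hwP q hq0 hq hAB)
  exact prod_le_prod (fun i _ => h.prod_block_nonneg i n) fun i _ => h.prod_le_trunc _ i n

theorem upper_one (b t : ℕ) (he : eps κ b ≤ 1) {A B : ℕ} (hAB : A ≤ B) :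
    ∑ n ∈ Ioc A B, ∏ i ∈ range t, ∏ l ∈ P i, (1 - f l n)
      ≤ ((B : ℝ) - A) * ((1 + eps κ b) * VV P f t) + ((2 : ℝ) ^ 2 ^ t) ^ Cx κ b := by
  simpa using h.upper b t he 1 one_pos (fun i _ l _ => Nat.coprime_one_left l) (fun _ => 1)
    (fun _ => zero_le_one) (fun _ => rfl) hAB

/-- Lower bound of the block sieve. -/
theorem lower (b t : ℕ) (he : eps κ b ≤ 1) {A B : ℕ} (hAB : A ≤ B) :
    ((B : ℝ) - A) * ((1 - eps κ b) * VV P f t) - ((2 : ℝ) ^ 2 ^ t) ^ (Cx κ b + 1)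
      ≤ ∑ n ∈ Ioc A B, ∏ i ∈ range t, ∏ l ∈ P i, (1 - f l n) := by
  have hBA : (0 : ℝ) ≤ (B : ℝ) - A := by
    have : (A : ℝ) ≤ B := by exact_mod_cast hAB
    linarith
  set Z := ((2 : ℝ) ^ 2 ^ t) ^ Cx κ b with hZ
  have hZ0 : 0 ≤ Z := by positivity
  -- the main term
  have h1 := h.abs_sum_expand_le b t (fun i => {e ∈ (P i).powerset | e.card ≤ 2 * bI b t i})
    (fun i e he => by
      simp only [mem_filter] at he ⊢
      exact ⟨he.1, by omega⟩) (fun i e => (-1) ^ e.card) (fun i e => by simp [abs_pow]) 1 one_pos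
      (fun i _ l _ => Nat.coprime_one_left l) (fun _ => 1) (fun _ => zero_le_one) (fun _ => rfl) hAB
  simp only [← trunc_neg_eq] at h1
  simp only [one_mul, Nat.cast_one, div_one, range_one, sum_singleton, mul_one] at h1
  -- the correction terms
  have h2 : ∀ j ∈ range t, ∑ n ∈ Ioc A B, (esym (P j) (2 * bI b t j + 1) (fun l => f l n) *
      ∏ i ∈ (range t).erase j, trunc (P i) (2 * bI b t i) (fun l => - f l n))
      ≤ ((B : ℝ) - A) * (esym (P j) (2 * bI b t j + 1) (fun l => rho f l / l) *
      ∏ i ∈ (range t).erase j, trunc (P i) (2 * bI b t i) (fun l => -(rho f l / l))) + Z := by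
    intro j hj
    have h3 := h.abs_sum_expand_le b t
      (fun i => if i = j then (P i).powersetCard (2 * bI b t i + 1) else
        {e ∈ (P i).powerset | e.card ≤ 2 * bI b t i})
      (fun i e he => by
        split_ifs at he
        · rw [mem_powersetCard] at he
          simp only [mem_filter, mem_powerset]
          exact ⟨he.1, he.2.le⟩
        · simp only [mem_filter] at he ⊢
          exact ⟨he.1, by omega⟩) (fun i e => if i = j then 1 else (-1) ^ e.card)
      (fun i e => by split_ifs <;> simp [abs_pow]) 1 one_pos
      (fun i _ l _ => Nat.coprime_one_left l) (fun _ => 1) (fun _ => zero_le_one) (fun _ => rfl) hAB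
    simp only [one_mul, Nat.cast_one, div_one, range_one, sum_singleton, mul_one] at h3
    have h4 : ∀ x : ℕ → ℝ, ∏ i ∈ range t, ∑ e ∈ (if i = j then (P i).powersetCard (2 * bI b t i + 1) else
        {e ∈ (P i).powerset | e.card ≤ 2 * bI b t i}), (if i = j then 1 else (-1) ^ e.card) * ∏ l ∈ e, x l
        = esym (P j) (2 * bI b t j + 1) x *
          ∏ i ∈ (range t).erase j, trunc (P i) (2 * bI b t i) (fun l => - x l) := by
      intro x
      rw [← mul_prod_erase _ _ hj]
      congr 1
      · simp [esym]
      · refine prod_congr rfl fun i hi => ?_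
        rw [trunc_neg_eq]
        simp [(mem_erase.1 hi).1]
    rw [sum_congr rfl (fun n _ => h4 (fun l => f l n)), h4 (fun l => rho f l / l)] at h3
    linarith [(abs_le.1 h3).2]
  have h5 : ∀ n, ∏ i ∈ range t, trunc (P i) (2 * bI b t i) (fun l => - f l n)
      - ∑ j ∈ range t, esym (P j) (2 * bI b t j + 1) (fun l => f l n) *
      ∏ i ∈ (range t).erase j, trunc (P i) (2 * bI b t i) (fun l => - f l n)
      ≤ ∏ i ∈ range t, ∏ l ∈ P i, (1 - f l n) := fun n =>
    hooley_lower (range t) _ _ _ (fun i _ => h.prod_block_nonneg i n) (fun i _ => h.prod_le_trunc _ i n)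
      fun i _ => trunc_le_add_esym (P i) (fun l => f l n) (fun l _ => ⟨h.nonneg l n, h.le_one l n⟩) _
  have h6 := sum_le_sum fun n (_ : n ∈ Ioc A B) => h5 n
  rw [sum_sub_distrib, sum_comm] at h6
  have h7 := sum_le_sum h2
  rw [sum_add_distrib, ← mul_sum, sum_const, card_range, nsmul_eq_mul] at h7
  -- the main terms compared to `VV`
  have h8 : VV P f t ≤ ∏ i ∈ range t, trunc (P i) (2 * bI b t i) (fun l => -(rho f l / l)) :=
    prod_le_prod (fun i _ => (h.Vb_pos i).le) fun i _ => h.Vb_le_trunc i _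
  have h9 : ∑ j ∈ range t, esym (P j) (2 * bI b t j + 1) (fun l => rho f l / l) *
      ∏ i ∈ (range t).erase j, trunc (P i) (2 * bI b t i) (fun l => -(rho f l / l)) ≤ eps κ b * VV P f t := by
    calc _ ≤ ∑ j ∈ range t, aI κ b t j * (2 * VV P f t) := by
          refine sum_le_sum fun j hj => ?_
          have e1 := h.main_prod_le b t he ((range t).erase j) (erase_subset _ _)
          have e2 := h.esym_le_aI b t j
          have e3 : 0 ≤ ∏ i ∈ (range t).erase j, Vb P f i := prod_nonneg fun i _ => (h.Vb_pos i).le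
          have e4 : 0 ≤ ∏ i ∈ (range t).erase j, trunc (P i) (2 * bI b t i) (fun l => -(rho f l / l)) :=
            prod_nonneg fun i _ => (h.Vb_pos i).le.trans (h.Vb_le_trunc i _)
          have e5 := (aI_pos κ b t j).le
          have e6 := (h.Vb_pos j).le
          calc _ ≤ aI κ b t j * Vb P f j * ((1 + eps κ b / 3) * ∏ i ∈ (range t).erase j, Vb P f i) :=
                mul_le_mul e2 e1 e4 (mul_nonneg e5 e6)
            _ = aI κ b t j * ((1 + eps κ b / 3) * VV P f t) := by
                rw [VV, ← mul_prod_erase _ _ hj]; ring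
            _ ≤ _ := by
                refine mul_le_mul_of_nonneg_left (mul_le_mul_of_nonneg_right ?_ (h.VV_pos t).le) e5
                linarith
      _ = (∑ j ∈ range t, aI κ b t j) * (2 * VV P f t) := (sum_mul _ _ _).symm
      _ ≤ eps κ b / 6 * (2 * VV P f t) :=
          mul_le_mul_of_nonneg_right (sum_aI_le κ b t) (by have := (h.VV_pos t).le; positivity)
      _ ≤ _ := by nlinarith [h.VV_pos t, eps_pos κ b]
  have h10 := mul_le_mul_of_nonneg_left h8 hBA
  have h11 := mul_le_mul_of_nonneg_left h9 hBA
  have h12 := (abs_le.1 h1).1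
  have h13 : (t : ℝ) * Z + Z ≤ ((2 : ℝ) ^ 2 ^ t) ^ (Cx κ b + 1) := by
    have e1 : t + 1 ≤ 2 ^ 2 ^ t :=
      (Nat.lt_two_pow_self (n := t)).trans_le (Nat.lt_two_pow_self (n := 2 ^ t)).le
    have e2 : (t : ℝ) + 1 ≤ 2 ^ 2 ^ t := by exact_mod_cast e1
    rw [pow_succ, ← hZ]
    nlinarith
  linarith

end IsSieve

/-! ### Primes in dyadic intervals and the Mertens product -/

theorem log_centralBinom_le (n : ℕ) (hn : 4 ≤ n) :
    Real.log (n.centralBinom) ≤ (Nat.sqrt (2 * n)) * Real.log (2 * n) + Real.log 4 * (2 * n / 3) +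
      (Chebyshev.theta (2 * n) - Chebyshev.theta n) := by
  set F : ℕ → ℕ := fun p => n.centralBinom.factorization p with hF
  have h2n : (0 : ℝ) ≤ Real.log (2 * n) := Real.log_nonneg (by
    have : (4 : ℝ) ≤ n := by exact_mod_cast hn
    linarith)
  have h1 : Real.log n.centralBinom = ∑ p ∈ range (2 * n + 1), F p * Real.log p := by
    conv_lhs => rw [← Nat.prod_pow_factorization_centralBinom n]
    rw [Nat.cast_prod, Real.log_prod]
    · exact sum_congr rfl fun p _ => by rw [Nat.cast_pow, Real.log_pow]
    · intro p _
      by_cases hp : p.Prime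
      · exact_mod_cast pow_ne_zero _ hp.ne_zero
      · rw [Nat.factorization_eq_zero_of_not_prime _ hp]; simp
  have hθ : ∀ m : ℕ, Chebyshev.theta m = ∑ p ∈ Ioc 0 m with p.Prime, Real.log p := by
    intro m; rw [Chebyshev.theta, Nat.floor_natCast]
  have hθ2 : Chebyshev.theta (2 * n) = ∑ p ∈ Ioc 0 (2 * n) with p.Prime, Real.log p := by
    rw [← hθ]; push_cast; rfl
  have h23 : Chebyshev.theta ((2 * n / 3 : ℕ) : ℝ) ≤ Real.log 4 * (2 * n / 3) := by
    refine (Chebyshev.theta_le_log4_mul_x (by positivity)).trans ?_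
    refine mul_le_mul_of_nonneg_left ?_ (Real.log_nonneg (by norm_num))
    have := @Nat.cast_div_le ℝ _ _ _ (2 * n) 3
    push_cast at this; exact this
  have hsplit : Chebyshev.theta (2 * n) - Chebyshev.theta n
      = ∑ p ∈ Ioc n (2 * n) with p.Prime, Real.log p := by
    rw [hθ2, hθ, sub_eq_iff_eq_add, sum_filter, sum_filter, sum_filter, add_comm,
      sum_Ioc_consecutive _ (by omega) (by omega)]
  rw [hsplit]
  have hle : ∑ p ∈ range (2 * n + 1), F p * Real.log p ≤
      ∑ p ∈ Ioc 0 (Nat.sqrt (2 * n)), Real.log (2 * n)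
       + ∑ p ∈ Ioc 0 (2 * n / 3) with p.Prime, Real.log p
       + ∑ p ∈ Ioc n (2 * n) with p.Prime, Real.log p := by
    have hsub : ∀ p ∈ range (2 * n + 1), F p * Real.log p ≤
        (if p ∈ Ioc 0 (Nat.sqrt (2 * n)) then Real.log (2 * n) else 0)
        + (if p ∈ (Ioc 0 (2 * n / 3)).filter Nat.Prime then Real.log p else 0)
        + (if p ∈ (Ioc n (2 * n)).filter Nat.Prime then Real.log p else 0) := by
      intro p hp
      have hp' := Nat.lt_succ_iff.1 (mem_range.1 hp)
      have hl : 0 ≤ Real.log p := Real.log_natCast_nonneg p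
      have e1 : (0 : ℝ) ≤ (if p ∈ Ioc 0 (Nat.sqrt (2 * n)) then Real.log (2 * n) else 0) := by
        split_ifs <;> simp [h2n]
      have e2 : (0 : ℝ) ≤ (if p ∈ (Ioc 0 (2 * n / 3)).filter Nat.Prime then Real.log p else 0) := by
        split_ifs <;> simp [hl]
      have e3 : (0 : ℝ) ≤ (if p ∈ (Ioc n (2 * n)).filter Nat.Prime then Real.log p else 0) := by
        split_ifs <;> simp [hl]
      by_cases hpp : p.Prime
      swap
      · have : F p = 0 := Nat.factorization_eq_zero_of_not_prime _ hpp
        rw [this]; simp only [Nat.cast_zero, zero_mul]; linarith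
      by_cases hs : p ≤ Nat.sqrt (2 * n)
      · have : F p * Real.log p ≤ Real.log (2 * n) := by
          rw [← Real.log_pow]
          refine Real.log_le_log (by exact_mod_cast pow_pos hpp.pos _) ?_
          have := @Nat.pow_factorization_choose_le p (2 * n) n (by omega)
          exact_mod_cast this
        rw [if_pos (mem_Ioc.2 ⟨hpp.pos, hs⟩)]
        linarith
      have hs' : 2 * n < p ^ 2 := by
        rw [sq]; exact Nat.sqrt_lt.1 (by omega)
      have hF1 : F p ≤ 1 := Nat.factorization_choose_le_one hs'
      have hF1' : F p * Real.log p ≤ Real.log p := by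
        have : (F p : ℝ) ≤ 1 := by exact_mod_cast hF1
        nlinarith
      by_cases h3 : p ≤ 2 * n / 3
      · rw [if_pos (mem_filter.2 ⟨mem_Ioc.2 ⟨hpp.pos, h3⟩, hpp⟩)]
        rw [if_pos (mem_filter.2 ⟨mem_Ioc.2 ⟨hpp.pos, h3⟩, hpp⟩)] at e2
        linarith
      by_cases h4 : p ≤ n
      · have : F p = 0 :=
          Nat.factorization_centralBinom_of_two_mul_self_lt_three_mul (by omega) h4 (by omega)
        rw [this]; simp only [Nat.cast_zero, zero_mul]; linarith
      · have hm : p ∈ (Ioc n (2 * n)).filter Nat.Prime :=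
          mem_filter.2 ⟨mem_Ioc.2 ⟨by omega, hp'⟩, hpp⟩
        rw [if_pos hm]
        linarith
    refine (sum_le_sum hsub).trans ?_
    rw [sum_add_distrib, sum_add_distrib]
    have key : ∀ (S : Finset ℕ) (u : ℕ → ℝ), (∀ p, 0 ≤ u p) →
        ∑ p ∈ range (2 * n + 1), (if p ∈ S then u p else 0) ≤ ∑ p ∈ S, u p := by
      intro S u hu
      rw [← sum_filter]
      exact sum_le_sum_of_subset_of_nonneg (fun p hp => (mem_filter.1 hp).2) fun p _ _ => hu p
    refine add_le_add (add_le_add ?_ ?_) ?_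
    · exact key _ (fun _ => Real.log (2 * n)) fun _ => h2n
    · exact key _ (fun p => Real.log p) fun p => Real.log_natCast_nonneg p
    · exact key _ (fun p => Real.log p) fun p => Real.log_natCast_nonneg p
  rw [h1]
  refine hle.trans ?_
  rw [sum_const, Nat.card_Ioc, Nat.sub_zero, nsmul_eq_mul, ← hθ]
  linarith

/-- A Chebyshev lower bound for the primes in `(n, 2 n]`, from the factorisation of the central
binomial coefficient: its prime factors in `(n, 2 n]` occur once, there are none in `(2 n / 3, n]`, and
those up to `2 n / 3` contribute at most `(2 / 3) log 4 * n`. -/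
theorem theta_two_mul_sub_ge : ∃ N : ℕ, ∀ n : ℕ, N ≤ n →
    (n : ℝ) / 5 ≤ Chebyshev.theta (2 * n) - Chebyshev.theta n := by
  have hlim : Filter.Tendsto (fun n : ℕ => (Real.sqrt (2 * n) * Real.log (2 * n) + Real.log n) / (n : ℝ))
      Filter.atTop (nhds 0) := by
    have h1 : Filter.Tendsto (fun x : ℝ => Real.log x / x ^ (1 / 2 : ℝ)) Filter.atTop (nhds 0) :=
      (isLittleO_log_rpow_atTop (by norm_num)).tendsto_div_nhds_zero
    have h2 : Filter.Tendsto (fun x : ℝ => Real.log x / x ^ (1 : ℝ)) Filter.atTop (nhds 0) :=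
      (isLittleO_log_rpow_atTop (by norm_num)).tendsto_div_nhds_zero
    have hN := tendsto_natCast_atTop_atTop (R := ℝ)
    have hN2 : Filter.Tendsto (fun n : ℕ => (2 : ℝ) * n) Filter.atTop Filter.atTop :=
      hN.const_mul_atTop (by norm_num)
    have h3 := ((h1.comp hN2).const_mul 2).add (h2.comp hN)
    simp only [mul_zero, add_zero] at h3
    refine h3.congr' ?_
    filter_upwards [Filter.eventually_gt_atTop 0] with n hn
    have hn' : (0 : ℝ) < n := by exact_mod_cast hn
    simp only [Function.comp, Real.rpow_one]
    rw [← Real.sqrt_eq_rpow, add_div]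
    congr 1
    have hs : 0 < Real.sqrt (2 * n) := Real.sqrt_pos.2 (by positivity)
    have := Real.mul_self_sqrt (by positivity : (0 : ℝ) ≤ 2 * n)
    rw [← mul_div_assoc, div_eq_div_iff hs.ne' hn'.ne']
    linear_combination (- Real.log (2 * n)) * this
  obtain ⟨N, hN⟩ := Filter.eventually_atTop.1
    ((hlim.eventually (gt_mem_nhds (by norm_num : (0 : ℝ) < 1 / 5))))
  refine ⟨max N 4, fun n hn => ?_⟩
  have hn4 : 4 ≤ n := le_trans (le_max_right _ _) hn
  have hn0 : (0 : ℝ) < n := by exact_mod_cast (by omega : 0 < n)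
  have h1 := log_centralBinom_le n hn4
  have h2 := hN n (le_trans (le_max_left _ _) hn)
  rw [div_lt_iff₀ hn0] at h2
  have h3 : n * Real.log 4 ≤ Real.log n + Real.log n.centralBinom := by
    rw [← Real.log_pow, ← Real.log_mul hn0.ne' (by exact_mod_cast (Nat.centralBinom_pos n).ne')]
    refine Real.log_le_log (by positivity) ?_
    exact_mod_cast (Nat.four_pow_lt_mul_centralBinom n hn4).le
  have h4 : (1.38 : ℝ) ≤ Real.log 4 := by
    rw [show (4 : ℝ) = 2 ^ 2 by norm_num, Real.log_pow]
    have := Real.log_two_gt_d9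
    push_cast; linarith
  have h5 : ((Nat.sqrt (2 * n) : ℕ) : ℝ) ≤ Real.sqrt (2 * n) := by
    have := Real.nat_sqrt_le_real_sqrt (a := 2 * n)
    push_cast at this; exact this
  have h6 : (0 : ℝ) ≤ Real.log (2 * n) := Real.log_nonneg (by
    have : (4 : ℝ) ≤ n := by exact_mod_cast hn4
    linarith)
  have h7 := mul_le_mul_of_nonneg_right h5 h6
  nlinarith

/-- The indicator of divisibility by `l`. -/
noncomputable def dvdf (l n : ℕ) : ℝ := if l ∣ n then 1 else 0

theorem dvdf_periodic (l : ℕ) : Function.Periodic (dvdf l) l := by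
  intro n; simp [dvdf]

theorem rho_dvdf {l : ℕ} (hl : 0 < l) : rho dvdf l = 1 := by
  unfold rho dvdf
  rw [sum_eq_single_of_mem 0 (mem_range.2 hl)]
  · simp
  · intro n hn h0
    rw [if_neg]
    exact Nat.not_dvd_of_pos_of_lt (Nat.pos_of_ne_zero h0) (mem_range.1 hn)

theorem isSieve_dvdf : IsSieve 1 Blk dvdf where
  one_le := le_rfl
  sub _ := subset_rfl
  zo l n := by unfold dvdf; split_ifs <;> simp
  per := dvdf_periodic
  le i l hl := by rw [rho_dvdf (mem_Blk.1 hl).2.1.pos]; simp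
  half i l hl := by
    rw [rho_dvdf (mem_Blk.1 hl).2.1.pos]
    have : (2 : ℝ) ≤ l := by exact_mod_cast (mem_Blk.1 hl).2.1.two_le
    linarith

theorem biUnion_Blk (t : ℕ) : (range t).biUnion Blk = Nat.primesBelow (2 ^ 2 ^ t) := by
  ext l
  simp only [mem_biUnion, mem_range, Nat.mem_primesBelow]
  constructor
  · rintro ⟨i, hi, hl⟩
    exact ⟨lt_of_mem_Blk hi hl, (mem_Blk.1 hl).2.1⟩
  · rintro ⟨h1, h2⟩
    exact exists_Blk h2 h1

theorem VV_dvdf (t : ℕ) : VV Blk dvdf t = ∏ p ∈ Nat.primesBelow (2 ^ 2 ^ t), (1 - (p : ℝ)⁻¹) := by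
  rw [← biUnion_Blk, prod_biUnion (fun i _ j _ hij => Blk_disjoint hij)]
  refine prod_congr rfl fun i _ => prod_congr rfl fun l hl => ?_
  rw [rho_dvdf (mem_Blk.1 hl).2.1.pos, one_div]

/-- The density of the integers free of primes below `z` is at most `1 / log z`, because the Euler
product over these primes is at least the harmonic sum up to `z`. -/
theorem VV_dvdf_le (t : ℕ) : VV Blk dvdf t ≤ 1 / Real.log (2 ^ 2 ^ t) := by
  set N := 2 ^ 2 ^ t with hN
  let φ : ℕ →* ℝ := { toFun := fun n => (n : ℝ)⁻¹, map_one' := by simp, map_mul' := fun a b => by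
                         rw [Nat.cast_mul, mul_inv] }
  have h1 := EulerProduct.summable_and_hasSum_smoothNumbers_prod_primesBelow_geometric (f := φ)
    (fun {p} hp => by
      change ‖((p : ℝ)⁻¹)‖ < 1
      rw [norm_inv, Real.norm_natCast]
      exact inv_lt_one_of_one_lt₀ (by exact_mod_cast hp.one_lt)) N
  have h2 : (harmonic (N - 1) : ℝ) ≤ ∏ p ∈ N.primesBelow, (1 - φ p)⁻¹ := by
    have hmem : ∀ n ∈ range (N - 1), n + 1 ∈ N.smoothNumbers := by
      intro n hn
      exact Nat.mem_smoothNumbers_of_lt (Nat.succ_pos n) (by have := mem_range.1 hn; omega)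
    rw [harmonic]
    push_cast
    let S : Finset N.smoothNumbers := (range (N - 1)).attach.image fun n => ⟨n.1 + 1, hmem n.1 n.2⟩
    have hφ0 : ∀ n : ℕ, 0 ≤ φ n := fun n => inv_nonneg.2 (Nat.cast_nonneg n)
    have h3 := h1.2.summable.sum_le_tsum S (fun m _ => hφ0 m)
    rw [h1.2.tsum_eq, sum_image (by
      intro a _ b _ hab
      simp only [Subtype.mk.injEq] at hab
      exact Subtype.ext (by omega)), sum_attach (range (N - 1)) (fun n => φ (n + 1))] at h3
    refine le_trans (le_of_eq ?_) h3
    exact sum_congr rfl fun n _ => by change _ = (((n + 1 : ℕ) : ℝ))⁻¹; push_cast; rfl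
  have hN2 : 2 ≤ N := Nat.le_self_pow (n := 2 ^ t) (by positivity) 2
  have hNr : ((N : ℕ) : ℝ) = 2 ^ 2 ^ t := by rw [hN]; push_cast; rfl
  have h3 := log_add_one_le_harmonic (N - 1)
  rw [show N - 1 + 1 = N by omega, hNr] at h3
  have hlog : 0 < Real.log (2 ^ 2 ^ t) := Real.log_pos (by
    rw [← hNr]; exact_mod_cast hN2)
  have h4 : VV Blk dvdf t = (∏ p ∈ N.primesBelow, (1 - φ p)⁻¹)⁻¹ := by
    rw [VV_dvdf, prod_inv_distrib, inv_inv]; rfl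
  rw [h4, one_div]
  exact inv_anti₀ hlog (h3.trans h2)

/-! ### A large sieve inequality for rough numbers -/

/-- The block sieve majorant of the indicator function of the integers free of primes
below `2 ^ 2 ^ t`. -/
noncomputable def UU (b t n : ℕ) : ℝ :=
  ∏ i ∈ range t, trunc (Blk i) (2 * bI b t i) (fun l => - dvdf l n)

theorem UU_nonneg (b t n : ℕ) : 0 ≤ UU b t n :=
  prod_nonneg fun i _ => isSieve_dvdf.trunc_nonneg _ i n

/-- No prime factor below `2 ^ 2 ^ t`. -/
def Rough (t n : ℕ) : Prop := ∀ l, l.Prime → l < 2 ^ 2 ^ t → ¬ l ∣ n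

theorem dvdf_of_rough {t n i l : ℕ} (h : Rough t n) (hi : i < t) (hl : l ∈ Blk i) : dvdf l n = 0 := by
  have h1 := mem_Blk.1 hl
  refine if_neg (h l h1.2.1 (h1.1.trans_le ?_))
  exact Nat.pow_le_pow_right (by norm_num) (Nat.pow_le_pow_right (by norm_num) hi)

theorem one_le_UU {b t n : ℕ} (h : Rough t n) : 1 ≤ UU b t n := by
  refine (prod_const_one (s := range t)).symm.le.trans (prod_le_prod (fun _ _ => zero_le_one) fun i hi => ?_)
  refine le_trans (le_of_eq ?_) (isSieve_dvdf.prod_le_trunc (bI b t i) i n)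
  refine (prod_eq_one fun l hl => ?_).symm
  rw [dvdf_of_rough h (mem_range.1 hi) hl, sub_zero]

theorem sum_UU_le (b t : ℕ) (he : eps 1 b ≤ 1) {A B : ℕ} (hAB : A ≤ B) :
    ∑ n ∈ Ioc A B, UU b t n ≤ ((B : ℝ) - A) * (2 * VV Blk dvdf t) + ((2 : ℝ) ^ 2 ^ t) ^ Cx 1 b := by
  have h := isSieve_dvdf.upper_trunc b t he 1 one_pos (fun i _ l _ => Nat.coprime_one_left l) (fun _ => 1)
    (fun _ => zero_le_one) (fun _ => rfl) hAB
  simp only [one_mul, Nat.cast_one, div_one, range_one, sum_singleton, mul_one] at h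
  refine h.trans (add_le_add (mul_le_mul_of_nonneg_left ?_ ?_) le_rfl)
  · exact mul_le_mul_of_nonneg_right (by linarith) (isSieve_dvdf.VV_pos t).le
  · have : (A : ℝ) ≤ B := by exact_mod_cast hAB
    linarith

theorem one_add_sum_Blk_le (i : ℕ) : 1 + ∑ l ∈ Blk i, (l : ℝ) ≤ ((2 : ℝ) ^ 2 ^ (i + 1)) ^ 2 := by
  set z : ℕ := 2 ^ 2 ^ (i + 1) with hz
  have hz4 : 2 ≤ z := Nat.le_self_pow (n := 2 ^ (i + 1)) (by positivity) 2
  have hsub : Blk i ⊆ (range z).erase 1 := fun l hl => by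
    have := mem_Blk.1 hl
    exact mem_erase.2 ⟨this.2.1.one_lt.ne', mem_range.2 this.1⟩
  have h1 : 1 + ∑ l ∈ Blk i, l ≤ ∑ l ∈ range z, l := by
    rw [← add_sum_erase (range z) (fun l => l) (mem_range.2 hz4 : 1 ∈ range z)]
    exact Nat.add_le_add_left (sum_le_sum_of_subset hsub) _
  have h2 : ∑ l ∈ range z, l ≤ z ^ 2 := by
    refine (sum_le_card_nsmul _ _ z fun l hl => (mem_range.1 hl).le).trans ?_
    simp [sq]
  have := h1.trans h2
  rw [hz] at this
  have h3 : ((1 + ∑ l ∈ Blk i, l : ℕ) : ℝ) ≤ (((2 ^ 2 ^ (i + 1)) ^ 2 : ℕ) : ℝ) := Nat.cast_le.2 this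
  push_cast at h3
  exact h3

/-- `W`-periodic functions supported on residues prime to `W`, with vanishing complete sum, are nearly
orthogonal to the sieve majorant. -/
theorem norm_sum_UU_mul_le (b t : ℕ) {W : ℕ} (hW : 0 < W) (G : ℕ → ℂ) (hG : Function.Periodic G W)
    (hG1 : ∀ n, ‖G n‖ ≤ 1) (hG0 : ∑ n ∈ range W, G n = 0) (hGc : ∀ n, ¬ n.Coprime W → G n = 0) (A B : ℕ) :
    ‖∑ n ∈ Ioc A B, (UU b t n : ℂ) * G n‖ ≤ W * ((2 : ℝ) ^ 2 ^ t) ^ Cx 1 b := by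
  set F : ℕ → Finset (Finset ℕ) := fun i => {e ∈ (Blk i).powerset | e.card ≤ 2 * bI b t i} with hFdef
  have hF : ∀ i, F i ⊆ (Blk i).powerset := fun i => filter_subset _ _
  have hdis : ∀ i j, i ≠ j → Disjoint (Blk i) (Blk j) := fun i j => Blk_disjoint
  have hexp : ∀ n, UU b t n = ∑ d ∈ dfam Blk F t, (-1 : ℝ) ^ d.card * ∏ l ∈ d, dvdf l n := by
    intro n
    unfold UU
    have : ∀ i ∈ range t, trunc (Blk i) (2 * bI b t i) (fun l => - dvdf l n)
        = ∑ e ∈ F i, ∏ l ∈ e, (- dvdf l n) := fun i _ => rfl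
    rw [prod_congr rfl this, prod_sum_eq_sum_dfam Blk F hdis hF]
    refine sum_congr rfl fun d hd => ?_
    rw [prod_inter_blocks Blk hdis t (fun l => - dvdf l n) d (mem_powerset.1 (mem_filter.1 hd).1), prod_neg]
  have hterm : ∀ d ∈ dfam Blk F t, ‖∑ n ∈ Ioc A B, ((∏ l ∈ d, dvdf l n : ℝ) : ℂ) * G n‖
      ≤ W * ∏ l ∈ d, (l : ℝ) := by
    intro d hd
    have hdp : ∀ l ∈ d, l.Prime := fun l hl => by
      obtain ⟨i, _, hli⟩ := mem_biUnion.1 (mem_powerset.1 (mem_filter.1 hd).1 hl)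
      exact (mem_Blk.1 hli).2.1
    by_cases hc : ∀ l ∈ d, W.Coprime l
    · have hper : ∀ l ∈ d, Function.Periodic (fun n => ((dvdf l n : ℝ) : ℂ)) l := fun l _ n => by
        simp only [dvdf_periodic l n]
      have hs := sum_range_prod d hdp W hW hc G hG (fun l n => ((dvdf l n : ℝ) : ℂ)) hper
      rw [hG0, zero_mul] at hs
      have hP : 0 < W * ∏ l ∈ d, l := Nat.mul_pos hW (prod_pos fun l hl => (hdp l hl).pos)
      have key := norm_sum_Ioc_le (fun n => G n * ∏ l ∈ d, ((dvdf l n : ℝ) : ℂ)) hP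
        (by
          intro a
          have h1 := periodic_of_dvd hG (dvd_mul_right W (∏ l ∈ d, l)) a
          have h2 := periodic_of_dvd (periodic_prod d (fun l n => ((dvdf l n : ℝ) : ℂ)) hper)
            (dvd_mul_left (∏ l ∈ d, l) W) a
          simp only at h1 h2 ⊢
          rw [h1, h2])
        (fun a => by
          rw [norm_mul, norm_prod]
          refine mul_le_one₀ (hG1 a) (prod_nonneg fun _ _ => norm_nonneg _) (prod_le_one (fun _ _ => norm_nonneg _) fun l _ => ?_)
          rw [Complex.norm_real, Real.norm_eq_abs, abs_of_nonneg (isSieve_dvdf.nonneg l a)]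
          exact isSieve_dvdf.le_one l a)
        hs A B
      push_cast at key
      refine le_trans (le_of_eq ?_) key
      congr 1
      refine sum_congr rfl fun n _ => ?_
      rw [mul_comm, Complex.ofReal_prod]
    · push Not at hc
      obtain ⟨l, hl, hlW⟩ := hc
      have hlW' : l ∣ W := by
        change ¬ W.Coprime l at hlW
        rw [Nat.coprime_comm, (hdp l hl).coprime_iff_not_dvd, not_not] at hlW
        exact hlW
      rw [sum_eq_zero, norm_zero]
      · exact mul_nonneg (Nat.cast_nonneg _) (prod_nonneg fun _ _ => Nat.cast_nonneg _)
      · intro n _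
        by_cases hln : l ∣ n
        · rw [hGc n, mul_zero]
          intro hco
          have := Nat.dvd_gcd hln hlW'
          rw [hco] at this
          exact (hdp l hl).one_lt.ne' (Nat.dvd_one.1 this)
        · rw [prod_eq_zero hl, Complex.ofReal_zero, zero_mul]
          exact if_neg hln
  have e1 : ∑ n ∈ Ioc A B, (UU b t n : ℂ) * G n
      = ∑ d ∈ dfam Blk F t, (-1 : ℂ) ^ d.card * ∑ n ∈ Ioc A B, ((∏ l ∈ d, dvdf l n : ℝ) : ℂ) * G n := by
    simp_rw [mul_sum]
    rw [sum_comm]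
    refine sum_congr rfl fun n _ => ?_
    rw [hexp n, Complex.ofReal_sum, sum_mul]
    refine sum_congr rfl fun d _ => ?_
    push_cast; ring
  rw [e1]
  refine (norm_sum_le _ _).trans ?_
  calc _ ≤ ∑ d ∈ dfam Blk F t, W * ∏ l ∈ d, (l : ℝ) := by
        refine sum_le_sum fun d hd => ?_
        rw [norm_mul, norm_pow, norm_neg, norm_one, one_pow, one_mul]
        exact hterm d hd
    _ = W * ∏ i ∈ range t, trunc (Blk i) (2 * bI b t i) (fun l => (l : ℝ)) := by
        rw [← mul_sum]
        congr 1
        have : ∀ i ∈ range t, trunc (Blk i) (2 * bI b t i) (fun l => (l : ℝ))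
          = ∑ e ∈ F i, ∏ l ∈ e, (l : ℝ) := fun i _ => rfl
        rw [prod_congr rfl this, prod_sum_eq_sum_dfam Blk F hdis hF]
        refine sum_congr rfl fun d hd => ?_
        rw [prod_inter_blocks Blk hdis t (fun l => (l : ℝ)) d (mem_powerset.1 (mem_filter.1 hd).1)]
    _ ≤ W * ((2 : ℝ) ^ 2 ^ t) ^ Cx 1 b := by
        refine mul_le_mul_of_nonneg_left ?_ (Nat.cast_nonneg _)
        calc _ ≤ ∏ i ∈ range t, (2 : ℝ) ^ (2 * (2 ^ (i + 1) * (2 * bI b t i + 1))) := by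
              refine prod_le_prod (fun i _ => sum_nonneg fun e _ => prod_nonneg fun l _ => Nat.cast_nonneg l) fun i _ => ?_
              refine (trunc_le_pow (Blk i) (fun l => (l : ℝ)) (fun l _ => Nat.cast_nonneg l) _).trans ?_
              have h0 : (1 : ℝ) ≤ 1 + ∑ l ∈ Blk i, (l : ℝ) :=
                le_add_of_nonneg_right (sum_nonneg fun l _ => Nat.cast_nonneg l)
              calc _ ≤ (1 + ∑ l ∈ Blk i, (l : ℝ)) ^ (2 * bI b t i + 1) := pow_le_pow_right₀ h0 (by omega)
                _ ≤ (((2 : ℝ) ^ 2 ^ (i + 1)) ^ 2) ^ (2 * bI b t i + 1) :=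
                    pow_le_pow_left₀ (by linarith) (one_add_sum_Blk_le i) _
                _ = _ := by rw [← pow_mul, ← pow_mul]; ring_nf
          _ = (2 : ℝ) ^ (2 * ∑ i ∈ range t, (2 ^ (i + 1) * (2 * bI b t i + 1))) := by
              rw [prod_pow_eq_pow_sum, mul_sum]
          _ ≤ (2 : ℝ) ^ (2 * (2 ^ t * (4 * b + 6))) :=
              pow_le_pow_right₀ (by norm_num) (Nat.mul_le_mul_left _ (sum_bI b t))
          _ = _ := by rw [← pow_mul, Cx]; ring_nf

theorem sum_range_zmod {W : ℕ} [NeZero W] (F : ZMod W → ℂ) :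
    ∑ n ∈ range W, F (n : ZMod W) = ∑ a : ZMod W, F a := by
  obtain _ | k := W
  · exact absurd rfl (NeZero.ne 0)
  · rw [← Fin.sum_univ_eq_sum_range (fun n => F n)]
    exact Fintype.sum_congr _ _ fun i => by congr 1; exact Fin.cast_val_eq_self i

theorem char_natCast_eq_zero {q : ℕ} (χ : DirichletCharacter ℂ q) {n : ℕ} (h : ¬ n.Coprime q) :
    χ (n : ZMod q) = 0 :=
  MulChar.map_nonunit χ (by rwa [ZMod.isUnit_iff_coprime])

theorem changeLevel_natCast {q W : ℕ} (χ : DirichletCharacter ℂ q) (hqW : q ∣ W) {n : ℕ}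
    (h : n.Coprime W) : DirichletCharacter.changeLevel hqW χ (n : ZMod W) = χ (n : ZMod q) := by
  have h1 := DirichletCharacter.changeLevel_eq_cast_of_dvd χ hqW (ZMod.unitOfCoprime n h)
  rw [ZMod.coe_unitOfCoprime] at h1
  rw [h1, ZMod.cast_natCast hqW]

/-- Distinct primitive characters are orthogonal modulo the product of their conductors. -/
theorem sum_primitive_mul_star {q q' : ℕ} (hq : q ≠ 0) (hq' : q' ≠ 0) (χ : DirichletCharacter ℂ q)
    (χ' : DirichletCharacter ℂ q') (hχ : χ.IsPrimitive) (hχ' : χ'.IsPrimitive)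
    (hne : (⟨q, χ⟩ : Σ q : ℕ, DirichletCharacter ℂ q) ≠ ⟨q', χ'⟩) :
    ∑ n ∈ range (q * q'), χ (n : ZMod q) * star (χ' (n : ZMod q')) = 0 := by
  have hW : NeZero (q * q') := ⟨mul_ne_zero hq hq'⟩
  set ψ : DirichletCharacter ℂ (q * q') := DirichletCharacter.changeLevel (dvd_mul_right q q') χ *
    (DirichletCharacter.changeLevel (dvd_mul_left q' q) χ')⁻¹ with hψ
  have h1 : ∀ n : ℕ, χ (n : ZMod q) * star (χ' (n : ZMod q')) = ψ (n : ZMod (q * q')) := by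
    intro n
    by_cases hn : n.Coprime (q * q')
    · rw [hψ, MulChar.mul_apply, ← MulChar.star_apply', changeLevel_natCast _ _ hn,
        changeLevel_natCast _ _ hn]
    · rw [char_natCast_eq_zero ψ hn]
      rw [Nat.coprime_mul_iff_right, not_and_or] at hn
      rcases hn with hn | hn
      · rw [char_natCast_eq_zero χ hn, zero_mul]
      · rw [char_natCast_eq_zero χ' hn, star_zero, mul_zero]
  rw [sum_congr rfl fun n _ => h1 n, sum_range_zmod fun a => ψ a]
  refine MulChar.sum_eq_zero_of_ne_one fun h => hne ?_
  rw [hψ, mul_inv_eq_one] at h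
  have hc := congrArg DirichletCharacter.conductor h
  have hnq : NeZero q := ⟨hq⟩
  have hnq' : NeZero q' := ⟨hq'⟩
  rw [DirichletCharacter.conductor_changeLevel, DirichletCharacter.conductor_changeLevel,
    (DirichletCharacter.isPrimitive_def χ).1 hχ, (DirichletCharacter.isPrimitive_def χ').1 hχ'] at hc
  subst hc
  rw [DirichletCharacter.changeLevel_injective _ h]

/-- Dual form of the large sieve. -/
theorem dual_large_sieve (b t Q : ℕ) (he : eps 1 b ≤ 1) (X : Finset (Σ q : ℕ, DirichletCharacter ℂ q))
    (hX : ∀ x ∈ X, x.1 ≠ 0 ∧ x.1 ≤ Q ∧ x.2.IsPrimitive) (a : (Σ q : ℕ, DirichletCharacter ℂ q) → ℂ)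
    {A B : ℕ} (hAB : A ≤ B) :
    ∑ n ∈ Ioc A B, UU b t n * ‖∑ x ∈ X, a x * x.2 (n : ZMod x.1)‖ ^ 2
      ≤ (∑ x ∈ X, ‖a x‖ ^ 2) * (((B : ℝ) - A) * (2 * VV Blk dvdf t) + ((2 : ℝ) ^ 2 ^ t) ^ Cx 1 b
        + X.card * (Q ^ 2 * ((2 : ℝ) ^ 2 ^ t) ^ Cx 1 b)) := by
  classical
  set Z := ((2 : ℝ) ^ 2 ^ t) ^ Cx 1 b with hZ
  set M := ∑ n ∈ Ioc A B, UU b t n with hM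
  have hM0 : 0 ≤ M := sum_nonneg fun n _ => UU_nonneg b t n
  set K : (Σ q : ℕ, DirichletCharacter ℂ q) → (Σ q : ℕ, DirichletCharacter ℂ q) → ℂ := fun x y =>
    ∑ n ∈ Ioc A B, (UU b t n : ℂ) * (x.2 (n : ZMod x.1) * star (y.2 (n : ZMod y.1))) with hK
  have hn1 : ∀ (x y : Σ q : ℕ, DirichletCharacter ℂ q) (n : ℕ),
      ‖x.2 (n : ZMod x.1) * star (y.2 (n : ZMod y.1))‖ ≤ 1 := fun x y n => by
    rw [norm_mul, norm_star]
    exact mul_le_one₀ (DirichletCharacter.norm_le_one _ _) (norm_nonneg _) (DirichletCharacter.norm_le_one _ _)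
  have hdiag : ∀ x, ‖K x x‖ ≤ M := fun x => by
    refine (norm_sum_le _ _).trans (sum_le_sum fun n _ => ?_)
    rw [norm_mul, Complex.norm_real, Real.norm_eq_abs, abs_of_nonneg (UU_nonneg b t n)]
    exact mul_le_of_le_one_right (UU_nonneg b t n) (hn1 x x n)
  have hoff : ∀ x ∈ X, ∀ y ∈ X, x ≠ y → ‖K x y‖ ≤ Q ^ 2 * Z := by
    intro x hx y hy hxy
    obtain ⟨hx0, hxQ, hxp⟩ := hX x hx
    obtain ⟨hy0, hyQ, hyp⟩ := hX y hy
    have h := norm_sum_UU_mul_le b t (W := x.1 * y.1) (Nat.pos_of_ne_zero (mul_ne_zero hx0 hy0))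
      (fun n => x.2 (n : ZMod x.1) * star (y.2 (n : ZMod y.1)))
      (fun n => by simp) (hn1 x y)
      (sum_primitive_mul_star hx0 hy0 x.2 y.2 hxp hyp hxy)
      (fun n hn => by
        rw [Nat.coprime_mul_iff_right, not_and_or] at hn
        rcases hn with hn | hn
        · simp only [char_natCast_eq_zero _ hn, zero_mul]
        · simp only [char_natCast_eq_zero _ hn, star_zero, mul_zero]) A B
    refine h.trans (mul_le_mul_of_nonneg_right ?_ (by positivity))
    rw [sq]; push_cast
    gcongr
  have hexp : ((∑ n ∈ Ioc A B, UU b t n * ‖∑ x ∈ X, a x * x.2 (n : ZMod x.1)‖ ^ 2 : ℝ) : ℂ)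
      = ∑ x ∈ X, ∑ y ∈ X, a x * star (a y) * K x y := by
    have h1 : ∀ n : ℕ, ((UU b t n * ‖∑ x ∈ X, a x * x.2 (n : ZMod x.1)‖ ^ 2 : ℝ) : ℂ)
        = ∑ x ∈ X, ∑ y ∈ X, a x * star (a y) *
          ((UU b t n : ℂ) * (x.2 (n : ZMod x.1) * star (y.2 (n : ZMod y.1)))) := by
      intro n
      rw [Complex.ofReal_mul, Complex.ofReal_pow, ← Complex.mul_conj', starRingEnd_apply, star_sum,
        sum_mul_sum, mul_sum]
      refine sum_congr rfl fun x _ => ?_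
      rw [mul_sum]
      refine sum_congr rfl fun y _ => ?_
      rw [star_mul']; ring
    rw [Complex.ofReal_sum, sum_congr rfl fun n _ => h1 n, sum_comm]
    refine sum_congr rfl fun x _ => ?_
    rw [sum_comm]
    refine sum_congr rfl fun y _ => ?_
    rw [hK, mul_sum (Ioc A B)]
  have h2 : ∑ n ∈ Ioc A B, UU b t n * ‖∑ x ∈ X, a x * x.2 (n : ZMod x.1)‖ ^ 2
      ≤ ∑ x ∈ X, ∑ y ∈ X, ‖a x‖ * ‖a y‖ * ‖K x y‖ := by
    refine (le_abs_self _).trans ?_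
    rw [← Real.norm_eq_abs, ← Complex.norm_real, hexp]
    refine (norm_sum_le _ _).trans (sum_le_sum fun x _ => (norm_sum_le _ _).trans (sum_le_sum fun y _ => ?_))
    rw [norm_mul, norm_mul, norm_star]
  refine h2.trans ?_
  have h3 : ∑ x ∈ X, ∑ y ∈ X, ‖a x‖ * ‖a y‖ * ‖K x y‖
      ≤ ∑ x ∈ X, ∑ y ∈ X, ((if y = x then ‖a x‖ ^ 2 * M else 0)
        + (‖a x‖ ^ 2 + ‖a y‖ ^ 2) / 2 * (Q ^ 2 * Z)) := by
    refine sum_le_sum fun x hx => sum_le_sum fun y hy => ?_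
    by_cases hxy : y = x
    · subst hxy
      rw [if_pos rfl, ← sq]
      have := mul_le_mul_of_nonneg_left (hdiag y) (sq_nonneg ‖a y‖)
      have h0 : 0 ≤ (‖a y‖ ^ 2 + ‖a y‖ ^ 2) / 2 * (Q ^ 2 * Z) := by positivity
      linarith
    · rw [if_neg hxy, zero_add]
      refine mul_le_mul ?_ (hoff x hx y hy (Ne.symm hxy)) (norm_nonneg _) (by positivity)
      nlinarith [sq_nonneg (‖a x‖ - ‖a y‖)]
  refine h3.trans ?_
  have h4 : ∑ x ∈ X, ∑ y ∈ X, ((if y = x then ‖a x‖ ^ 2 * M else 0)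
        + (‖a x‖ ^ 2 + ‖a y‖ ^ 2) / 2 * (Q ^ 2 * Z))
      = (∑ x ∈ X, ‖a x‖ ^ 2) * (M + X.card * (Q ^ 2 * Z)) := by
    simp_rw [sum_add_distrib, sum_ite_eq']
    rw [sum_congr rfl (fun x hx => if_pos hx), ← sum_mul]
    simp_rw [← sum_mul, ← sum_div, sum_add_distrib]
    rw [sum_const, ← sum_nsmul]
    simp only [nsmul_eq_mul, sum_const, ← mul_sum]
    ring
  rw [h4]
  refine mul_le_mul_of_nonneg_left ?_ (sum_nonneg fun x _ => by positivity)
  exact add_le_add (sum_UU_le b t he hAB) le_rfl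

/-- Large sieve for sequences supported on rough numbers. -/
theorem large_sieve (b t Q : ℕ) (he : eps 1 b ≤ 1) (X : Finset (Σ q : ℕ, DirichletCharacter ℂ q))
    (hX : ∀ x ∈ X, x.1 ≠ 0 ∧ x.1 ≤ Q ∧ x.2.IsPrimitive)
    {A B : ℕ} (hAB : A ≤ B) (c : ℕ → ℂ) (hc : ∀ n ∈ Ioc A B, c n ≠ 0 → Rough t n) :
    ∑ x ∈ X, ‖∑ n ∈ Ioc A B, c n * x.2 (n : ZMod x.1)‖ ^ 2
      ≤ (∑ n ∈ Ioc A B, ‖c n‖ ^ 2) * (((B : ℝ) - A) * (2 * VV Blk dvdf t) + ((2 : ℝ) ^ 2 ^ t) ^ Cx 1 b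
        + X.card * (Q ^ 2 * ((2 : ℝ) ^ 2 ^ t) ^ Cx 1 b)) := by
  set S : (Σ q : ℕ, DirichletCharacter ℂ q) → ℂ := fun x => ∑ n ∈ Ioc A B, c n * x.2 (n : ZMod x.1) with hS
  set T := ∑ x ∈ X, ‖S x‖ ^ 2 with hT
  set N := (((B : ℝ) - A) * (2 * VV Blk dvdf t) + ((2 : ℝ) ^ 2 ^ t) ^ Cx 1 b
        + X.card * (Q ^ 2 * ((2 : ℝ) ^ 2 ^ t) ^ Cx 1 b)) with hN
  have hT0 : 0 ≤ T := sum_nonneg fun x _ => by positivity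
  have h1 := dual_large_sieve b t Q he X hX (fun x => star (S x)) hAB
  simp only [norm_star] at h1
  set g : ℕ → ℂ := fun n => ∑ x ∈ X, star (S x) * x.2 (n : ZMod x.1) with hg
  have h2 : (T : ℂ) = ∑ n ∈ Ioc A B, c n * g n := by
    rw [hT, Complex.ofReal_sum]
    have : ∀ x ∈ X, ((‖S x‖ ^ 2 : ℝ) : ℂ) = ∑ n ∈ Ioc A B, star (S x) * (c n * x.2 (n : ZMod x.1)) := by
      intro x _
      rw [← mul_sum, Complex.ofReal_pow, ← Complex.conj_mul', starRingEnd_apply]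
    rw [sum_congr rfl this, sum_comm]
    refine sum_congr rfl fun n _ => ?_
    rw [hg, mul_sum]
    exact sum_congr rfl fun x _ => by ring
  have h3 : T ≤ ∑ n ∈ Ioc A B, ‖c n‖ * (Real.sqrt (UU b t n) * ‖g n‖) := by
    have : T = ‖(T : ℂ)‖ := by rw [Complex.norm_real, Real.norm_eq_abs, abs_of_nonneg hT0]
    rw [this, h2]
    refine (norm_sum_le _ _).trans (sum_le_sum fun n hn => ?_)
    rw [norm_mul]
    by_cases h0 : c n = 0
    · rw [h0, norm_zero, zero_mul, zero_mul]
    · refine mul_le_mul_of_nonneg_left ?_ (norm_nonneg _)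
      refine le_mul_of_one_le_left (norm_nonneg _) ?_
      rw [Real.one_le_sqrt]
      exact one_le_UU (hc n hn h0)
  have h4 := sum_mul_sq_le_sq_mul_sq (Ioc A B) (fun n => ‖c n‖) (fun n => Real.sqrt (UU b t n) * ‖g n‖)
  have h5 : ∑ n ∈ Ioc A B, (Real.sqrt (UU b t n) * ‖g n‖) ^ 2 = ∑ n ∈ Ioc A B, UU b t n * ‖g n‖ ^ 2 :=
    sum_congr rfl fun n _ => by rw [mul_pow, Real.sq_sqrt (UU_nonneg b t n)]
  rw [h5] at h4
  have h6 : T ^ 2 ≤ (∑ n ∈ Ioc A B, ‖c n‖ ^ 2) * (T * N) :=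
    (pow_le_pow_left₀ hT0 h3 2).trans (h4.trans (mul_le_mul_of_nonneg_left h1 (sum_nonneg fun n _ => by positivity)))
  by_cases hTz : T = 0
  · change T ≤ _
    rw [hTz]
    refine mul_nonneg (sum_nonneg fun n _ => by positivity) ?_
    have e1 := (isSieve_dvdf.VV_pos t).le
    have e2 : (0 : ℝ) ≤ (B : ℝ) - A := by
      have : (A : ℝ) ≤ B := by exact_mod_cast hAB
      linarith
    rw [hN]; positivity
  · have hTp : 0 < T := lt_of_le_of_ne hT0 (Ne.symm hTz)
    refine le_of_mul_le_mul_left ?_ hTp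
    calc T * T = T ^ 2 := by ring
      _ ≤ _ := h6
      _ = _ := by ring

/-! ### Character expansion of products of periodic functions of mean zero -/

/-- A Fourier coefficient of an `N`-periodic function, with respect to a Dirichlet character. -/
noncomputable def fourier (N : ℕ) (F : ℕ → ℂ) (χ : DirichletCharacter ℂ N) : ℂ :=
  (N.totient : ℂ)⁻¹ * ∑ a ∈ range N, F a * star (χ (a : ZMod N))

theorem fourier_inversion {N : ℕ} [NeZero N] {F : ℕ → ℂ} (hF : Function.Periodic F N)
    (hF0 : ∀ n, ¬ n.Coprime N → F n = 0) (n : ℕ) :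
    F n = ∑ χ : DirichletCharacter ℂ N, fourier N F χ * χ (n : ZMod N) := by
  have hφ : (N.totient : ℂ) ≠ 0 := by
    exact_mod_cast (Nat.totient_pos.2 (Nat.pos_of_ne_zero (NeZero.ne N))).ne'
  have h1 : ∀ a ∈ range N, ∑ χ : DirichletCharacter ℂ N, F a * star (χ (a : ZMod N)) * χ (n : ZMod N)
      = if (a : ZMod N) = n then F a * N.totient else 0 := by
    intro a _
    by_cases ha : a.Coprime N
    · have h2 := DirichletCharacter.sum_char_inv_mul_char_eq ℂ ((ZMod.isUnit_iff_coprime a N).2 ha) (n : ZMod N)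
      rw [sum_congr rfl fun χ _ => mul_assoc (F a) _ _, ← mul_sum]
      have h3 : ∀ χ : DirichletCharacter ℂ N, star (χ (a : ZMod N)) = χ (a : ZMod N)⁻¹ := by
        intro χ
        rw [MulChar.star_apply', MulChar.inv_apply_eq_inv']
        refine (eq_inv_of_mul_eq_one_left ?_).symm
        rw [← map_mul, ZMod.inv_mul_of_unit _ ((ZMod.isUnit_iff_coprime a N).2 ha), map_one]
      rw [sum_congr rfl fun χ _ => by rw [h3 χ], h2, mul_ite, mul_zero]
    · rw [hF0 a ha]; simp
  have h4 : ∑ χ : DirichletCharacter ℂ N, fourier N F χ * χ (n : ZMod N)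
      = (N.totient : ℂ)⁻¹ * ∑ a ∈ range N, if (a : ZMod N) = n then F a * N.totient else 0 := by
    rw [← sum_congr rfl h1, sum_comm, mul_sum]
    refine sum_congr rfl fun χ _ => ?_
    rw [fourier, mul_assoc, sum_mul]
  rw [h4, sum_eq_single_of_mem (n % N) (mem_range.2 (Nat.mod_lt _ (Nat.pos_of_ne_zero (NeZero.ne N))))]
  · rw [if_pos (by simp), hF.map_mod_nat, mul_comm (F n), ← mul_assoc, inv_mul_cancel₀ hφ, one_mul]
  · intro a ha han
    refine if_neg fun h => han ?_
    rw [ZMod.natCast_eq_natCast_iff] at h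
    rw [← Nat.mod_eq_of_lt (mem_range.1 ha)]
    exact h

theorem coprime_prod_erase {q : Finset ℕ} (hq : ∀ l ∈ q, l.Prime) {l : ℕ} (hl : l ∈ q) :
    (∏ p ∈ q.erase l, p).Coprime l :=
  Nat.Coprime.prod_left fun p hp =>
    (Nat.coprime_primes (hq p (mem_of_mem_erase hp)) (hq l hl)).2 (ne_of_mem_erase hp)

theorem totient_prod_primes {q : Finset ℕ} (hq : ∀ l ∈ q, l.Prime) :
    (∏ l ∈ q, l).totient = ∏ l ∈ q, (l - 1) := by
  induction q using Finset.induction with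
  | empty => simp
  | insert a s ha ih =>
    rw [prod_insert ha, prod_insert ha, Nat.totient_mul, ih fun l hl => hq l (mem_insert_of_mem hl),
      Nat.totient_prime (hq a (mem_insert_self a s))]
    have := coprime_prod_erase hq (mem_insert_self a s)
    rw [erase_insert ha] at this
    exact this.symm

/-- If the conductor of `χ` omits a prime `l ∈ q`, then `χ` does not depend on the component modulo
`l`, over which `f l` sums to zero. -/
theorem fourier_eq_zero_of_not_primitive {q : Finset ℕ} {N : ℕ} (hN : N = ∏ l ∈ q, l) (hq : ∀ l ∈ q, l.Prime) (f : ℕ → ℕ → ℂ)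
    (hf : ∀ l ∈ q, Function.Periodic (f l) l) (hf0 : ∀ l ∈ q, ∀ n, l ∣ n → f l n = 0)
    (hfs : ∀ l ∈ q, ∑ n ∈ range l, f l n = 0) (χ : DirichletCharacter ℂ N)
    (hχ : ¬ χ.IsPrimitive) : fourier N (fun n => ∏ l ∈ q, f l n) χ = 0 := by
  have hN0 : N ≠ 0 := hN ▸ prod_ne_zero_iff.2 fun l hl => (hq l hl).ne_zero
  rw [DirichletCharacter.isPrimitive_def] at hχ
  obtain ⟨e, he⟩ := χ.conductor_dvd_level
  have he1 : e ≠ 1 := fun h => hχ (by rw [h, mul_one] at he; exact he.symm)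
  obtain ⟨l, hlp, hle⟩ := Nat.exists_prime_and_dvd he1
  have hlN : l ∣ N := he ▸ hle.mul_left _
  obtain ⟨p, hp, hlp'⟩ := (hlp.prime.dvd_finsetProd_iff fun l => l).1 (hN ▸ hlN)
  have hlq : l ∈ q := ((Nat.prime_dvd_prime_iff_eq hlp (hq p hp)).1 hlp') ▸ hp
  set N' := ∏ p ∈ q.erase l, p with hN'
  have hNN : N = N' * l := hN.trans (prod_erase_mul q (fun l => l) hlq).symm
  have hcN' : χ.conductor ∣ N' := by
    obtain ⟨k, rfl⟩ := hle
    rw [he] at hNN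
    refine ⟨k, ?_⟩
    have h2 : N' * l = χ.conductor * k * l := by rw [← hNN]; ring
    exact Nat.eq_of_mul_eq_mul_right hlp.pos h2
  have hN'N : N' ∣ N := ⟨l, hNN⟩
  obtain ⟨hd, χ₀, hχ₀⟩ := χ.factorsThrough_conductor
  set χ₁ : DirichletCharacter ℂ N' := DirichletCharacter.changeLevel hcN' χ₀ with hχ₁
  have hχ1 : χ = DirichletCharacter.changeLevel hN'N χ₁ := by
    rw [hχ₁, ← DirichletCharacter.changeLevel_trans]; exact hχ₀
  have hF0 : ∀ n : ℕ, ¬ n.Coprime N → ∏ l ∈ q, f l n = 0 := by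
    intro n hn
    rw [hN, Nat.coprime_prod_right_iff] at hn
    push Not at hn
    obtain ⟨p, hp, hpn⟩ := hn
    refine prod_eq_zero hp (hf0 p hp n ?_)
    change ¬ n.Coprime p at hpn
    rwa [Nat.coprime_comm, (hq p hp).coprime_iff_not_dvd, not_not] at hpn
  unfold fourier
  have h1 : ∀ a ∈ range N, (∏ l ∈ q, f l a) * star (χ (a : ZMod N))
      = (star (χ₁ (a : ZMod N')) * ∏ p ∈ q.erase l, f p a) * ∏ p ∈ {l}, f p a := by
    intro a _
    rw [prod_singleton]
    by_cases ha : a.Coprime N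
    · conv_lhs => rw [hχ1]
      rw [changeLevel_natCast _ _ ha, ← prod_erase_mul q _ hlq]; ring
    · have := hF0 a ha
      rw [← prod_erase_mul q _ hlq] at this
      rw [mul_assoc, this, mul_zero, ← prod_erase_mul q _ hlq, this, zero_mul]
  have h2 := sum_range_prod {l} (fun p hp => by rw [mem_singleton.1 hp]; exact hlp) N'
    (Nat.pos_of_ne_zero (prod_ne_zero_iff.2 fun p hp => (hq p (mem_of_mem_erase hp)).ne_zero))
    (fun p hp => by rw [mem_singleton.1 hp]; exact coprime_prod_erase hq hlq)
    (fun a => star (χ₁ (a : ZMod N')) * ∏ p ∈ q.erase l, f p a)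
    (fun a => by
      have := periodic_prod (q.erase l) f (fun p hp => hf p (mem_of_mem_erase hp)) a
      simp only [← hN'] at this
      simp only [this, Nat.cast_add, ZMod.natCast_self, add_zero])
    f (fun p hp => by rw [mem_singleton.1 hp]; exact hf l hlq)
  rw [prod_singleton, prod_singleton, hfs l hlq, mul_zero, ← hNN] at h2
  rw [sum_congr rfl h1, h2, mul_zero]

theorem norm_fourier_le {q : Finset ℕ} {N : ℕ} (hN : N = ∏ l ∈ q, l) (hq : ∀ l ∈ q, l.Prime) (f : ℕ → ℕ → ℂ)
    (hf : ∀ l ∈ q, Function.Periodic (f l) l) (χ : DirichletCharacter ℂ N) :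
    ‖fourier N (fun n => ∏ l ∈ q, f l n) χ‖
      ≤ ∏ l ∈ q, ((∑ n ∈ range l, ‖f l n‖) / ((l : ℝ) - 1)) := by
  have h1 := sum_range_prod q hq 1 one_pos (fun l _ => Nat.coprime_one_left l) (fun _ => (1 : ℝ)) (fun _ => rfl)
    (fun l n => ‖f l n‖) (fun l hl n => by simp only [hf l hl n])
  simp only [one_mul, range_one, sum_singleton] at h1
  have h2 : (N.totient : ℝ) = ∏ l ∈ q, ((l : ℝ) - 1) := by
    rw [hN, totient_prod_primes hq, Nat.cast_prod]
    exact prod_congr rfl fun l hl => by rw [Nat.cast_sub (hq l hl).one_le, Nat.cast_one]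
  unfold fourier
  rw [norm_mul, norm_inv, Complex.norm_natCast, h2, prod_div_distrib, div_eq_inv_mul, ← h1, ← hN]
  have h3 : 0 ≤ (∏ l ∈ q, ((l : ℝ) - 1))⁻¹ := by
    rw [← h2]; positivity
  refine mul_le_mul_of_nonneg_left ((norm_sum_le _ _).trans (sum_le_sum fun a _ => ?_)) h3
  rw [norm_mul, norm_star, norm_prod]
  exact mul_le_of_le_one_right (prod_nonneg fun _ _ => norm_nonneg _) (DirichletCharacter.norm_le_one _ _)

open Classical in
/-- Bilinear sums of a product of mean-zero periodic functions are controlled by primitive character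
sums. -/
theorem bilinear_prod_le {q : Finset ℕ} {N : ℕ} [NeZero N] (hN : N = ∏ l ∈ q, l) (hq : ∀ l ∈ q, l.Prime) (f : ℕ → ℕ → ℂ)
    (hf : ∀ l ∈ q, Function.Periodic (f l) l) (hf0 : ∀ l ∈ q, ∀ n, l ∣ n → f l n = 0)
    (hfs : ∀ l ∈ q, ∑ n ∈ range l, f l n = 0) (I J : Finset ℕ) (α β : ℕ → ℂ) :
    ‖∑ d ∈ I, ∑ m ∈ J, α d * β m * ∏ l ∈ q, f l (d * m)‖
      ≤ (∏ l ∈ q, ((∑ n ∈ range l, ‖f l n‖) / ((l : ℝ) - 1))) *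
        ∑ χ : DirichletCharacter ℂ N with χ.IsPrimitive,
          ‖∑ d ∈ I, α d * χ (d : ZMod N)‖ * ‖∑ m ∈ J, β m * χ (m : ZMod N)‖ := by
  set F : ℕ → ℂ := fun n => ∏ l ∈ q, f l n with hF
  have hFper : Function.Periodic F N := hN ▸ periodic_prod q f hf
  have hF0 : ∀ n : ℕ, ¬ n.Coprime N → F n = 0 := by
    intro n hn
    rw [hN, Nat.coprime_prod_right_iff] at hn
    push Not at hn
    obtain ⟨p, hp, hpn⟩ := hn
    refine prod_eq_zero hp (hf0 p hp n ?_)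
    change ¬ n.Coprime p at hpn
    rwa [Nat.coprime_comm, (hq p hp).coprime_iff_not_dvd, not_not] at hpn
  have h1 : ∑ d ∈ I, ∑ m ∈ J, α d * β m * F (d * m)
      = ∑ χ : DirichletCharacter ℂ N, fourier N F χ *
        ((∑ d ∈ I, α d * χ (d : ZMod N)) * ∑ m ∈ J, β m * χ (m : ZMod N)) := by
    have h2 : ∀ χ : DirichletCharacter ℂ N, fourier N F χ *
        ((∑ d ∈ I, α d * χ (d : ZMod N)) * ∑ m ∈ J, β m * χ (m : ZMod N))
        = ∑ d ∈ I, ∑ m ∈ J, α d * β m * (fourier N F χ * χ ((d * m : ℕ) : ZMod N)) := by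
      intro χ
      rw [sum_mul_sum, mul_sum]
      refine sum_congr rfl fun d _ => ?_
      rw [mul_sum J]
      refine sum_congr rfl fun m _ => ?_
      rw [Nat.cast_mul, map_mul]; ring
    rw [sum_congr rfl fun χ _ => h2 χ, sum_comm (s := univ)]
    refine sum_congr rfl fun d _ => ?_
    rw [sum_comm (s := univ)]
    refine sum_congr rfl fun m _ => ?_
    rw [← mul_sum, ← fourier_inversion hFper hF0]
  change ‖∑ d ∈ I, ∑ m ∈ J, α d * β m * F (d * m)‖ ≤ _
  rw [h1, mul_sum, sum_filter]
  refine (norm_sum_le _ _).trans (sum_le_sum fun χ _ => ?_)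
  split_ifs with hχ
  · rw [norm_mul, norm_mul]
    exact mul_le_mul_of_nonneg_right (norm_fourier_le hN hq f hf χ) (by positivity)
  · rw [hF, fourier_eq_zero_of_not_primitive hN hq f hf hf0 hfs χ hχ, zero_mul, norm_zero]

/-! ### The sieve for polynomial values on bilinear sums -/

/-- The expansion of a truncated product of sums `u + v`, collected by the set `e` at which `u` is chosen. -/
theorem trunc_add {R : Type*} [CommRing R] (P : Finset ℕ) (k : ℕ) (x y : ℕ → R) :
    trunc P k (fun l => x l + y l)
      = ∑ q ∈ P.powerset with q.card ≤ k, trunc (P \ q) (k - q.card) y * ∏ l ∈ q, x l := by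
  unfold trunc
  simp_rw [prod_add, sum_mul]
  rw [sum_sigma', sum_sigma']
  refine sum_bij' (fun p _ => ⟨p.2, p.1 \ p.2⟩) (fun p _ => ⟨p.1 ∪ p.2, p.1⟩) ?_ ?_ ?_ ?_ ?_
  · rintro ⟨d, q⟩ h
    simp only [mem_sigma, mem_filter, mem_powerset] at h ⊢
    obtain ⟨⟨h1, h2⟩, h3⟩ := h
    have h4 := card_le_card h3
    refine ⟨⟨h3.trans h1, h4.trans h2⟩, sdiff_subset_sdiff h1 subset_rfl, ?_⟩
    rw [card_sdiff_of_subset h3]; omega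
  · rintro ⟨q, e⟩ h
    simp only [mem_sigma, mem_filter, mem_powerset] at h ⊢
    obtain ⟨⟨h1, h2⟩, h3, h4⟩ := h
    refine ⟨⟨union_subset h1 (h3.trans sdiff_subset), ?_⟩, subset_union_left⟩
    have := card_union_le q e
    omega
  · rintro ⟨d, q⟩ h
    simp only [mem_sigma, mem_filter, mem_powerset] at h ⊢
    rw [union_sdiff_of_subset h.2]
  · rintro ⟨q, e⟩ h
    simp only [mem_sigma, mem_filter, mem_powerset] at h ⊢
    have hd : Disjoint q e := disjoint_of_subset_right h.2.1 disjoint_sdiff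
    rw [union_sdiff_cancel_left hd]
  · rintro ⟨d, q⟩ h
    simp only
    ring

section density

variable {κ : ℕ} {P : Finset ℕ} {g : ℕ → ℝ} (h0 : ∀ l ∈ P, 0 ≤ g l) (h1 : ∀ l ∈ P, g l ≤ 1 / 2)
  (hs : ∑ l ∈ P, g l ≤ 4 * κ)

include h0 h1 hs

theorem exp_le_prod_one_sub : Real.exp (-(8 * κ)) ≤ ∏ l ∈ P, (1 - g l) := by
  calc Real.exp (-(8 * κ)) ≤ Real.exp (∑ l ∈ P, -(2 * g l)) := by
        refine Real.exp_le_exp.2 ?_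
        rw [sum_neg_distrib, ← mul_sum]
        linarith
    _ = ∏ l ∈ P, Real.exp (-(2 * g l)) := Real.exp_sum _ _
    _ ≤ _ := prod_le_prod (fun _ _ => (Real.exp_pos _).le) fun l hl => exp_neg_le_one_sub (h0 l hl) (h1 l hl)

theorem trunc_neg_le (b t i : ℕ) :
    trunc P (2 * bI b t i) (fun l => - g l) ≤ (1 + aI κ b t i) * ∏ l ∈ P, (1 - g l) := by
  set n := 2 * bI b t i + 1 with hn
  have e1 := trunc_le_add_esym P g (fun l hl => ⟨h0 l hl, (h1 l hl).trans (by norm_num)⟩) (bI b t i)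
  have e2 := esym_le P g h0 n
  have hS0 : 0 ≤ ∑ l ∈ P, g l := sum_nonneg h0
  have e3 : (∑ l ∈ P, g l) ^ n / (n.factorial : ℝ) ≤ (4 * κ : ℝ) ^ n / n.factorial := by gcongr
  have e4 : (4 * κ : ℝ) ^ n / n.factorial = (1 / 8) ^ n * ((32 * κ) ^ n / n.factorial) := by
    rw [show (32 * κ : ℝ) = 8 * (4 * κ) by ring, mul_pow 8]
    have : (1 / 8 : ℝ) ^ n * 8 ^ n = 1 := by rw [← mul_pow]; norm_num
    rw [← mul_div_assoc, ← mul_assoc, this, one_mul]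
  have e5 : (32 * κ : ℝ) ^ n / n.factorial ≤ Real.exp (32 * κ) :=
    Real.pow_div_factorial_le_exp _ (by positivity) n
  have e6 := exp_le_prod_one_sub h0 h1 hs
  have e7 : esym P n g ≤ aI κ b t i * ∏ l ∈ P, (1 - g l) := by
    calc _ ≤ (1 / 8 : ℝ) ^ n * Real.exp (32 * κ) := by
          refine e2.trans (e3.trans (e4.le.trans ?_)); gcongr
      _ = Real.exp (40 * κ) * (1 / 8) ^ n * Real.exp (-(8 * κ)) := by
          rw [mul_right_comm, ← Real.exp_add]; ring_nf
      _ ≤ _ := by rw [aI]; gcongr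
  rw [one_add_mul]
  exact e1.trans (add_le_add le_rfl e7)

omit h1 in
theorem abs_trunc_neg_le {Q : Finset ℕ} (hQ : Q ⊆ P) (k : ℕ) :
    |trunc Q k (fun l => - g l)| ≤ Real.exp (4 * κ) := by
  calc |trunc Q k (fun l => - g l)| ≤ ∑ d ∈ Q.powerset with d.card ≤ k, |∏ l ∈ d, (- g l)| :=
        abs_sum_le_sum_abs _ _
    _ ≤ ∑ d ∈ Q.powerset with d.card ≤ k, ∏ l ∈ d, g l := by
        refine sum_le_sum fun d hd => ?_
        rw [abs_prod]
        refine le_of_eq (prod_congr rfl fun l hl => ?_)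
        rw [abs_neg, abs_of_nonneg (h0 l (hQ (mem_powerset.1 (mem_filter.1 hd).1 hl)))]
    _ ≤ ∑ d ∈ P.powerset, ∏ l ∈ d, g l := by
        refine sum_le_sum_of_subset_of_nonneg ((filter_subset _ _).trans (powerset_mono.2 hQ)) fun d hd _ => ?_
        exact prod_nonneg fun l hl => h0 l (mem_powerset.1 hd hl)
    _ = ∏ l ∈ P, (1 + g l) := (prod_one_add P).symm
    _ ≤ ∏ l ∈ P, Real.exp (g l) :=
        prod_le_prod (fun l hl => by linarith [h0 l hl]) fun l _ => by linarith [Real.add_one_le_exp (g l)]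
    _ = Real.exp (∑ l ∈ P, g l) := (Real.exp_sum _ _).symm
    _ ≤ _ := Real.exp_le_exp.2 hs

end density

/-- For each prime `l`, the `l`-periodic indicator function `B l` of a set of at most `D` residue
classes prime to `l`. Only the primes `l > Q₀` matter, and `Q₀` is so large that at most half of the
classes are bad. -/
structure IsBad (D Q₀ : ℕ) (B : ℕ → ℕ → ℝ) : Prop where
  one_le : 1 ≤ D
  zo : ∀ l n, B l n = 0 ∨ B l n = 1
  per : ∀ l, Function.Periodic (B l) l
  dvd : ∀ l n, l ∣ n → B l n = 0
  le : ∀ l, l.Prime → Q₀ < l → rho B l ≤ D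
  large : 4 * (D + 1) ≤ Q₀

/-- The density of the bad classes among the classes prime to `l`. -/
noncomputable def gg (B : ℕ → ℕ → ℝ) (l : ℕ) : ℝ := rho B l / (l - 1)

/-- The primes of the `i`-th block exceeding `Q₀`. -/
def PB (Q₀ i : ℕ) : Finset ℕ := {l ∈ Blk i | Q₀ < l}

/-- The bad indicator, normalised to have mean zero over the classes prime to `l`. -/
noncomputable def ff (B : ℕ → ℕ → ℝ) (l n : ℕ) : ℝ := if l ∣ n then 0 else B l n - gg B l

/-- The density of the integers avoiding the bad classes modulo the primes in `(Q₀, 2 ^ 2 ^ t)`, among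
integers prime to these. -/
noncomputable def VH (B : ℕ → ℕ → ℝ) (Q₀ t : ℕ) : ℝ := ∏ i ∈ range t, ∏ l ∈ PB Q₀ i, (1 - gg B l)

/-- The block sieve majorant of the indicator function of the integers avoiding the bad classes. -/
noncomputable def Theta (B : ℕ → ℕ → ℝ) (Q₀ b t n : ℕ) : ℝ :=
  ∏ i ∈ range t, trunc (PB Q₀ i) (2 * bI b t i) (fun l => - B l n)

/-- The coefficients of the expansion of one block of the majorant in the mean-zero functions. -/
noncomputable def tau (B : ℕ → ℕ → ℝ) (Q₀ b t i : ℕ) (e : Finset ℕ) : ℝ :=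
  trunc (PB Q₀ i \ e) (2 * bI b t i - e.card) (fun l => - gg B l)

/-- The sets occurring in the truncation of the `i`-th block of the majorant. -/
def FB (Q₀ b t i : ℕ) : Finset (Finset ℕ) := {e ∈ (PB Q₀ i).powerset | e.card ≤ 2 * bI b t i}

theorem PB_disjoint (Q₀ : ℕ) (i j : ℕ) (hij : i ≠ j) : Disjoint (PB Q₀ i) (PB Q₀ j) :=
  disjoint_of_subset_left (filter_subset _ _) (disjoint_of_subset_right (filter_subset _ _) (Blk_disjoint hij))

theorem FB_subset (Q₀ b t i : ℕ) : FB Q₀ b t i ⊆ (PB Q₀ i).powerset := filter_subset _ _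

namespace IsBad

variable {D Q₀ : ℕ} {B : ℕ → ℕ → ℝ} (h : IsBad D Q₀ B)

include h

theorem nonneg (l n : ℕ) : 0 ≤ B l n := by rcases h.zo l n with h | h <;> simp [h]

theorem le_one (l n : ℕ) : B l n ≤ 1 := by rcases h.zo l n with h | h <;> simp [h]

theorem rho_nonneg (l : ℕ) : 0 ≤ rho B l := sum_nonneg fun n _ => h.nonneg l n

theorem gg_nonneg {l : ℕ} (hl : l.Prime) : 0 ≤ gg B l := by
  have : (2 : ℝ) ≤ l := by exact_mod_cast hl.two_le
  exact div_nonneg (h.rho_nonneg l) (by linarith)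

theorem gg_le {l : ℕ} (hl : l.Prime) (hQ : Q₀ < l) : gg B l ≤ 2 * D * (1 / l) := by
  have h2 : (2 : ℝ) ≤ l := by exact_mod_cast hl.two_le
  rw [gg, div_le_iff₀ (by linarith)]
  have h1 := h.le l hl hQ
  have hD : (0 : ℝ) ≤ D := Nat.cast_nonneg D
  rw [mul_one_div, div_mul_eq_mul_div, le_div_iff₀ (by linarith)]
  nlinarith

theorem gg_le' {l : ℕ} (hl : l.Prime) (hQ : Q₀ < l) : gg B l ≤ 2 * D / Q₀ := by
  refine (h.gg_le hl hQ).trans ?_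
  have h3 : (Q₀ : ℝ) ≤ l := by exact_mod_cast hQ.le
  have h4 : (0 : ℝ) < Q₀ := by
    have := h.large
    exact_mod_cast (by omega : 0 < Q₀)
  rw [mul_one_div]; gcongr

theorem gg_le_half {l : ℕ} (hl : l.Prime) (hQ : Q₀ < l) : gg B l ≤ 1 / 2 := by
  refine (h.gg_le' hl hQ).trans ?_
  have h5 : (4 * (D + 1) : ℝ) ≤ Q₀ := by exact_mod_cast h.large
  have hD : (0 : ℝ) ≤ D := Nat.cast_nonneg D
  rw [div_le_iff₀ (by linarith)]; linarith

theorem block (i : ℕ) : (∀ l ∈ PB Q₀ i, 0 ≤ gg B l) ∧ (∀ l ∈ PB Q₀ i, gg B l ≤ 1 / 2) ∧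
    ∑ l ∈ PB Q₀ i, gg B l ≤ 4 * (2 * D : ℕ) := by
  refine ⟨fun l hl => ?_, fun l hl => ?_, ?_⟩
  · exact h.gg_nonneg (mem_Blk.1 (mem_filter.1 hl).1).2.1
  · exact h.gg_le_half (mem_Blk.1 (mem_filter.1 hl).1).2.1 (mem_filter.1 hl).2
  · calc ∑ l ∈ PB Q₀ i, gg B l ≤ ∑ l ∈ PB Q₀ i, 2 * D * ((1 : ℝ) / l) :=
          sum_le_sum fun l hl => h.gg_le (mem_Blk.1 (mem_filter.1 hl).1).2.1 (mem_filter.1 hl).2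
      _ ≤ ∑ l ∈ Blk i, 2 * D * ((1 : ℝ) / l) :=
          sum_le_sum_of_subset_of_nonneg (filter_subset _ _) fun l _ _ => by positivity
      _ = 2 * D * ∑ l ∈ Blk i, (1 : ℝ) / l := (mul_sum _ _ _).symm
      _ ≤ 2 * D * 4 := mul_le_mul_of_nonneg_left (sum_inv_Blk_le i) (by positivity)
      _ = _ := by push_cast; ring

theorem VHb_pos (i : ℕ) : 0 < ∏ l ∈ PB Q₀ i, (1 - gg B l) :=
  (Real.exp_pos _).trans_le (exp_le_prod_one_sub (h.block i).1 (h.block i).2.1 (h.block i).2.2)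

theorem VH_pos (t : ℕ) : 0 < VH B Q₀ t := prod_pos fun i _ => h.VHb_pos i

theorem Theta_nonneg (b t n : ℕ) : 0 ≤ Theta B Q₀ b t n := prod_nonneg fun i _ =>
  (prod_nonneg fun l _ => by linarith [h.le_one l n]).trans
    (bonferroni (PB Q₀ i) (fun l => B l n) (fun l _ => ⟨h.nonneg l n, h.le_one l n⟩) _).2

/-- The majorant is at least `1` on integers avoiding the bad classes. -/
theorem one_le_Theta (b t n : ℕ) (hn : ∀ i < t, ∀ l ∈ PB Q₀ i, B l n = 0) : 1 ≤ Theta B Q₀ b t n := by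
  refine (prod_const_one (s := range t)).symm.le.trans (prod_le_prod (fun _ _ => zero_le_one) fun i hi => ?_)
  refine le_trans (le_of_eq ?_)
    (bonferroni (PB Q₀ i) (fun l => B l n) (fun l _ => ⟨h.nonneg l n, h.le_one l n⟩) _).2
  refine (prod_eq_one fun l hl => ?_).symm
  rw [hn i (mem_range.1 hi) l hl, sub_zero]

theorem abs_tau_le (b t i : ℕ) (e : Finset ℕ) :
    |tau B Q₀ b t i e| ≤ (1 + aI (2 * D) b t i) * (∏ l ∈ PB Q₀ i, (1 - gg B l)) *
      ∏ _l ∈ e, Real.exp (12 * (2 * D : ℕ)) := by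
  obtain ⟨h0, h1, hs⟩ := h.block i
  have hV := exp_le_prod_one_sub h0 h1 hs
  have hVp := h.VHb_pos i
  have ha := aI_pos (2 * D) b t i
  unfold tau
  rcases e.eq_empty_or_nonempty with rfl | he
  · rw [sdiff_empty, card_empty, Nat.sub_zero, prod_empty, mul_one, abs_of_nonneg]
    · exact trunc_neg_le h0 h1 hs b t i
    · exact hVp.le.trans (bonferroni (PB Q₀ i) (gg B) (fun l hl => ⟨h0 l hl, (h1 l hl).trans (by norm_num)⟩) _).2
  · refine (abs_trunc_neg_le h0 hs sdiff_subset _).trans ?_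
    rw [prod_const]
    have e1 : Real.exp (12 * (2 * D : ℕ)) ≤ Real.exp (12 * (2 * D : ℕ)) ^ e.card :=
      le_self_pow₀ (Real.one_le_exp (by positivity)) he.card_pos.ne'
    calc Real.exp (4 * (2 * D : ℕ)) = Real.exp (-(8 * (2 * D : ℕ))) * Real.exp (12 * (2 * D : ℕ)) := by
          rw [← Real.exp_add]; ring_nf
      _ ≤ (∏ l ∈ PB Q₀ i, (1 - gg B l)) * Real.exp (12 * (2 * D : ℕ)) ^ e.card := by gcongr
      _ ≤ _ := by
          rw [mul_assoc (1 + _)]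
          exact le_mul_of_one_le_left (by positivity) (by linarith)

/-- The coefficient of `q` is the density `VH` up to a bounded factor for each prime of `q`: the
factors `1 - gg B l` missing for `l ∈ q` are bounded below. -/
theorem abs_prod_tau_le (b t : ℕ) (he : eps (2 * D) b ≤ 1) {q : Finset ℕ} (hq : q ⊆ (range t).biUnion (PB Q₀)) :
    |∏ i ∈ range t, tau B Q₀ b t i (q ∩ PB Q₀ i)|
      ≤ (1 + eps (2 * D) b) * VH B Q₀ t * ∏ _l ∈ q, Real.exp (12 * (2 * D : ℕ)) := by
  rw [abs_prod]
  calc _ ≤ ∏ i ∈ range t, ((1 + aI (2 * D) b t i) * (∏ l ∈ PB Q₀ i, (1 - gg B l)) *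
        ∏ _l ∈ q ∩ PB Q₀ i, Real.exp (12 * (2 * D : ℕ))) :=
        prod_le_prod (fun _ _ => abs_nonneg _) fun i _ => h.abs_tau_le b t i _
    _ = (∏ i ∈ range t, (1 + aI (2 * D) b t i)) * VH B Q₀ t * ∏ _l ∈ q, Real.exp (12 * (2 * D : ℕ)) := by
        rw [prod_mul_distrib, prod_mul_distrib,
          prod_inter_blocks (PB Q₀) (PB_disjoint Q₀) t (fun _ => Real.exp (12 * (2 * D : ℕ))) q hq, VH]
    _ ≤ _ := by
        have := prod_one_add_aI_le (2 * D) b t (range t) subset_rfl he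
        have h2 := eps_pos (2 * D) b
        have h3 := (h.VH_pos t).le
        gcongr
        linarith

omit h in
/-- On rough integers `B l = gg B l + ff B l`, so that the majorant expands in products of the mean-zero
functions `ff B l`; the term `q = ∅` is the main term. -/
theorem Theta_expand (b t n : ℕ) (hn : Rough t n) :
    Theta B Q₀ b t n = ∑ q ∈ dfam (PB Q₀) (FB Q₀ b t) t,
      (∏ i ∈ range t, tau B Q₀ b t i (q ∩ PB Q₀ i)) * ∏ l ∈ q, (- ff B l n) := by
  have h1 : ∀ i ∈ range t, trunc (PB Q₀ i) (2 * bI b t i) (fun l => - B l n)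
      = ∑ e ∈ FB Q₀ b t i, tau B Q₀ b t i e * ∏ l ∈ e, (- ff B l n) := by
    intro i hi
    have h2 := trunc_add (PB Q₀ i) (2 * bI b t i) (fun l => - ff B l n) (fun l => - gg B l)
    have h3 : trunc (PB Q₀ i) (2 * bI b t i) (fun l => - B l n)
        = trunc (PB Q₀ i) (2 * bI b t i) (fun l => - ff B l n + - gg B l) := by
      unfold trunc
      refine sum_congr rfl fun d hd => prod_congr rfl fun l hl => ?_
      have hl' := mem_powerset.1 (mem_filter.1 hd).1 hl
      have hln : ¬ l ∣ n := by
        have e1 := mem_Blk.1 (mem_filter.1 hl').1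
        refine hn l e1.2.1 (e1.1.trans_le ?_)
        exact Nat.pow_le_pow_right (by norm_num) (Nat.pow_le_pow_right (by norm_num) (mem_range.1 hi))
      simp only [ff, if_neg hln]; ring
    rw [h3, h2]
    rfl
  rw [Theta, prod_congr rfl h1, prod_sum_eq_sum_dfam (PB Q₀) (FB Q₀ b t) (PB_disjoint Q₀) (FB_subset Q₀ b t)]
  refine sum_congr rfl fun q hq => ?_
  rw [prod_mul_distrib, prod_inter_blocks (PB Q₀) (PB_disjoint Q₀) t (fun l => - ff B l n) q
    (mem_powerset.1 (mem_filter.1 hq).1)]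

theorem ff_periodic (l : ℕ) : Function.Periodic (ff B l) l := fun n => by
  have := h.per l n
  simp only [ff, this, Nat.dvd_add_self_right]

omit h in
theorem sum_range_not_dvd {l : ℕ} (hl : l.Prime) (c : ℝ) :
    ∑ n ∈ range l, (if l ∣ n then 0 else c) = (l - 1) * c := by
  have h0 : 0 ∈ range l := mem_range.2 hl.pos
  rw [← add_sum_erase _ _ h0, if_pos (dvd_zero l), zero_add, sum_congr rfl (g := fun _ => c), sum_const,
    card_erase_of_mem h0, card_range, nsmul_eq_mul, Nat.cast_sub hl.one_le, Nat.cast_one]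
  intro n hn
  refine if_neg fun hd => ?_
  have := Nat.le_of_dvd (Nat.pos_of_ne_zero (ne_of_mem_erase hn)) hd
  have := mem_range.1 (mem_of_mem_erase hn)
  omega

theorem sum_ff {l : ℕ} (hl : l.Prime) : ∑ n ∈ range l, ff B l n = 0 := by
  have h1 : ∀ n, ff B l n = B l n - if l ∣ n then 0 else gg B l := by
    intro n
    unfold ff
    split_ifs with hd
    · rw [h.dvd l n hd, sub_zero]
    · rfl
  have h2 : (l : ℝ) - 1 ≠ 0 := by
    have : (2 : ℝ) ≤ l := by exact_mod_cast hl.two_le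
    linarith
  rw [sum_congr rfl fun n _ => h1 n, sum_sub_distrib, sum_range_not_dvd hl, gg, mul_div_cancel₀ _ h2, rho, sub_self]

theorem sum_abs_ff_le {l : ℕ} (hl : l.Prime) : (∑ n ∈ range l, |ff B l n|) / ((l : ℝ) - 1) ≤ 2 * gg B l := by
  have h2 : 0 < (l : ℝ) - 1 := by
    have : (2 : ℝ) ≤ l := by exact_mod_cast hl.two_le
    linarith
  have hg := h.gg_nonneg hl
  have h1 : ∀ n, |ff B l n| ≤ B l n + if l ∣ n then 0 else gg B l := by
    intro n
    have hB := h.nonneg l n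
    unfold ff
    split_ifs with hd
    · rw [abs_zero]; linarith
    · rw [abs_le]; constructor <;> linarith
  rw [div_le_iff₀ h2]
  calc _ ≤ ∑ n ∈ range l, (B l n + if l ∣ n then 0 else gg B l) := sum_le_sum fun n _ => h1 n
    _ = 2 * gg B l * (l - 1) := by
      rw [sum_add_distrib, sum_range_not_dvd hl]
      change rho B l + _ = _
      have : rho B l = gg B l * (l - 1) := by rw [gg, div_mul_cancel₀ _ h2.ne']
      rw [this]; ring

end IsBad

/-! ### Averages of the majorant over bilinear sums -/

open Classical in
/-- The primitive Dirichlet characters modulo `q` (none for `q = 0`). -/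
noncomputable def primChars (q : ℕ) : Finset (DirichletCharacter ℂ q) :=
  if h : q = 0 then ∅ else
    haveI : NeZero q := ⟨h⟩
    (univ : Finset (DirichletCharacter ℂ q)).filter fun χ => χ.IsPrimitive

theorem mem_primChars {q : ℕ} {χ : DirichletCharacter ℂ q} (h : χ ∈ primChars q) : q ≠ 0 ∧ χ.IsPrimitive := by
  classical
  unfold primChars at h
  split_ifs at h with h0
  · simp at h
  · exact ⟨h0, (mem_filter.1 h).2⟩

theorem card_primChars_le (q : ℕ) : (primChars q).card ≤ q := by
  classical
  unfold primChars
  split_ifs with h0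
  · simp
  · have : NeZero q := ⟨h0⟩
    refine (card_filter_le _ _).trans ?_
    rw [card_univ, ← Nat.card_eq_fintype_card, DirichletCharacter.card_eq_totient_of_hasEnoughRootsOfUnity ℂ q]
    exact Nat.totient_le q

theorem prod_le_of_mem_dfam {Q₀ b t : ℕ} {q : Finset ℕ} (hq : q ∈ dfam (PB Q₀) (FB Q₀ b t) t) :
    ∏ l ∈ q, l ≤ (2 ^ 2 ^ t) ^ (4 * b + 6) := by
  have h1 := mem_powerset.1 (mem_filter.1 hq).1
  have h2 := (mem_filter.1 hq).2
  rw [← prod_inter_blocks (PB Q₀) (PB_disjoint Q₀) t (fun l => l) q h1]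
  calc _ ≤ ∏ i ∈ range t, 2 ^ (2 ^ (i + 1) * (2 * bI b t i + 1)) := by
        refine prod_le_prod' fun i hi => ?_
        have h3 : (q ∩ PB Q₀ i).card ≤ 2 * bI b t i := (mem_filter.1 (h2 i hi)).2
        calc ∏ l ∈ q ∩ PB Q₀ i, l ≤ ∏ _l ∈ q ∩ PB Q₀ i, 2 ^ 2 ^ (i + 1) :=
              prod_le_prod' fun l hl => (mem_Blk.1 (mem_filter.1 (mem_inter.1 hl).2).1).1.le
          _ = 2 ^ (2 ^ (i + 1) * (q ∩ PB Q₀ i).card) := by rw [prod_const, ← pow_mul]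
          _ ≤ _ := Nat.pow_le_pow_right (by norm_num) (Nat.mul_le_mul_left _ (by omega))
    _ = 2 ^ (∑ i ∈ range t, 2 ^ (i + 1) * (2 * bI b t i + 1)) := prod_pow_eq_pow_sum _ _ _
    _ ≤ 2 ^ (2 ^ t * (4 * b + 6)) := Nat.pow_le_pow_right (by norm_num) (sum_bI b t)
    _ = _ := pow_mul _ _ _

theorem prime_of_mem_dfam {Q₀ b t : ℕ} {q : Finset ℕ} (hq : q ∈ dfam (PB Q₀) (FB Q₀ b t) t) :
    ∀ l ∈ q, l.Prime ∧ Q₀ < l := by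
  intro l hl
  obtain ⟨i, _, hi⟩ := mem_biUnion.1 (mem_powerset.1 (mem_filter.1 hq).1 hl)
  exact ⟨(mem_Blk.1 (mem_filter.1 hi).1).2.1, (mem_filter.1 hi).2⟩

/-- The primitive characters whose moduli are the products of the non-empty sets occurring in the
expansion of the majorant. -/
noncomputable def XX (Q₀ b t : ℕ) : Finset (Σ q : ℕ, DirichletCharacter ℂ q) :=
  (((dfam (PB Q₀) (FB Q₀ b t) t).erase ∅).image fun q => ∏ l ∈ q, l).sigma primChars

theorem sum_XX (Q₀ b t : ℕ) (F : (Σ q : ℕ, DirichletCharacter ℂ q) → ℝ) :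
    ∑ x ∈ XX Q₀ b t, F x
      = ∑ q ∈ (dfam (PB Q₀) (FB Q₀ b t) t).erase ∅, ∑ χ ∈ primChars (∏ l ∈ q, l), F ⟨_, χ⟩ := by
  rw [XX, sum_sigma, sum_image]
  intro q hq q' hq' hqq
  have h1 := fun l hl => (prime_of_mem_dfam (mem_of_mem_erase hq) l hl).1
  have h2 := fun l hl => (prime_of_mem_dfam (mem_of_mem_erase hq') l hl).1
  rw [← Nat.primeFactors_prod h1, ← Nat.primeFactors_prod h2]
  exact congrArg _ hqq

theorem mem_XX {Q₀ b t : ℕ} {x : Σ q : ℕ, DirichletCharacter ℂ q} (hx : x ∈ XX Q₀ b t) :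
    x.1 ≠ 0 ∧ x.1 ≤ (2 ^ 2 ^ t) ^ (4 * b + 6) ∧ x.2.IsPrimitive := by
  obtain ⟨h1, h2⟩ := mem_sigma.1 hx
  obtain ⟨q, hq, hqx⟩ := mem_image.1 h1
  refine ⟨(mem_primChars h2).1, ?_, (mem_primChars h2).2⟩
  rw [← hqx]
  exact prod_le_of_mem_dfam (mem_of_mem_erase hq)

theorem card_XX_le (Q₀ b t : ℕ) : (XX Q₀ b t).card ≤ ((2 ^ 2 ^ t) ^ (4 * b + 6)) ^ 2 := by
  set Q := (2 ^ 2 ^ t) ^ (4 * b + 6) with hQ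
  set I := ((dfam (PB Q₀) (FB Q₀ b t) t).erase ∅).image fun q => ∏ l ∈ q, l with hI
  have h1 : I ⊆ Icc 1 Q := by
    intro n hn
    obtain ⟨q, hq, rfl⟩ := mem_image.1 hn
    refine mem_Icc.2 ⟨?_, prod_le_of_mem_dfam (mem_of_mem_erase hq)⟩
    exact Nat.pos_of_ne_zero (prod_ne_zero_iff.2 fun l hl =>
      (prime_of_mem_dfam (mem_of_mem_erase hq) l hl).1.ne_zero)
  rw [XX, card_sigma]
  calc _ ≤ ∑ n ∈ I, Q := sum_le_sum fun n hn => (card_primChars_le n).trans (mem_Icc.1 (h1 hn)).2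
    _ = I.card * Q := by rw [sum_const, smul_eq_mul]
    _ ≤ Q * Q := Nat.mul_le_mul_right _ ((card_le_card h1).trans (by simp))
    _ = Q ^ 2 := (sq Q).symm

/-- The large sieve constant for rough integers in `(A, B]`. -/
noncomputable def NN (b t : ℕ) (A B : ℕ) : ℝ :=
  ((B : ℝ) - A) * (2 * VV Blk dvdf t) + 2 * ((2 : ℝ) ^ 2 ^ t) ^ (3 * Cx 1 b)

/-- The moduli in `XX` are at most a fixed power of `2 ^ 2 ^ t`, so the large sieve applies with the
constant `NN`. -/
theorem large_sieve_XX (Q₀ b t : ℕ) (he : eps 1 b ≤ 1) {A B : ℕ} (hAB : A ≤ B) (c : ℕ → ℂ)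
    (hc : ∀ n ∈ Ioc A B, c n ≠ 0 → Rough t n) :
    ∑ x ∈ XX Q₀ b t, ‖∑ n ∈ Ioc A B, c n * x.2 (n : ZMod x.1)‖ ^ 2
      ≤ (∑ n ∈ Ioc A B, ‖c n‖ ^ 2) * NN b t A B := by
  refine (large_sieve b t _ he (XX Q₀ b t) (fun x hx => mem_XX hx) hAB c hc).trans ?_
  refine mul_le_mul_of_nonneg_left ?_ (sum_nonneg fun _ _ => by positivity)
  set z : ℝ := (2 : ℝ) ^ 2 ^ t with hz
  have hz1 : 1 ≤ z := one_le_pow₀ (by norm_num)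
  have h1 : ((XX Q₀ b t).card : ℝ) ≤ (z ^ (4 * b + 6)) ^ 2 := by
    rw [hz]; exact_mod_cast card_XX_le Q₀ b t
  have h2 : (((2 ^ 2 ^ t) ^ (4 * b + 6) : ℕ) : ℝ) = z ^ (4 * b + 6) := by push_cast; rfl
  rw [h2, NN]
  have h3 : z ^ Cx 1 b ≤ z ^ (3 * Cx 1 b) := pow_le_pow_right₀ hz1 (by omega)
  have h4 : ((XX Q₀ b t).card : ℝ) * ((z ^ (4 * b + 6)) ^ 2 * z ^ Cx 1 b) ≤ z ^ (3 * Cx 1 b) := by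
    calc _ ≤ (z ^ (4 * b + 6)) ^ 2 * ((z ^ (4 * b + 6)) ^ 2 * z ^ Cx 1 b) := by gcongr
      _ = z ^ (3 * Cx 1 b) := by rw [← pow_mul, ← pow_add, ← pow_add]; congr 1; unfold Cx; ring
  linarith

/-- The contribution of a set `q` of primes to a bilinear sum, bounded by the primitive characters
modulo the product of `q`; each prime brings in the small factor `2 * gg B l`, which is `O(D / l)`. -/
theorem norm_primChars_sum {D Q₀ : ℕ} {B : ℕ → ℕ → ℝ} (h : IsBad D Q₀ B) {q : Finset ℕ}
    (hq : ∀ l ∈ q, l.Prime ∧ Q₀ < l) (I J : Finset ℕ) (α β : ℕ → ℝ) :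
    |∑ d ∈ I, ∑ m ∈ J, α d * β m * ∏ l ∈ q, (- ff B l (d * m))|
      ≤ (∏ l ∈ q, (2 * gg B l)) * ∑ χ ∈ primChars (∏ l ∈ q, l),
        ‖∑ d ∈ I, (α d : ℂ) * χ (d : ZMod (∏ l ∈ q, l))‖ * ‖∑ m ∈ J, (β m : ℂ) * χ (m : ZMod (∏ l ∈ q, l))‖ := by
  classical
  have hN0 : (∏ l ∈ q, l) ≠ 0 := prod_ne_zero_iff.2 fun l hl => (hq l hl).1.ne_zero
  generalize hN : (∏ l ∈ q, l) = N at *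
  have : NeZero N := ⟨hN0⟩
  have h1 := bilinear_prod_le hN.symm (fun l hl => (hq l hl).1) (fun l n => ((- ff B l n : ℝ) : ℂ))
    (fun l _ n => by simp only [h.ff_periodic l n])
    (fun l _ n hn => by simp [ff, hn])
    (fun l hl => by rw [← Complex.ofReal_sum, sum_neg_distrib, h.sum_ff (hq l hl).1]; simp)
    I J (fun d => (α d : ℂ)) (fun m => (β m : ℂ))
  have h2 : primChars N = ({χ | χ.IsPrimitive} : Finset (DirichletCharacter ℂ N)) := by
    unfold primChars
    rw [dif_neg hN0]
  rw [h2]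
  have h3 : |∑ d ∈ I, ∑ m ∈ J, α d * β m * ∏ l ∈ q, (- ff B l (d * m))|
      = ‖∑ d ∈ I, ∑ m ∈ J, (α d : ℂ) * (β m : ℂ) * ∏ l ∈ q, ((- ff B l (d * m) : ℝ) : ℂ)‖ := by
    rw [← Real.norm_eq_abs, ← Complex.norm_real]
    push_cast; rfl
  rw [h3]
  refine h1.trans ?_
  refine mul_le_mul_of_nonneg_right ?_ (sum_nonneg fun _ _ => by positivity)
  refine prod_le_prod (fun l hl => ?_) fun l hl => ?_
  · have : (2 : ℝ) ≤ l := by exact_mod_cast (hq l hl).1.two_le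
    exact div_nonneg (sum_nonneg fun _ _ => norm_nonneg _) (by linarith)
  · refine le_trans (le_of_eq ?_) (h.sum_abs_ff_le (hq l hl).1)
    congr 1
    refine sum_congr rfl fun n _ => ?_
    rw [Complex.norm_real, Real.norm_eq_abs, abs_neg]

theorem Rough.mul {t d m : ℕ} (hd : Rough t d) (hm : Rough t m) : Rough t (d * m) := by
  intro l hl hlt hdm
  rcases (hl.dvd_mul).1 hdm with h | h
  · exact hd l hl hlt h
  · exact hm l hl hlt h

/-- On bilinear sums over rough integers the majorant averages to its density `VH`. All primes of the
moduli occurring in the error exceed `Q₀`, which gives the factor `δ`; the Cauchy-Schwarz inequality and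
the large sieve bound the character sums. -/
theorem bilinear_main {D Q₀ : ℕ} {B : ℕ → ℕ → ℝ} (h : IsBad D Q₀ B) (b t : ℕ) (he : eps (2 * D) b ≤ 1)
    (he1 : eps 1 b ≤ 1) {δ : ℝ} (hδ : Real.exp (12 * (2 * D : ℕ)) * (4 * D / Q₀) ≤ δ) (hδ1 : δ ≤ 1)
    {A₁ B₁ A₂ B₂ : ℕ} (h₁ : A₁ ≤ B₁) (h₂ : A₂ ≤ B₂) (α β : ℕ → ℝ) (hα0 : ∀ n, 0 ≤ α n) (hβ0 : ∀ n, 0 ≤ β n)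
    (hα : ∀ n, α n ≠ 0 → Rough t n) (hβ : ∀ n, β n ≠ 0 → Rough t n) :
    ∑ d ∈ Ioc A₁ B₁, ∑ m ∈ Ioc A₂ B₂, α d * β m * Theta B Q₀ b t (d * m)
      ≤ (1 + eps (2 * D) b) * VH B Q₀ t * ((∑ d ∈ Ioc A₁ B₁, α d) * ∑ m ∈ Ioc A₂ B₂, β m)
        + 2 * VH B Q₀ t * δ * (√((∑ d ∈ Ioc A₁ B₁, α d ^ 2) * NN b t A₁ B₁)
          * √((∑ m ∈ Ioc A₂ B₂, β m ^ 2) * NN b t A₂ B₂)) := by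
  set I := Ioc A₁ B₁ with hI
  set J := Ioc A₂ B₂ with hJ
  set 𝒟 := dfam (PB Q₀) (FB Q₀ b t) t with h𝒟
  set T : Finset ℕ → ℝ := fun q => ∏ i ∈ range t, tau B Q₀ b t i (q ∩ PB Q₀ i) with hT
  set S : Finset ℕ → ℝ := fun q => ∑ d ∈ I, ∑ m ∈ J, α d * β m * ∏ l ∈ q, (- ff B l (d * m)) with hS
  have hV := (h.VH_pos t).le
  have heps := (eps_pos (2 * D) b).le
  have hδ0 : 0 ≤ δ := le_trans (by positivity) hδ
  have e1 : ∑ d ∈ I, ∑ m ∈ J, α d * β m * Theta B Q₀ b t (d * m) = ∑ q ∈ 𝒟, T q * S q := by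
    have : ∀ d ∈ I, ∀ m ∈ J, α d * β m * Theta B Q₀ b t (d * m)
        = ∑ q ∈ 𝒟, T q * (α d * β m * ∏ l ∈ q, (- ff B l (d * m))) := by
      intro d _ m _
      by_cases h0 : α d * β m = 0
      · simp [h0]
      · rw [IsBad.Theta_expand b t _ ((hα d (left_ne_zero_of_mul h0)).mul (hβ m (right_ne_zero_of_mul h0))), mul_sum (𝒟)]
        exact sum_congr rfl fun q _ => by ring
    rw [sum_congr rfl fun d hd => sum_congr rfl fun m hm => this d hd m hm]
    rw [sum_congr rfl fun d _ => sum_comm (s := J), sum_comm (s := I)]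
    refine sum_congr rfl fun q _ => ?_
    simp only [hS, mul_sum]
  have hTq : ∀ q ∈ 𝒟, |T q| ≤ (1 + eps (2 * D) b) * VH B Q₀ t * ∏ _l ∈ q, Real.exp (12 * (2 * D : ℕ)) :=
    fun q hq => h.abs_prod_tau_le b t he (mem_powerset.1 (mem_filter.1 hq).1)
  have hS0 : S ∅ = (∑ d ∈ I, α d) * ∑ m ∈ J, β m := by
    simp only [hS, prod_empty, mul_one]
    rw [sum_mul_sum]
  have hSnn : 0 ≤ (∑ d ∈ I, α d) * ∑ m ∈ J, β m :=
    mul_nonneg (sum_nonneg fun _ _ => hα0 _) (sum_nonneg fun _ _ => hβ0 _)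
  set G : (Σ q : ℕ, DirichletCharacter ℂ q) → ℝ := fun x => ‖∑ d ∈ I, (α d : ℂ) * x.2 (d : ZMod x.1)‖ with hG
  set G' : (Σ q : ℕ, DirichletCharacter ℂ q) → ℝ := fun x => ‖∑ m ∈ J, (β m : ℂ) * x.2 (m : ZMod x.1)‖ with hG'
  have hq1 : ∀ q ∈ 𝒟.erase ∅, T q * S q
      ≤ 2 * VH B Q₀ t * δ * ∑ χ ∈ primChars (∏ l ∈ q, l), G ⟨_, χ⟩ * G' ⟨_, χ⟩ := by
    intro q hq
    obtain ⟨hq0, hq⟩ := mem_erase.1 hq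
    have hp := prime_of_mem_dfam hq
    have k1 := hTq q hq
    have k2 : |S q| ≤ _ := norm_primChars_sum h hp I J α β
    set Z := ∑ χ ∈ primChars (∏ l ∈ q, l), G ⟨_, χ⟩ * G' ⟨_, χ⟩ with hZ
    have hZ0 : 0 ≤ Z := sum_nonneg fun _ _ => mul_nonneg (norm_nonneg _) (norm_nonneg _)
    have k2' : |S q| ≤ (∏ l ∈ q, (2 * gg B l)) * Z := k2
    have hK : (0 : ℝ) ≤ ∏ _l ∈ q, Real.exp (12 * (2 * D : ℕ)) := prod_nonneg fun _ _ => (Real.exp_pos _).le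
    have k3 : (∏ _l ∈ q, Real.exp (12 * (2 * D : ℕ))) * ∏ l ∈ q, (2 * gg B l) ≤ δ := by
      rw [← prod_mul_distrib]
      have hle : ∀ l ∈ q, Real.exp (12 * (2 * D : ℕ)) * (2 * gg B l) ≤ δ := by
        intro l hl
        refine le_trans ?_ hδ
        have := h.gg_le' (hp l hl).1 (hp l hl).2
        have e : (4 * D / Q₀ : ℝ) = 2 * (2 * D / Q₀) := by ring
        rw [e]; gcongr
      have hge : ∀ l ∈ q, 0 ≤ Real.exp (12 * (2 * D : ℕ)) * (2 * gg B l) := fun l hl => by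
        have := h.gg_nonneg (hp l hl).1
        positivity
      calc _ ≤ ∏ _l ∈ q, δ := prod_le_prod hge hle
        _ = δ ^ q.card := by rw [prod_const]
        _ ≤ δ := pow_le_of_le_one hδ0 hδ1 (card_ne_zero.2 (nonempty_iff_ne_empty.2 hq0))
    calc T q * S q ≤ |T q| * |S q| := by rw [← abs_mul]; exact le_abs_self _
      _ ≤ ((1 + eps (2 * D) b) * VH B Q₀ t * ∏ _l ∈ q, Real.exp (12 * (2 * D : ℕ))) * ((∏ l ∈ q, (2 * gg B l)) * Z) :=
          mul_le_mul k1 k2' (abs_nonneg _) (by positivity)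
      _ = (1 + eps (2 * D) b) * VH B Q₀ t * ((∏ _l ∈ q, Real.exp (12 * (2 * D : ℕ))) * ∏ l ∈ q, (2 * gg B l)) * Z := by ring
      _ ≤ (1 + 1) * VH B Q₀ t * δ * Z := by
          have k4 : (0 : ℝ) ≤ ∏ l ∈ q, (2 * gg B l) := prod_nonneg fun l hl => by
            have := h.gg_nonneg (hp l hl).1
            positivity
          gcongr
      _ = _ := by ring
  have hCS : ∑ x ∈ XX Q₀ b t, G x * G' x ≤ √((∑ d ∈ I, α d ^ 2) * NN b t A₁ B₁) * √((∑ m ∈ J, β m ^ 2) * NN b t A₂ B₂) := by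
    refine (Real.sum_mul_le_sqrt_mul_sqrt _ _ _).trans ?_
    have l1 := large_sieve_XX Q₀ b t he1 h₁ (fun n => (α n : ℂ)) (fun n _ hn => hα n fun h0 => hn (by simp [h0]))
    have l2 := large_sieve_XX Q₀ b t he1 h₂ (fun n => (β n : ℂ)) (fun n _ hn => hβ n fun h0 => hn (by simp [h0]))
    have s1 : ∀ a : ℝ, ‖(a : ℂ)‖ ^ 2 = a ^ 2 := fun a => by rw [Complex.norm_real, Real.norm_eq_abs, sq_abs]
    simp only [s1] at l1 l2
    gcongr
  have hsum : ∑ q ∈ 𝒟.erase ∅, T q * S q ≤ 2 * VH B Q₀ t * δ *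
      (√((∑ d ∈ I, α d ^ 2) * NN b t A₁ B₁) * √((∑ m ∈ J, β m ^ 2) * NN b t A₂ B₂)) := by
    refine (sum_le_sum hq1).trans ?_
    rw [← mul_sum (𝒟.erase ∅), ← sum_XX Q₀ b t fun x => G x * G' x]
    exact mul_le_mul_of_nonneg_left hCS (by positivity)
  have hE : ∅ ∈ 𝒟 → T ∅ * S ∅ ≤ (1 + eps (2 * D) b) * VH B Q₀ t * ((∑ d ∈ I, α d) * ∑ m ∈ J, β m) := by
    intro hmem
    have k1 := hTq ∅ hmem
    rw [prod_empty, mul_one] at k1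
    rw [hS0]
    exact mul_le_mul_of_nonneg_right ((le_abs_self _).trans k1) hSnn
  rw [e1]
  by_cases hmem : ∅ ∈ 𝒟
  · rw [← add_sum_erase _ _ hmem]
    exact add_le_add (hE hmem) hsum
  · rw [erase_eq_of_notMem hmem] at hsum
    have : 0 ≤ (1 + eps (2 * D) b) * VH B Q₀ t * ((∑ d ∈ I, α d) * ∑ m ∈ J, β m) := by positivity
    linarith

/-! ### Sums over rough integers in a box -/

theorem VV_dvdf_nonneg (t : ℕ) : 0 ≤ VV Blk dvdf t := (isSieve_dvdf.VV_pos t).le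

theorem NN_nonneg (b t : ℕ) {A B : ℕ} (hAB : A ≤ B) : 0 ≤ NN b t A B := by
  have h1 : (A : ℝ) ≤ B := by exact_mod_cast hAB
  have h2 := VV_dvdf_nonneg t
  have h3 : 0 ≤ (B : ℝ) - A := by linarith
  unfold NN; positivity

open Classical in
/-- Upper bound sieve for the rough integers in an interval. -/
theorem card_rough_le (b t : ℕ) (he : eps 1 b ≤ 1) {A B : ℕ} (hAB : A ≤ B) :
    (∑ n ∈ Ioc A B, if Rough t n then (1 : ℝ) else 0) ≤ NN b t A B := by
  calc _ ≤ ∑ n ∈ Ioc A B, UU b t n := by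
        refine sum_le_sum fun n _ => ?_
        split_ifs with h
        · exact one_le_UU h
        · exact UU_nonneg b t n
    _ ≤ _ := sum_UU_le b t he hAB
    _ ≤ _ := by
        have : ((2 : ℝ) ^ 2 ^ t) ^ Cx 1 b ≤ ((2 : ℝ) ^ 2 ^ t) ^ (3 * Cx 1 b) :=
          pow_le_pow_right₀ (one_le_pow₀ (by norm_num)) (by omega)
        have h0 : 0 ≤ ((2 : ℝ) ^ 2 ^ t) ^ Cx 1 b := by positivity
        unfold NN; linarith

open Classical in
/-- The von Mangoldt function restricted to rough integers. -/
noncomputable def al (s n : ℕ) : ℝ := if Rough s n then ArithmeticFunction.vonMangoldt n else 0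

open Classical in
/-- The indicator function of the rough integers greater than `1`. -/
noncomputable def be (s n : ℕ) : ℝ := if 1 < n ∧ Rough s n then 1 else 0

theorem al_nonneg (s n : ℕ) : 0 ≤ al s n := by
  unfold al; split_ifs
  · exact ArithmeticFunction.vonMangoldt_nonneg
  · exact le_rfl

theorem be_nonneg (s n : ℕ) : 0 ≤ be s n := by unfold be; split_ifs <;> norm_num

theorem Rough.mono {s t n : ℕ} (hts : t ≤ s) (h : Rough s n) : Rough t n := fun l hl hlt =>
  h l hl (hlt.trans_le (Nat.pow_le_pow_right (by norm_num) (Nat.pow_le_pow_right (by norm_num) hts)))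

theorem Rough.le {s n : ℕ} (h : Rough s n) (hn : 1 < n) : 2 ^ 2 ^ s ≤ n := by
  by_contra hlt
  exact h n.minFac (Nat.minFac_prime (by omega)) ((Nat.minFac_le (by omega)).trans_lt (by omega)) (Nat.minFac_dvd n)

theorem Rough.of_dvd {s n d : ℕ} (h : Rough s n) (hd : d ∣ n) : Rough s d := fun l hl hlt hld =>
  h l hl hlt (hld.trans hd)

theorem al_ne_zero {s n : ℕ} (h : al s n ≠ 0) : Rough s n ∧ 1 < n := by
  unfold al at h
  split_ifs at h with hr
  · refine ⟨hr, ?_⟩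
    rcases n with _ | _ | n
    · simp at h
    · simp at h
    · omega
  · exact absurd rfl h

theorem be_ne_zero {s n : ℕ} (h : be s n ≠ 0) : Rough s n ∧ 1 < n := by
  unfold be at h
  split_ifs at h with hr
  · exact hr.symm
  · exact absurd rfl h

theorem al_le_log (s n : ℕ) {L : ℝ} (hL0 : 0 ≤ L) (hL : Real.log n ≤ L) : al s n ≤ L := by
  unfold al; split_ifs
  · exact ArithmeticFunction.vonMangoldt_le_log.trans hL
  · exact hL0

section
open Classical
variable (b : ℕ) {s t : ℕ} (hts : t ≤ s) (he : eps 1 b ≤ 1) {A B : ℕ} (hAB : A ≤ B) {L : ℝ} (hL0 : 0 ≤ L)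
include hts he hAB

theorem sum_be_le : ∑ n ∈ Ioc A B, be s n ≤ NN b t A B := by
  refine le_trans (sum_le_sum fun n _ => ?_) (card_rough_le b t he hAB)
  by_cases h : be s n = 0
  · rw [h]; split_ifs <;> norm_num
  · rw [if_pos ((be_ne_zero h).1.mono hts), be]
    split_ifs <;> norm_num

theorem sum_be_sq_le : ∑ n ∈ Ioc A B, be s n ^ 2 ≤ NN b t A B := by
  refine le_trans (le_of_eq (sum_congr rfl fun n _ => ?_)) (sum_be_le b hts he hAB)
  unfold be; split_ifs <;> norm_num

include hL0

theorem sum_al_le (hL : ∀ n ∈ Ioc A B, Real.log n ≤ L) : ∑ n ∈ Ioc A B, al s n ≤ L * NN b t A B := by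
  refine le_trans (sum_le_sum (g := fun n => L * if Rough t n then 1 else 0) fun n hn => ?_) ?_
  · by_cases h : al s n = 0
    · rw [h]; split_ifs <;> simp [hL0]
    · rw [if_pos ((al_ne_zero h).1.mono hts), mul_one]
      exact al_le_log s n hL0 (hL n hn)
  · rw [← mul_sum]
    exact mul_le_mul_of_nonneg_left (card_rough_le b t he hAB) hL0

theorem sum_al_sq_le (hL : ∀ n ∈ Ioc A B, Real.log n ≤ L) : ∑ n ∈ Ioc A B, al s n ^ 2 ≤ L ^ 2 * NN b t A B := by
  refine le_trans (sum_le_sum (g := fun n => L * al s n) fun n hn => ?_) ?_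
  · rw [sq]
    exact mul_le_mul_of_nonneg_right (al_le_log s n hL0 (hL n hn)) (al_nonneg s n)
  · rw [← mul_sum, sq, mul_assoc]
    exact mul_le_mul_of_nonneg_left (sum_al_le b hts he hAB hL0 hL) hL0

end

/-- The bilinear estimate for the two weights occurring in the decomposition of the logarithm. -/
theorem box_le {D Q₀ : ℕ} {B : ℕ → ℕ → ℝ} (h : IsBad D Q₀ B) (b : ℕ) {s t : ℕ} (hts : t ≤ s)
    (he : eps (2 * D) b ≤ 1) (he1 : eps 1 b ≤ 1) {δ : ℝ}
    (hδ : Real.exp (12 * (2 * D : ℕ)) * (4 * D / Q₀) ≤ δ) (hδ1 : δ ≤ 1)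
    {A₁ B₁ A₂ B₂ : ℕ} (h₁ : A₁ ≤ B₁) (h₂ : A₂ ≤ B₂) {L : ℝ} (hL0 : 0 ≤ L) (hL : ∀ n ∈ Ioc A₁ B₁, Real.log n ≤ L) :
    ∑ d ∈ Ioc A₁ B₁, ∑ m ∈ Ioc A₂ B₂, al s d * be s m * Theta B Q₀ b t (d * m)
      ≤ (1 + eps (2 * D) b) * VH B Q₀ t * ((∑ d ∈ Ioc A₁ B₁, al s d) * ∑ m ∈ Ioc A₂ B₂, be s m)
        + 2 * VH B Q₀ t * δ * (L * (NN b t A₁ B₁ * NN b t A₂ B₂)) := by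
  refine (bilinear_main h b t he he1 hδ hδ1 h₁ h₂ (al s) (be s) (al_nonneg s) (be_nonneg s)
    (fun n hn => (al_ne_zero hn).1.mono hts) (fun n hn => (be_ne_zero hn).1.mono hts)).trans ?_
  have hV := (h.VH_pos t).le
  have hδ0 : 0 ≤ δ := le_trans (by positivity) hδ
  have n1 := NN_nonneg b t h₁
  have n2 := NN_nonneg b t h₂
  have k1 : √((∑ d ∈ Ioc A₁ B₁, al s d ^ 2) * NN b t A₁ B₁) ≤ L * NN b t A₁ B₁ := by
    refine Real.sqrt_le_iff.2 ⟨by positivity, ?_⟩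
    rw [mul_pow, sq (NN b t A₁ B₁), ← mul_assoc]
    exact mul_le_mul_of_nonneg_right (sum_al_sq_le b hts he1 h₁ hL0 hL) n1
  have k2 : √((∑ d ∈ Ioc A₂ B₂, be s d ^ 2) * NN b t A₂ B₂) ≤ NN b t A₂ B₂ := by
    refine Real.sqrt_le_iff.2 ⟨by positivity, ?_⟩
    rw [sq (NN b t A₂ B₂)]
    exact mul_le_mul_of_nonneg_right (sum_be_sq_le b hts he1 h₂) n2
  have k3 := mul_le_mul k1 k2 (Real.sqrt_nonneg _) (by positivity)
  rw [mul_assoc L] at k3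
  gcongr

/-! ### Decomposition of the logarithm over rough integers -/

theorem sum_pairs (X Y : ℕ) (G : ℕ → ℕ → ℝ) :
    ∑ n ∈ Ioc X Y, ∑ p ∈ n.divisorsAntidiagonal, G p.1 p.2
      = ∑ d ∈ Icc 1 Y, ∑ m ∈ Icc 1 Y, if X < d * m ∧ d * m ≤ Y then G d m else 0 := by
  rw [← sum_product', ← sum_filter]
  set P := {p ∈ Icc 1 Y ×ˢ Icc 1 Y | X < p.1 * p.2 ∧ p.1 * p.2 ≤ Y} with hP
  have hmap : ∀ p ∈ P, p.1 * p.2 ∈ Ioc X Y := fun p hp => mem_Ioc.2 (mem_filter.1 hp).2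
  rw [← sum_fiberwise_of_maps_to hmap]
  refine sum_congr rfl fun n hn => sum_congr ?_ fun _ _ => rfl
  ext p
  simp only [Nat.mem_divisorsAntidiagonal, hP, mem_filter, mem_product, mem_Icc]
  have hn := mem_Ioc.1 hn
  constructor
  · rintro ⟨h1, h2⟩
    have hp1 : 1 ≤ p.1 := Nat.pos_of_ne_zero fun h => h2 (by rw [← h1, h, zero_mul])
    have hp2 : 1 ≤ p.2 := Nat.pos_of_ne_zero fun h => h2 (by rw [← h1, h, mul_zero])
    refine ⟨⟨⟨⟨hp1, ?_⟩, hp2, ?_⟩, by omega⟩, h1⟩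
    · exact (Nat.le_mul_of_pos_right _ hp2).trans (by omega)
    · exact (Nat.le_mul_of_pos_left _ hp1).trans (by omega)
  · rintro ⟨_, h1⟩
    exact ⟨h1, by omega⟩

/-- For rough `n`, the identity `log n = ∑_{d m = n} Λ(d)` with the term `m = 1` separated. -/
theorem sum_divisorsAntidiagonal_al {s n : ℕ} (hn : 0 < n) (hr : Rough s n) :
    ∑ p ∈ n.divisorsAntidiagonal, al s p.1 * be s p.2 = Real.log n - ArithmeticFunction.vonMangoldt n := by
  rw [Nat.sum_divisorsAntidiagonal fun d m => al s d * be s m, ← ArithmeticFunction.vonMangoldt_sum,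
    ← Nat.cons_self_properDivisors hn.ne', sum_cons, sum_cons,
    add_sub_cancel_left, Nat.div_self hn]
  have h1 : be s 1 = 0 := if_neg fun h => lt_irrefl _ h.1
  rw [h1, mul_zero, zero_add]
  refine sum_congr rfl fun d hd => ?_
  obtain ⟨hd1, hd2⟩ := Nat.mem_properDivisors.1 hd
  obtain ⟨m, rfl⟩ := hd1
  have hd0 : 0 < d := Nat.pos_of_ne_zero fun h => by simp [h] at hn
  rw [Nat.mul_div_cancel_left _ hd0, al, be, if_pos (hr.of_dvd (Dvd.intro _ rfl)), if_pos, mul_one]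
  refine ⟨?_, hr.of_dvd (Dvd.intro_left _ rfl)⟩
  by_contra h
  have : d * m ≤ d * 1 := Nat.mul_le_mul_left _ (by omega)
  omega

theorem sum_divisorsAntidiagonal_al_of_not {s n : ℕ} (hr : ¬ Rough s n) :
    ∑ p ∈ n.divisorsAntidiagonal, al s p.1 * be s p.2 = 0 := by
  refine sum_eq_zero fun p hp => ?_
  by_contra h
  refine hr ?_
  rw [← (Nat.mem_divisorsAntidiagonal.1 hp).1]
  exact (al_ne_zero (left_ne_zero_of_mul h)).1.mul (be_ne_zero (right_ne_zero_of_mul h)).1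

/-- Integers all of whose prime factors are at least `2 ^ 2 ^ s`, outside the bad classes modulo
the primes in `(Q₀, 2 ^ 2 ^ t)`. -/
def Good (B : ℕ → ℕ → ℝ) (Q₀ s t n : ℕ) : Prop := Rough s n ∧ ∀ i < t, ∀ l ∈ PB Q₀ i, B l n = 0

/-- The sum over factorisations `n = d m` with `X < n ≤ Y`, arranged by `d ∈ I`, with
weight `Λ(d)` and rough `d` and `m > 1`; the further weight `w` is evaluated at `n`. -/
noncomputable def TT (X Y s : ℕ) (w : ℕ → ℝ) (I : Finset ℕ) : ℝ :=
  ∑ d ∈ I, ∑ m ∈ Icc 1 Y, if X < d * m ∧ d * m ≤ Y then al s d * be s m * w (d * m) else 0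

theorem TT_eq (X Y s : ℕ) (w : ℕ → ℝ) {A A' : ℕ} (hA : A < 2 ^ 2 ^ s) (hA' : Y < (A' + 1) * 2 ^ 2 ^ s) :
    TT X Y s w (Ioc A A') = ∑ n ∈ Ioc X Y, w n * ∑ p ∈ n.divisorsAntidiagonal, al s p.1 * be s p.2 := by
  have h1 : ∑ n ∈ Ioc X Y, w n * ∑ p ∈ n.divisorsAntidiagonal, al s p.1 * be s p.2
      = ∑ n ∈ Ioc X Y, ∑ p ∈ n.divisorsAntidiagonal, al s p.1 * be s p.2 * w (p.1 * p.2) := by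
    refine sum_congr rfl fun n _ => ?_
    rw [mul_sum]
    refine sum_congr rfl fun p hp => ?_
    rw [(Nat.mem_divisorsAntidiagonal.1 hp).1, mul_comm]
  rw [h1, sum_pairs X Y fun d m => al s d * be s m * w (d * m)]
  have key : ∀ d, (∑ m ∈ Icc 1 Y, if X < d * m ∧ d * m ≤ Y then al s d * be s m * w (d * m) else 0) ≠ 0 →
      d ∈ Ioc A A' ∧ d ∈ Icc 1 Y := by
    intro d hd
    obtain ⟨m, hm, hne⟩ := exists_ne_zero_of_sum_ne_zero hd
    split_ifs at hne with hc
    · have ha := al_ne_zero (left_ne_zero_of_mul (left_ne_zero_of_mul hne))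
      have hb := be_ne_zero (right_ne_zero_of_mul (left_ne_zero_of_mul hne))
      have ha' := ha.1.le ha.2
      have hb' := hb.1.le hb.2
      have hm1 := (mem_Icc.1 hm).1
      refine ⟨mem_Ioc.2 ⟨by omega, ?_⟩, mem_Icc.2 ⟨by omega, ?_⟩⟩
      · by_contra hlt
        have : (A' + 1) * 2 ^ 2 ^ s ≤ d * m := Nat.mul_le_mul (by omega) hb'
        omega
      · exact (Nat.le_mul_of_pos_right _ hm1).trans hc.2
    · exact absurd rfl hne
  unfold TT
  rw [← sum_filter_ne_zero (s := Ioc A A'), ← sum_filter_ne_zero (s := Icc 1 Y)]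
  refine sum_congr ?_ fun _ _ => rfl
  ext d
  simp only [mem_filter]
  exact ⟨fun h => ⟨(key d h.2).2, h.2⟩, fun h => ⟨(key d h.2).1, h.2⟩⟩

open Classical in
/-- On good integers `Λ(n) = log n - ∑_{d m = n, m > 1} Λ(d)`, and the subtracted sum, which is
nonnegative, is extended to all rough integers with the majorant as a weight. -/
theorem good_ge {D Q₀ : ℕ} {B : ℕ → ℕ → ℝ} (h : IsBad D Q₀ B) (b : ℕ) {s t : ℕ} {X Y A A' : ℕ}
    (hA : A < 2 ^ 2 ^ s) (hA' : Y < (A' + 1) * 2 ^ 2 ^ s) :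
    ∑ n ∈ Ioc X Y with Good B Q₀ s t n, Real.log n - TT X Y s (Theta B Q₀ b t) (Ioc A A')
      ≤ ∑ n ∈ Ioc X Y with Good B Q₀ s t n, ArithmeticFunction.vonMangoldt n := by
  rw [TT_eq X Y s _ hA hA', sub_le_iff_le_add', ← sub_le_iff_le_add, ← sum_sub_distrib, sum_filter]
  refine sum_le_sum fun n hn => ?_
  have hn0 : 0 < n := by have := (mem_Ioc.1 hn).1; omega
  have hΘ := h.Theta_nonneg b t n
  have hp : 0 ≤ ∑ p ∈ n.divisorsAntidiagonal, al s p.1 * be s p.2 :=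
    sum_nonneg fun p _ => mul_nonneg (al_nonneg _ _) (be_nonneg _ _)
  split_ifs with hg
  · rw [← sum_divisorsAntidiagonal_al hn0 hg.1]
    exact le_mul_of_one_le_left hp (h.one_le_Theta b t n hg.2)
  · positivity

open Classical in
theorem TT_one_eq (X Y s : ℕ) {A A' : ℕ} (hA : A < 2 ^ 2 ^ s) (hA' : Y < (A' + 1) * 2 ^ 2 ^ s) :
    TT X Y s 1 (Ioc A A') = ∑ n ∈ Ioc X Y with Rough s n, (Real.log n - ArithmeticFunction.vonMangoldt n) := by
  rw [TT_eq X Y s _ hA hA', sum_filter]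
  refine sum_congr rfl fun n hn => ?_
  have hn0 : 0 < n := by have := (mem_Ioc.1 hn).1; omega
  split_ifs with hr
  · simp [sum_divisorsAntidiagonal_al hn0 hr]
  · simp [sum_divisorsAntidiagonal_al_of_not hr]

theorem theta_sub_eq {X Y : ℕ} (hXY : X ≤ Y) :
    Chebyshev.theta Y - Chebyshev.theta X = ∑ p ∈ Ioc X Y with p.Prime, Real.log p := by
  rw [Chebyshev.theta, Chebyshev.theta, Nat.floor_natCast, Nat.floor_natCast]
  simp only [sum_filter]
  rw [sub_eq_iff_eq_add', sum_Ioc_consecutive _ (Nat.zero_le X) hXY]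

open Classical in
/-- The unsieved sum over the factorisations with `m > 1` equals the sum of `log n - Λ(n)` over rough
`n`, and all primes in `(X, Y]` are rough. -/
theorem TT_one_le {X Y s : ℕ} (hXY : X ≤ Y) (hX : 2 ^ 2 ^ s ≤ X) {A A' : ℕ} (hA : A < 2 ^ 2 ^ s)
    (hA' : Y < (A' + 1) * 2 ^ 2 ^ s) :
    TT X Y s 1 (Ioc A A') ≤ Real.log Y * (∑ n ∈ Ioc X Y, if Rough s n then (1 : ℝ) else 0)
      - (Chebyshev.theta Y - Chebyshev.theta X) := by
  rw [TT_one_eq X Y s hA hA', sum_sub_distrib, theta_sub_eq hXY]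
  refine sub_le_sub ?_ ?_
  · rw [sum_filter, mul_sum]
    refine sum_le_sum fun n hn => ?_
    have hn' := mem_Ioc.1 hn
    split_ifs
    · rw [mul_one]
      exact Real.log_le_log (by exact_mod_cast (by omega : 0 < n)) (by exact_mod_cast hn'.2)
    · simp
  · calc _ = ∑ p ∈ Ioc X Y with p.Prime, ArithmeticFunction.vonMangoldt p :=
          sum_congr rfl fun p hp => (ArithmeticFunction.vonMangoldt_apply_prime (mem_filter.1 hp).2).symm
      _ ≤ _ := by
          refine sum_le_sum_of_subset_of_nonneg ?_ fun _ _ _ => ArithmeticFunction.vonMangoldt_nonneg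
          intro p hp
          obtain ⟨h1, h2⟩ := mem_filter.1 hp
          refine mem_filter.2 ⟨h1, fun l hl hlt hd => ?_⟩
          have := (mem_Ioc.1 h1).1
          rw [(Nat.prime_dvd_prime_iff_eq hl h2).1 hd] at hlt
          omega

theorem sum_Ioc_chain (A : ℕ → ℕ) (hA : Monotone A) (J : ℕ) (F : ℕ → ℝ) :
    ∑ d ∈ Ioc (A 0) (A J), F d = ∑ j ∈ range J, ∑ d ∈ Ioc (A j) (A (j + 1)), F d := by
  induction J with
  | zero => simp
  | succ J ih => rw [sum_range_succ, ← ih, sum_Ioc_consecutive _ (hA (Nat.zero_le J)) (hA J.le_succ)]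

/-! ### Cutting the hyperbolic region into boxes -/

section boxes
variable {X Y a a' d : ℕ} (ha : 1 ≤ a) (hd : d ∈ Ioc a a') {f : ℕ → ℝ} (hf : ∀ m, 0 ≤ f m)
include ha hd hf

/-- The condition `X < d m ≤ Y` is relaxed to `X / a' < m ≤ Y / a`, which does not depend on
`d ∈ (a, a']`. -/
theorem sum_le_box : (∑ m ∈ Icc 1 Y, if X < d * m ∧ d * m ≤ Y then f m else 0) ≤ ∑ m ∈ Ioc (X / a') (Y / a), f m := by
  obtain ⟨hd1, hd2⟩ := mem_Ioc.1 hd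
  rw [← sum_filter]
  refine sum_le_sum_of_subset_of_nonneg (fun m hm => ?_) fun m _ _ => hf m
  obtain ⟨h1, h2, h3⟩ := mem_filter.1 hm
  refine mem_Ioc.2 ⟨Nat.div_lt_of_lt_mul (h2.trans_le (Nat.mul_le_mul_right _ hd2)), ?_⟩
  rw [Nat.le_div_iff_mul_le ha, mul_comm]
  exact (Nat.mul_le_mul_right _ hd1.le).trans h3

/-- The box exceeds the hyperbolic region by two short intervals near its ends. -/
theorem box_le_sum : ∑ m ∈ Ioc (X / a') (Y / a), f m ≤ (∑ m ∈ Icc 1 Y, if X < d * m ∧ d * m ≤ Y then f m else 0)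
    + (∑ m ∈ Ioc (X / a') (X / a), f m + ∑ m ∈ Ioc (Y / a') (Y / a), f m) := by
  obtain ⟨hd1, hd2⟩ := mem_Ioc.1 hd
  have ha' : 0 < a' := by omega
  rw [← sum_filter]
  set U := {m ∈ Icc 1 Y | X < d * m ∧ d * m ≤ Y} with hU
  have hsub : Ioc (X / a') (Y / a) ⊆ U ∪ (Ioc (X / a') (X / a) ∪ Ioc (Y / a') (Y / a)) := by
    intro m hm
    obtain ⟨h1, h2⟩ := mem_Ioc.1 hm
    simp only [mem_union, hU, mem_filter, mem_Icc, mem_Ioc]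
    by_cases c1 : X < d * m
    · by_cases c2 : d * m ≤ Y
      · refine Or.inl ⟨⟨(Nat.zero_le _).trans_lt h1, h2.trans (Nat.div_le_self _ _)⟩, c1, c2⟩
      · refine Or.inr (Or.inr ⟨?_, h2⟩)
        rw [Nat.div_lt_iff_lt_mul ha', mul_comm]
        exact (not_le.1 c2).trans_le (Nat.mul_le_mul_right _ hd2)
    · refine Or.inr (Or.inl ⟨h1, ?_⟩)
      rw [Nat.le_div_iff_mul_le ha, mul_comm]
      exact (Nat.mul_le_mul_right _ hd1.le).trans (not_lt.1 c1)
  have hun : ∀ S T : Finset ℕ, ∑ m ∈ S ∪ T, f m ≤ ∑ m ∈ S, f m + ∑ m ∈ T, f m := by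
    intro S T
    rw [← sum_union_inter]
    exact le_add_of_nonneg_right (sum_nonneg fun m _ => hf m)
  calc _ ≤ ∑ m ∈ U ∪ (Ioc (X / a') (X / a) ∪ Ioc (Y / a') (Y / a)), f m :=
        sum_le_sum_of_subset_of_nonneg hsub fun m _ _ => hf m
    _ ≤ _ := (hun _ _).trans (add_le_add le_rfl (hun _ _))

end boxes

/-- The size of the error made on the boundary of the boxes. -/
noncomputable def Over (b t X Y : ℕ) (A : ℕ → ℕ) (J : ℕ) : ℝ :=
  ∑ j ∈ range J, NN b t (A j) (A (j + 1)) *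
    (NN b t (X / A (j + 1)) (X / A j) + NN b t (Y / A (j + 1)) (Y / A j))

/-- The size of the bilinear error inside the boxes. -/
noncomputable def Bil (b t X Y : ℕ) (A : ℕ → ℕ) (J : ℕ) : ℝ :=
  ∑ j ∈ range J, NN b t (A j) (A (j + 1)) * NN b t (X / A (j + 1)) (Y / A j)

/-- In each box the majorant is replaced by its density `VH`; the errors come from the boundary of the
hyperbolic region (`Over`) and from the large sieve (`Bil`). -/
theorem TT_Theta_le {D Q₀ : ℕ} {B : ℕ → ℕ → ℝ} (h : IsBad D Q₀ B) (b : ℕ) {s t : ℕ} (hts : t ≤ s)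
    (he : eps (2 * D) b ≤ 1) (he1 : eps 1 b ≤ 1) {δ : ℝ}
    (hδ : Real.exp (12 * (2 * D : ℕ)) * (4 * D / Q₀) ≤ δ) (hδ1 : δ ≤ 1)
    {X Y : ℕ} (hXY : X ≤ Y) (A : ℕ → ℕ) (hA : Monotone A) (J : ℕ) (hA0 : 1 ≤ A 0) (hAJ : A J ≤ Y) :
    TT X Y s (Theta B Q₀ b t) (Ioc (A 0) (A J)) ≤ (1 + eps (2 * D) b) * VH B Q₀ t *
        (TT X Y s 1 (Ioc (A 0) (A J)) + Real.log Y * Over b t X Y A J)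
      + 2 * VH B Q₀ t * δ * (Real.log Y * Bil b t X Y A J) := by
  have hV := (h.VH_pos t).le
  have heps := (eps_pos (2 * D) b).le
  have hL0 : 0 ≤ Real.log Y := Real.log_natCast_nonneg _
  have hAj : ∀ j, 1 ≤ A j := fun j => hA0.trans (hA (Nat.zero_le j))
  have hdiv : ∀ Z j, Z / A (j + 1) ≤ Z / A j := fun Z j => Nat.div_le_div_left (hA j.le_succ) (hAj j)
  have hL : ∀ j < J, ∀ n ∈ Ioc (A j) (A (j + 1)), Real.log n ≤ Real.log Y := by
    intro j hj n hn
    obtain ⟨h1, h2⟩ := mem_Ioc.1 hn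
    refine Real.log_le_log (by exact_mod_cast (by omega : 0 < n)) ?_
    exact_mod_cast h2.trans ((hA hj).trans hAJ)
  have step : ∀ j ∈ range J, TT X Y s (Theta B Q₀ b t) (Ioc (A j) (A (j + 1)))
      ≤ (1 + eps (2 * D) b) * VH B Q₀ t * (TT X Y s 1 (Ioc (A j) (A (j + 1))) + Real.log Y *
        (NN b t (A j) (A (j + 1)) * (NN b t (X / A (j + 1)) (X / A j) + NN b t (Y / A (j + 1)) (Y / A j))))
      + 2 * VH B Q₀ t * δ * (Real.log Y * (NN b t (A j) (A (j + 1)) * NN b t (X / A (j + 1)) (Y / A j))) := by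
    intro j hj
    have hj := mem_range.1 hj
    have hM : X / A (j + 1) ≤ Y / A j := (Nat.div_le_div_right hXY).trans (hdiv Y j)
    have n1 := NN_nonneg b t (hA j.le_succ)
    calc TT X Y s (Theta B Q₀ b t) (Ioc (A j) (A (j + 1)))
        ≤ ∑ d ∈ Ioc (A j) (A (j + 1)), ∑ m ∈ Ioc (X / A (j + 1)) (Y / A j), al s d * be s m * Theta B Q₀ b t (d * m) :=
          sum_le_sum fun d hd => sum_le_box (f := fun m => al s d * be s m * Theta B Q₀ b t (d * m)) (hAj j) hd fun m =>
            mul_nonneg (mul_nonneg (al_nonneg _ _) (be_nonneg _ _)) (h.Theta_nonneg b t _)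
      _ ≤ _ := box_le h b hts he he1 hδ hδ1 (hA j.le_succ) hM hL0 (hL j hj)
      _ ≤ _ := by
          refine add_le_add (mul_le_mul_of_nonneg_left ?_ (by positivity)) le_rfl
          rw [sum_mul_sum]
          calc _ ≤ ∑ d ∈ Ioc (A j) (A (j + 1)), ((∑ m ∈ Icc 1 Y, if X < d * m ∧ d * m ≤ Y then al s d * be s m else 0)
                + (∑ m ∈ Ioc (X / A (j + 1)) (X / A j), al s d * be s m
                  + ∑ m ∈ Ioc (Y / A (j + 1)) (Y / A j), al s d * be s m)) :=
                sum_le_sum fun d hd => box_le_sum (f := fun m => al s d * be s m) (hAj j) hd fun m =>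
                  mul_nonneg (al_nonneg _ _) (be_nonneg _ _)
            _ = TT X Y s 1 (Ioc (A j) (A (j + 1))) + (∑ d ∈ Ioc (A j) (A (j + 1)), al s d) *
                (∑ m ∈ Ioc (X / A (j + 1)) (X / A j), be s m + ∑ m ∈ Ioc (Y / A (j + 1)) (Y / A j), be s m) := by
                rw [sum_add_distrib, TT]
                simp only [Pi.one_apply, mul_one]
                congr 1
                rw [sum_mul]
                exact sum_congr rfl fun d _ => by rw [mul_add, mul_sum, mul_sum]
            _ ≤ _ := by
                refine add_le_add le_rfl ?_
                rw [← mul_assoc]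
                refine mul_le_mul (sum_al_le b hts he1 (hA j.le_succ) hL0 (hL j hj)) (add_le_add ?_ ?_)
                  (add_nonneg ?_ ?_) (by positivity)
                · exact sum_be_le b hts he1 (hdiv X j)
                · exact sum_be_le b hts he1 (hdiv Y j)
                · exact sum_nonneg fun _ _ => be_nonneg _ _
                · exact sum_nonneg fun _ _ => be_nonneg _ _
  have hchain : ∀ w : ℕ → ℝ, TT X Y s w (Ioc (A 0) (A J)) = ∑ j ∈ range J, TT X Y s w (Ioc (A j) (A (j + 1))) :=
    fun w => sum_Ioc_chain A hA J _
  rw [hchain, hchain]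
  refine (sum_le_sum step).trans (le_of_eq ?_)
  rw [sum_add_distrib, ← mul_sum (range J), sum_add_distrib, ← mul_sum (range J), ← mul_sum (range J), ← mul_sum (range J)]
  rfl

/-! ### Counting good and rough integers -/

/-- The indicator of the classes to be sieved out: the zero class modulo each prime, and the bad
classes modulo the primes in `(Q₀, 2 ^ 2 ^ t)`. -/
noncomputable def fA (B : ℕ → ℕ → ℝ) (Q₀ t l n : ℕ) : ℝ :=
  if l ∣ n then 1 else if Q₀ < l ∧ l < 2 ^ 2 ^ t then B l n else 0

theorem fA_eq {D Q₀ : ℕ} {B : ℕ → ℕ → ℝ} (h : IsBad D Q₀ B) (t l n : ℕ) :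
    fA B Q₀ t l n = dvdf l n + if Q₀ < l ∧ l < 2 ^ 2 ^ t then B l n else 0 := by
  unfold fA dvdf
  split_ifs with h1 h2
  · rw [h.dvd l n h1, add_zero]
  · simp
  · simp
  · simp

theorem rho_fA {D Q₀ : ℕ} {B : ℕ → ℕ → ℝ} (h : IsBad D Q₀ B) (t : ℕ) {l : ℕ} (hl : l.Prime) :
    rho (fA B Q₀ t) l = 1 + if Q₀ < l ∧ l < 2 ^ 2 ^ t then rho B l else 0 := by
  unfold rho
  simp only [fA_eq h]
  rw [sum_add_distrib]
  congr 1
  · exact rho_dvdf hl.pos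
  · split_ifs
    · rfl
    · simp

theorem isSieve_fA {D Q₀ : ℕ} {B : ℕ → ℕ → ℝ} (h : IsBad D Q₀ B) (t : ℕ) : IsSieve (2 * D) Blk (fA B Q₀ t) where
  one_le := by have := h.one_le; omega
  sub _ := subset_rfl
  zo l n := by
    unfold fA
    split_ifs
    · exact Or.inr rfl
    · exact h.zo l n
    · exact Or.inl rfl
  per l n := by
    rw [fA_eq h, fA_eq h, dvdf_periodic l n, h.per l n]
  le i l hl := by
    have hD : (1 : ℝ) ≤ D := by exact_mod_cast h.one_le
    have hp := (mem_Blk.1 hl).2.1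
    rw [rho_fA h t hp]
    push_cast
    split_ifs with h1
    · have := h.le l hp h1.1; linarith
    · linarith
  half i l hl := by
    have hp := (mem_Blk.1 hl).2.1
    rw [rho_fA h t hp]
    split_ifs with h1
    · have := h.le l hp h1.1
      have h2 : (4 * (D + 1) : ℝ) ≤ Q₀ := by exact_mod_cast h.large
      have h3 : (Q₀ : ℝ) ≤ l := by exact_mod_cast h1.1.le
      linarith
    · have : (2 : ℝ) ≤ l := by exact_mod_cast hp.two_le
      linarith

theorem VV_fA {D Q₀ : ℕ} {B : ℕ → ℕ → ℝ} (h : IsBad D Q₀ B) {s t : ℕ} (hts : t ≤ s) :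
    VV Blk (fA B Q₀ t) s = VV Blk dvdf s * VH B Q₀ t := by
  have h1 : ∀ i, Vb Blk (fA B Q₀ t) i
      = Vb Blk dvdf i * if i < t then ∏ l ∈ PB Q₀ i, (1 - gg B l) else 1 := by
    intro i
    have h2 : (if i < t then ∏ l ∈ PB Q₀ i, (1 - gg B l) else 1)
        = ∏ l ∈ Blk i, if Q₀ < l ∧ l < 2 ^ 2 ^ t then 1 - gg B l else 1 := by
      split_ifs with hi
      · rw [PB, prod_filter]
        refine prod_congr rfl fun l hl => ?_
        have : l < 2 ^ 2 ^ t := (mem_Blk.1 hl).1.trans_le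
          (Nat.pow_le_pow_right (by norm_num) (Nat.pow_le_pow_right (by norm_num) hi))
        simp only [this, and_true]
      · refine (prod_eq_one fun l hl => if_neg fun hc => ?_).symm
        have : 2 ^ 2 ^ t ≤ 2 ^ 2 ^ i := Nat.pow_le_pow_right (by norm_num) (Nat.pow_le_pow_right (by norm_num) (not_lt.1 hi))
        have := (mem_Blk.1 hl).2.2
        omega
    rw [h2, Vb, Vb, ← prod_mul_distrib]
    refine prod_congr rfl fun l hl => ?_
    have hp := (mem_Blk.1 hl).2.1
    have h3 : (2 : ℝ) ≤ l := by exact_mod_cast hp.two_le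
    have h4 : (l : ℝ) - 1 ≠ 0 := by linarith
    rw [rho_fA h t hp, rho_dvdf hp.pos]
    split_ifs
    · rw [gg]; field_simp; ring
    · simp
  rw [VV, prod_congr rfl fun i _ => h1 i, prod_mul_distrib, VV, VH]
  congr 1
  rw [← prod_subset (range_subset_range.2 hts) (fun i _ hi => if_neg fun hc => hi (mem_range.2 hc))]
  exact prod_congr rfl fun i hi => if_pos (mem_range.1 hi)

open Classical in
theorem prod_fA {D Q₀ : ℕ} {B : ℕ → ℕ → ℝ} (h : IsBad D Q₀ B) {s t : ℕ} (hts : t ≤ s) (n : ℕ) :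
    ∏ i ∈ range s, ∏ l ∈ Blk i, (1 - fA B Q₀ t l n) = if Good B Q₀ s t n then 1 else 0 := by
  split_ifs with hg
  · refine prod_eq_one fun i hi => prod_eq_one fun l hl => ?_
    have hl' := mem_Blk.1 hl
    have hnd : ¬ l ∣ n := hg.1 l hl'.2.1 (hl'.1.trans_le
      (Nat.pow_le_pow_right (by norm_num) (Nat.pow_le_pow_right (by norm_num) (mem_range.1 hi))))
    rw [fA, if_neg hnd]
    split_ifs with hc
    · obtain ⟨j, hj, hlj⟩ := exists_Blk hl'.2.1 hc.2
      rw [hg.2 j hj l (mem_filter.2 ⟨hlj, hc.1⟩), sub_zero]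
    · exact sub_zero _
  · have : ∃ i < s, ∃ l ∈ Blk i, fA B Q₀ t l n = 1 := by
      unfold Good at hg
      rw [not_and_or] at hg
      rcases hg with hg | hg
      · unfold Rough at hg
        push Not at hg
        obtain ⟨l, hl, hlt, hd⟩ := hg
        obtain ⟨i, hi, hli⟩ := exists_Blk hl hlt
        exact ⟨i, hi, l, hli, if_pos hd⟩
      · push Not at hg
        obtain ⟨i, hi, l, hl, hB⟩ := hg
        obtain ⟨hl1, hl2⟩ := mem_filter.1 hl
        refine ⟨i, by omega, l, hl1, ?_⟩
        have hlt : l < 2 ^ 2 ^ t := (mem_Blk.1 hl1).1.trans_le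
          (Nat.pow_le_pow_right (by norm_num) (Nat.pow_le_pow_right (by norm_num) hi))
        rw [fA, if_neg fun hd => hB (h.dvd l n hd), if_pos ⟨hl2, hlt⟩]
        exact (h.zo l n).resolve_left hB
    obtain ⟨i, hi, l, hl, h1⟩ := this
    exact prod_eq_zero (mem_range.2 hi) (prod_eq_zero hl (by rw [h1, sub_self]))

open Classical in
/-- Lower bound sieve for the good integers, all primes below `2 ^ 2 ^ s` being sieved at once. -/
theorem card_good_ge {D Q₀ : ℕ} {B : ℕ → ℕ → ℝ} (h : IsBad D Q₀ B) (b : ℕ) {s t : ℕ} (hts : t ≤ s)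
    (he : eps (2 * D) b ≤ 1) {X Y : ℕ} (hXY : X ≤ Y) :
    ((Y : ℝ) - X) * ((1 - eps (2 * D) b) * (VV Blk dvdf s * VH B Q₀ t)) - ((2 : ℝ) ^ 2 ^ s) ^ (Cx (2 * D) b + 1)
      ≤ ∑ n ∈ Ioc X Y with Good B Q₀ s t n, (1 : ℝ) := by
  have := (isSieve_fA h t).lower b s he hXY
  rw [VV_fA h hts] at this
  refine this.trans (le_of_eq ?_)
  rw [sum_filter]
  exact sum_congr rfl fun n _ => prod_fA h hts n

theorem prod_dvdf_of_rough {s n : ℕ} (hr : Rough s n) : ∏ i ∈ range s, ∏ l ∈ Blk i, (1 - dvdf l n) = 1 :=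
  prod_eq_one fun i hi => prod_eq_one fun l hl => by rw [dvdf_of_rough hr (mem_range.1 hi) hl, sub_zero]

open Classical in
/-- Upper bound sieve for the rough integers, with the asymptotically correct constant. -/
theorem card_rough_le' (b s : ℕ) (he : eps 1 b ≤ 1) {X Y : ℕ} (hXY : X ≤ Y) :
    (∑ n ∈ Ioc X Y, if Rough s n then (1 : ℝ) else 0)
      ≤ ((Y : ℝ) - X) * ((1 + eps 1 b) * VV Blk dvdf s) + ((2 : ℝ) ^ 2 ^ s) ^ Cx 1 b := by
  refine le_trans (sum_le_sum fun n _ => ?_) (isSieve_dvdf.upper_one b s he hXY)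
  split_ifs with hr
  · exact (prod_dvdf_of_rough hr).ge
  · refine prod_nonneg fun i _ => prod_nonneg fun l _ => ?_
    unfold dvdf
    split_ifs <;> norm_num

/-! ### Geometric subdivision -/

/-- A sequence growing by a factor of about `1 + 1 / M` at each step; it cuts the range of the
variable `d` into short intervals. -/
def Aseq (M A₀ : ℕ) : ℕ → ℕ
  | 0 => A₀
  | j + 1 => Aseq M A₀ j + Aseq M A₀ j / M

theorem Aseq_mono (M A₀ : ℕ) : Monotone (Aseq M A₀) := monotone_nat_of_le_succ fun _ => Nat.le_add_right _ _

theorem le_Aseq (M A₀ j : ℕ) : A₀ ≤ Aseq M A₀ j := Aseq_mono M A₀ (Nat.zero_le j)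

theorem Aseq_ge {M A₀ : ℕ} (hM : 1 ≤ M) (h0 : 2 * M ≤ A₀) (j : ℕ) :
    (1 + 1 / (2 * M : ℝ)) ^ j ≤ Aseq M A₀ j := by
  induction j with
  | zero =>
    have : 1 ≤ A₀ := by omega
    simpa [Aseq] using (by exact_mod_cast this : (1 : ℝ) ≤ A₀)
  | succ j ih =>
    have hM' : (1 : ℝ) ≤ M := by exact_mod_cast hM
    have h1 : (2 * M : ℝ) ≤ Aseq M A₀ j := by exact_mod_cast h0.trans (le_Aseq M A₀ j)
    have h2 : (Aseq M A₀ j : ℝ) / M - 1 ≤ (Aseq M A₀ j / M : ℕ) := by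
      have := Nat.lt_div_mul_add (a := Aseq M A₀ j) (b := M) (by omega)
      have h3 : (Aseq M A₀ j : ℝ) < (Aseq M A₀ j / M : ℕ) * M + M := by exact_mod_cast this
      rw [sub_le_iff_le_add, div_le_iff₀ (by linarith)]
      linarith
    rw [pow_succ, Aseq, Nat.cast_add]
    calc _ ≤ (Aseq M A₀ j : ℝ) * (1 + 1 / (2 * M)) := by gcongr
      _ ≤ Aseq M A₀ j + ((Aseq M A₀ j : ℝ) / M - 1) := by
        have : (Aseq M A₀ j : ℝ) / M = 2 * ((Aseq M A₀ j : ℝ) * (1 / (2 * M))) := by field_simp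
        have h4 : 1 ≤ (Aseq M A₀ j : ℝ) * (1 / (2 * M)) := by
          rw [mul_one_div, le_div_iff₀ (by linarith)]; linarith
        rw [this]; linarith
      _ ≤ _ := by linarith

/-- Cutting `(A₀, Y / y)` takes `O(M log Y)` steps. -/
theorem exists_J {M A₀ Y y : ℕ} (hM : 1 ≤ M) (h0 : 2 * M ≤ A₀) (hy : 2 ≤ y) (hA : A₀ ≤ Y) :
    ∃ J, Y < (Aseq M A₀ J + 1) * y ∧ (∀ j < J, Aseq M A₀ j * y ≤ Y) ∧ Aseq M A₀ J ≤ Y ∧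
      (J : ℝ) ≤ 1 + 4 * M * Real.log Y := by
  classical
  have hM' : (1 : ℝ) ≤ M := by exact_mod_cast hM
  have hex : ∃ J, Y < (Aseq M A₀ J + 1) * y := by
    obtain ⟨J, hJ⟩ := pow_unbounded_of_one_lt (Y : ℝ) (show 1 < 1 + 1 / (2 * M : ℝ) by
      have : 0 < 1 / (2 * M : ℝ) := by positivity
      linarith)
    refine ⟨J, ?_⟩
    have : Y < Aseq M A₀ J := by exact_mod_cast hJ.trans_le (Aseq_ge hM h0 J)
    nlinarith
  refine ⟨Nat.find hex, Nat.find_spec hex, fun j hj => ?_, ?_, ?_⟩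
  · have := not_lt.1 (Nat.find_min hex hj)
    nlinarith
  · rcases hJ : Nat.find hex with _ | j
    · exact hA
    · have h1 := not_lt.1 (Nat.find_min hex (hJ ▸ j.lt_succ_self : j < Nat.find hex))
      have h2 : Aseq M A₀ j / M ≤ Aseq M A₀ j := Nat.div_le_self _ _
      rw [Aseq]
      nlinarith
  · rcases hJ : Nat.find hex with _ | j
    · have := Real.log_natCast_nonneg Y
      simp only [Nat.cast_zero]; positivity
    · have h1 := not_lt.1 (Nat.find_min hex (hJ ▸ j.lt_succ_self : j < Nat.find hex))
      have h2 : Aseq M A₀ j ≤ Y := by nlinarith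
      have h3 : (1 + 1 / (2 * M : ℝ)) ^ j ≤ Y := (Aseq_ge hM h0 j).trans (by exact_mod_cast h2)
      have h4 : j * Real.log (1 + 1 / (2 * M : ℝ)) ≤ Real.log Y := by
        rw [← Real.log_pow]
        exact Real.log_le_log (by positivity) h3
      have h5 : 1 / (4 * M : ℝ) ≤ Real.log (1 + 1 / (2 * M : ℝ)) := by
        have := Real.one_sub_inv_le_log_of_pos (show 0 < 1 + 1 / (2 * M : ℝ) by positivity)
        refine le_trans ?_ this
        have e : 1 - (1 + 1 / (2 * M : ℝ))⁻¹ = 1 / (2 * M + 1) := by field_simp; ring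
        rw [e]
        exact one_div_le_one_div_of_le (by linarith) (by linarith)
      have h6 : (j : ℝ) * (1 / (4 * M : ℝ)) ≤ Real.log Y := le_trans (by gcongr) h4
      rw [mul_one_div, div_le_iff₀ (by linarith)] at h6
      push_cast
      linarith

theorem natCast_div_sub_le (Z : ℕ) {a a' : ℕ} (ha : 0 < a) (haa : a ≤ a') :
    ((Z / a : ℕ) : ℝ) - (Z / a' : ℕ) ≤ Z * (a' - a) / (a * a') + 1 := by
  have ha' : 0 < a' := by omega
  have h1 : ((Z / a : ℕ) : ℝ) ≤ Z / a := Nat.cast_div_le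
  have h2 : (Z : ℝ) / a' - 1 ≤ (Z / a' : ℕ) := by
    have := Nat.lt_div_mul_add (a := Z) (b := a') ha'
    have h3 : (Z : ℝ) < (Z / a' : ℕ) * a' + a' := by exact_mod_cast this
    have : (0 : ℝ) < a' := by exact_mod_cast ha'
    rw [sub_le_iff_le_add, div_le_iff₀ this]
    linarith
  have h3 : (Z : ℝ) * (a' - a) / (a * a') = Z / a - Z / a' := by
    have : (a : ℝ) ≠ 0 := by exact_mod_cast ha.ne'
    have : (a' : ℝ) ≠ 0 := by exact_mod_cast ha'.ne'
    field_simp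
  rw [h3]; linarith

section bounds

variable {b t M A₀ X Y y J : ℕ} {lam w : ℝ} (hlam : lam = Real.log (2 ^ 2 ^ t)) (h1 : 1 ≤ lam)
  (hw : w = 2 * ((2 : ℝ) ^ 2 ^ t) ^ (3 * Cx 1 b)) (hwy : 8 * M * lam * w ≤ y) (hM : 1 ≤ M) (hXY : X ≤ Y)
  (hA0 : 0 < A₀) (hA0y : y ≤ 2 * A₀) (hJ : ∀ j < J, Aseq M A₀ j * y ≤ Y)
include hlam h1 hw hwy hM hXY hA0 hA0y hJ

omit hwy hM hXY hA0 hA0y hJ in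
/-- For intervals that are not too short, the large sieve constant is `O(length / log z)`. -/
theorem NN_le {A B : ℕ} {u : ℝ} (hAB : A ≤ B) (hu : (B : ℝ) - A ≤ u + 1) (hwu : 4 * w * lam ≤ u) : NN b t A B ≤ 3 * u / lam := by
  have hw2 : 2 ≤ w := by
    have : 1 ≤ ((2 : ℝ) ^ 2 ^ t) ^ (3 * Cx 1 b) := one_le_pow₀ (one_le_pow₀ (by norm_num))
    rw [hw]; linarith
  have hV : VV Blk dvdf t ≤ 1 / lam := hlam ▸ VV_dvdf_le t
  have h2 : (A : ℝ) ≤ B := by exact_mod_cast hAB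
  have h3 : ((B : ℝ) - A) * (2 * VV Blk dvdf t) ≤ (u + 1) * (2 * (1 / lam)) :=
    mul_le_mul hu (by linarith) (by linarith [VV_dvdf_nonneg t]) (by linarith)
  rw [NN, ← hw]
  refine (add_le_add h3 le_rfl).trans ?_
  rw [le_div_iff₀ (by linarith)]
  have : (u + 1) * (2 * (1 / lam)) * lam = 2 * (u + 1) := by field_simp
  rw [add_mul, this]
  nlinarith

theorem over_bil_le : Over b t X Y (Aseq M A₀) J ≤ J * (18 * Y / (M ^ 2 * lam ^ 2)) ∧
    Bil b t X Y (Aseq M A₀) J ≤ J * (9 * Y / (M * lam ^ 2)) := by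
  have hM' : (1 : ℝ) ≤ M := by exact_mod_cast hM
  have hw2 : 2 ≤ w := by
    have : 1 ≤ ((2 : ℝ) ^ 2 ^ t) ^ (3 * Cx 1 b) := one_le_pow₀ (one_le_pow₀ (by norm_num))
    rw [hw]; linarith
  have key : ∀ j ∈ range J, NN b t (Aseq M A₀ j) (Aseq M A₀ (j + 1)) ≤ 3 * ((Aseq M A₀ j : ℝ) / M) / lam ∧
      NN b t (X / Aseq M A₀ (j + 1)) (X / Aseq M A₀ j) ≤ 3 * ((Y : ℝ) / (M * Aseq M A₀ j)) / lam ∧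
      NN b t (Y / Aseq M A₀ (j + 1)) (Y / Aseq M A₀ j) ≤ 3 * ((Y : ℝ) / (M * Aseq M A₀ j)) / lam ∧
      NN b t (X / Aseq M A₀ (j + 1)) (Y / Aseq M A₀ j) ≤ 3 * ((Y : ℝ) / Aseq M A₀ j) / lam := by
    intro j hj
    have hj := hJ j (mem_range.1 hj)
    set a := Aseq M A₀ j with ha
    have haa : a ≤ Aseq M A₀ (j + 1) := Aseq_mono M A₀ j.le_succ
    have ha0 : 0 < a := hA0.trans_le (le_Aseq M A₀ j)
    have hay : (y : ℝ) ≤ 2 * a := by exact_mod_cast hA0y.trans (Nat.mul_le_mul_left 2 (le_Aseq M A₀ j))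
    have ha' : (0 : ℝ) < a := by exact_mod_cast ha0
    have hjr : (a : ℝ) * y ≤ Y := by exact_mod_cast hj
    have hstep : ((Aseq M A₀ (j + 1) : ℕ) : ℝ) - a ≤ a / M := by
      rw [Aseq, ← ha, Nat.cast_add, add_sub_cancel_left]
      exact Nat.cast_div_le
    have hw1 : 4 * w * lam ≤ (a : ℝ) / M := by
      rw [le_div_iff₀ (by linarith)]
      nlinarith
    have hw2' : 4 * w * lam ≤ (Y : ℝ) / (M * a) := by
      rw [le_div_iff₀ (by positivity)]
      have hwl : 0 ≤ 8 * M * lam * w := by positivity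
      calc 4 * w * lam * (M * a) ≤ (8 * M * lam * w) * a := by nlinarith
        _ ≤ y * a := by gcongr
        _ ≤ Y := by linarith
    have hw3 : 4 * w * lam ≤ (Y : ℝ) / a := hw2'.trans (by
      apply div_le_div_of_nonneg_left (Nat.cast_nonneg _) ha'
      nlinarith)
    have hshort : ∀ Z ≤ Y, ((Z / a : ℕ) : ℝ) - (Z / Aseq M A₀ (j + 1) : ℕ) ≤ (Y : ℝ) / (M * a) + 1 := by
      intro Z hZ
      refine (natCast_div_sub_le Z ha0 haa).trans (add_le_add ?_ le_rfl)
      have hZ' : (Z : ℝ) ≤ Y := by exact_mod_cast hZ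
      have haa' : (a : ℝ) ≤ Aseq M A₀ (j + 1) := by exact_mod_cast haa
      calc (Z : ℝ) * (Aseq M A₀ (j + 1) - a) / (a * Aseq M A₀ (j + 1)) ≤ Y * (a / M) / (a * a) := by gcongr
        _ = _ := by field_simp
    refine ⟨NN_le hlam h1 hw haa (by linarith) hw1,
      NN_le hlam h1 hw (Nat.div_le_div_left haa ha0) (hshort X hXY) hw2',
      NN_le hlam h1 hw (Nat.div_le_div_left haa ha0) (hshort Y le_rfl) hw2',
      NN_le hlam h1 hw ((Nat.div_le_div_right hXY).trans (Nat.div_le_div_left haa ha0)) ?_ hw3⟩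
    have e1 : ((Y / a : ℕ) : ℝ) ≤ Y / a := Nat.cast_div_le
    have e2 : (0 : ℝ) ≤ (X / Aseq M A₀ (j + 1) : ℕ) := Nat.cast_nonneg _
    linarith
  have hdiv : ∀ Z j, Z / Aseq M A₀ (j + 1) ≤ Z / Aseq M A₀ j := fun Z j =>
    Nat.div_le_div_left (Aseq_mono M A₀ j.le_succ) (hA0.trans_le (le_Aseq M A₀ j))
  have hapos : ∀ j, (0 : ℝ) < Aseq M A₀ j := fun j => by exact_mod_cast hA0.trans_le (le_Aseq M A₀ j)
  constructor
  · rw [Over]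
    refine (sum_le_card_nsmul (range J) _ (18 * Y / (M ^ 2 * lam ^ 2)) fun j hj => ?_).trans_eq
      (by rw [card_range, nsmul_eq_mul])
    obtain ⟨k1, k2, k3, k4⟩ := key j hj
    have := hapos j
    calc _ ≤ (3 * ((Aseq M A₀ j : ℝ) / M) / lam) * (3 * ((Y : ℝ) / (M * Aseq M A₀ j)) / lam + 3 * ((Y : ℝ) / (M * Aseq M A₀ j)) / lam) :=
          mul_le_mul k1 (add_le_add k2 k3) (add_nonneg (NN_nonneg b t (hdiv X j)) (NN_nonneg b t (hdiv Y j))) (by positivity)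
      _ = _ := by field_simp; ring
  · rw [Bil]
    refine (sum_le_card_nsmul (range J) _ (9 * Y / (M * lam ^ 2)) fun j hj => ?_).trans_eq
      (by rw [card_range, nsmul_eq_mul])
    obtain ⟨k1, k2, k3, k4⟩ := key j hj
    have := hapos j
    calc _ ≤ (3 * ((Aseq M A₀ j : ℝ) / M) / lam) * (3 * ((Y : ℝ) / Aseq M A₀ j) / lam) :=
          mul_le_mul k1 k4 (NN_nonneg b t ((Nat.div_le_div_right hXY).trans (hdiv Y j))) (by positivity)
      _ = _ := by field_simp; ring

end bounds

/-! ### Primes avoiding the bad classes -/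

theorem eps_one_le {D : ℕ} (hD : 1 ≤ D) (b : ℕ) : eps 1 b ≤ eps (2 * D) b := by
  unfold eps
  have : (1 : ℝ) ≤ D := by exact_mod_cast hD
  refine mul_le_mul_of_nonneg_right (Real.exp_le_exp.2 ?_) (by positivity)
  push_cast; linarith

/-- The main terms `VH * log X * (number of rough integers)` of the lower bound `N` and the upper bound
`TΘ` cancel up to a relative error `ε`, which is small compared to `1 / E`; what remains is
`VH * θ ≥ VH * X / 5`, less the errors. -/
theorem final_arith {L0 L N R V VH ε X Z E S TΘ T1 θ Ov Bl : ℝ}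
    (hV0 : 0 ≤ V) (hVH0 : 0 ≤ VH) (hVH1 : VH ≤ 1) (hε0 : 0 ≤ ε) (hX0 : 0 ≤ X) (hZ0 : 0 ≤ Z)
    (hL0 : 0 ≤ L0) (hLL : L ≤ L0 + 1) (hL0L : L0 ≤ L)
    (g1 : L0 * N - TΘ ≤ S) (g2 : TΘ ≤ (1 + ε) * VH * (T1 + Ov) + VH * Bl)
    (g3 : T1 ≤ L * R - θ) (g4 : X * ((1 - ε) * (V * VH)) - Z ≤ N) (g5 : R ≤ X * ((1 + ε) * V) + Z)
    (g6 : X / 5 ≤ θ) (hv : V * L0 ≤ 2 * E) (hV : V ≤ 1 / 400) (hε : 8 * ε * E ≤ 1 / 100) (hE : 1 ≤ E)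
    (hOv : Ov ≤ X / 400) (hBl : Bl ≤ X / 100) (hZ : 3 * L * Z ≤ VH * X / 100) : VH * X / 10 ≤ S := by
  have hε1 : ε ≤ 1 / 100 := by
    have := mul_le_mul_of_nonneg_left hE hε0
    linarith
  have hL : 0 ≤ L := by linarith
  obtain ⟨P, hP⟩ : ∃ P, P = VH * X := ⟨_, rfl⟩
  have hP0 : 0 ≤ P := hP ▸ mul_nonneg hVH0 hX0
  rw [← hP] at hZ ⊢
  have a1 : P * ((1 - ε) * (V * L0)) - L0 * Z ≤ L0 * N := by
    have := mul_le_mul_of_nonneg_left g4 hL0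
    calc _ = L0 * (X * ((1 - ε) * (V * VH)) - Z) := by rw [hP]; ring
      _ ≤ _ := this
  have a2 : (1 + ε) * VH * (T1 + Ov) ≤ P * ((1 + ε) ^ 2 * (V * L)) + 2 * L * Z - P / 5 + P / 200 := by
    have h1 : T1 + Ov ≤ L * (X * ((1 + ε) * V) + Z) - X / 5 + X / 400 := by
      have := mul_le_mul_of_nonneg_left g5 hL
      linarith
    have h2 := mul_le_mul_of_nonneg_left h1 (show 0 ≤ (1 + ε) * VH by positivity)
    refine h2.trans ?_
    have h3 : (1 + ε) * VH * (L * Z) ≤ 2 * (L * Z) := by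
      refine mul_le_mul_of_nonneg_right ?_ (by positivity)
      calc (1 + ε) * VH ≤ (1 + ε) * 1 := mul_le_mul_of_nonneg_left hVH1 (by linarith)
        _ ≤ 2 := by linarith
    have h4 : 0 ≤ ε * P := by positivity
    have h5 : ε * P ≤ P := mul_le_of_le_one_left hP0 (by linarith)
    have : (1 + ε) * VH * (L * (X * ((1 + ε) * V) + Z) - X / 5 + X / 400)
        = P * ((1 + ε) ^ 2 * (V * L)) + (1 + ε) * VH * (L * Z) - (P + ε * P) * (1 / 5 - 1 / 400) := by rw [hP]; ring
    rw [this]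
    linarith
  have a3 : VH * Bl ≤ P / 100 := by
    have := mul_le_mul_of_nonneg_left hBl hVH0
    rw [hP]; linarith
  have a4 : -(2 / 100 + 1 / 50) ≤ (1 - ε) * (V * L0) - (1 + ε) ^ 2 * (V * L) := by
    have h1 : V * L ≤ V * L0 + V := by
      have := mul_le_mul_of_nonneg_left hLL hV0
      linarith
    have h0 : ε * ε ≤ ε * 1 := mul_le_mul_of_nonneg_left (by linarith) hε0
    have h2 : (1 + ε) ^ 2 ≤ 1 + 3 * ε := by linarith [show (1 + ε) ^ 2 = 1 + 2 * ε + ε * ε by ring]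
    have hv0 : 0 ≤ V * L0 := by positivity
    have h3 : (1 + ε) ^ 2 * (V * L) ≤ (1 + 3 * ε) * (V * L0 + V) :=
      mul_le_mul h2 h1 (by positivity) (by positivity)
    have h4 : ε * (V * L0) ≤ ε * (2 * E) := mul_le_mul_of_nonneg_left hv hε0
    have h5 : (1 + 3 * ε) * V ≤ 4 * (1 / 400) :=
      mul_le_mul (by linarith) hV hV0 (by norm_num)
    have h6 : (1 - ε) * (V * L0) - (1 + 3 * ε) * (V * L0 + V) = -(4 * (ε * (V * L0))) - (1 + 3 * ε) * V := by ring
    linarith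
  have a5 := mul_le_mul_of_nonneg_left a4 hP0
  have a6 : L0 * Z ≤ L * Z := mul_le_mul_of_nonneg_right hL0L hZ0
  have a7 : P * ((1 - ε) * (V * L0) - (1 + ε) ^ 2 * (V * L)) =
    P * ((1 - ε) * (V * L0)) - P * ((1 + ε) ^ 2 * (V * L)) := by ring
  have a8 : 3 * L * Z = 3 * (L * Z) := by ring
  have a9 : 2 * L * Z = 2 * (L * Z) := by ring
  linarith

theorem VH_le_one {D Q₀ : ℕ} {B : ℕ → ℕ → ℝ} (h : IsBad D Q₀ B) (t : ℕ) : VH B Q₀ t ≤ 1 := by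
  refine prod_le_one (fun i _ => (h.VHb_pos i).le) fun i _ => prod_le_one (fun l hl => ?_) fun l hl => ?_
  · linarith [(h.block i).2.1 l hl]
  · linarith [(h.block i).1 l hl]

/-- A crude lower bound for the density, a fixed power of `log z`, used to absorb error terms only. -/
theorem VH_ge {D Q₀ : ℕ} {B : ℕ → ℕ → ℝ} (h : IsBad D Q₀ B) (t : ℕ) :
    (((2 : ℝ) ^ t) ^ (32 * D))⁻¹ ≤ VH B Q₀ t := by
  have h1 : ((2 : ℝ) ^ (32 * D))⁻¹ ≤ Real.exp (-(8 * (2 * D : ℕ))) := by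
    rw [Real.exp_neg]
    refine inv_anti₀ (Real.exp_pos _) ?_
    have : Real.exp 1 ≤ 4 := by linarith [Real.exp_one_lt_d9]
    calc Real.exp (8 * (2 * D : ℕ)) = Real.exp 1 ^ (16 * D) := by rw [← Real.exp_nat_mul]; push_cast; ring_nf
      _ ≤ 4 ^ (16 * D) := by gcongr
      _ = 2 ^ (32 * D) := by rw [show (4 : ℝ) = 2 ^ 2 by norm_num, ← pow_mul]; ring_nf
  calc _ = ∏ _i ∈ range t, ((2 : ℝ) ^ (32 * D))⁻¹ := by
        rw [prod_const, card_range, inv_pow, ← pow_mul, ← pow_mul, mul_comm]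
    _ ≤ _ := prod_le_prod (fun _ _ => by positivity) fun i _ =>
        h1.trans (exp_le_prod_one_sub (h.block i).1 (h.block i).2.1 (h.block i).2.2)

/-- The sieve parameter `b` can be chosen with the relative error small compared to the sifting exponent. -/
theorem exists_b (κ : ℕ) : ∃ b, 8 * eps κ b * (2 * (Cx κ b + 1) : ℕ) ≤ 1 / 100 := by
  have h1 : Filter.Tendsto (fun b : ℕ => (b : ℝ) ^ 1 * (1 / 64 : ℝ) ^ b) Filter.atTop (nhds 0) :=
    tendsto_pow_const_mul_const_pow_of_abs_lt_one 1 (by rw [abs_of_pos] <;> norm_num)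
  have h2 : Filter.Tendsto (fun b : ℕ => (1 / 64 : ℝ) ^ b) Filter.atTop (nhds 0) :=
    tendsto_pow_atTop_nhds_zero_of_lt_one (by norm_num) (by norm_num)
  have h3 := (h1.const_mul (16 * Real.exp (40 * κ) * (κ + 1) * 4)).add
    (h2.const_mul (16 * Real.exp (40 * κ) * ((κ + 1) * 6 + 1)))
  rw [mul_zero, mul_zero, add_zero] at h3
  obtain ⟨b, hb⟩ := (h3.eventually (ge_mem_nhds (show (0 : ℝ) < 1 / 100 by norm_num))).exists
  refine ⟨b, le_trans (le_of_eq ?_) hb⟩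
  rw [eps, Cx]; push_cast; ring

theorem exists_t (K : ℝ) (k : ℕ) : ∃ t₀, ∀ t ≥ t₀, K * ((2 : ℝ) ^ t) ^ k ≤ (2 : ℝ) ^ 2 ^ t := by
  have h1 : Filter.Tendsto (fun n : ℕ => (n : ℝ) ^ k / (2 : ℝ) ^ n) Filter.atTop (nhds 0) :=
    tendsto_pow_const_div_const_pow_of_one_lt k (by norm_num)
  have h2 := (h1.comp (tendsto_pow_atTop_atTop_of_one_lt (show (1 : ℕ) < 2 by norm_num))).const_mul K
  rw [mul_zero] at h2
  obtain ⟨t₀, ht⟩ := Filter.eventually_atTop.1 (h2.eventually (ge_mem_nhds (show (0 : ℝ) < 1 by norm_num)))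
  refine ⟨t₀, fun t htt => ?_⟩
  have := ht t htt
  simp only [Function.comp] at this
  rw [← mul_div_assoc, div_le_one (by positivity)] at this
  push_cast at this
  exact this

/-- The number of boxes is `O(M log X)`; hence the total boundary error is `O(X / (M log X))`, and
the total bilinear error is `O(X / log X)` before multiplication by `δ`. -/
theorem box_arith {L lam J F W M δ X OV BL : ℝ} (hL0 : 0 ≤ L) (hlam : 0 < lam) (hL : L ≤ 4 * F * lam)
    (hW : W = F ^ 2) (hW0 : 0 < W) (hM : M = 1440000 * W) (hδ : δ = 1 / (360000 * W)) (hX : 0 ≤ X)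
    (hJ : J ≤ 6 * M * L) (hO : OV ≤ J * (18 * (2 * X) / (M ^ 2 * lam ^ 2)))
    (hB : BL ≤ J * (9 * (2 * X) / (M * lam ^ 2))) : L * OV ≤ X / 400 ∧ 2 * δ * (L * BL) ≤ X / 100 := by
  have hM0 : 0 < M := by rw [hM]; positivity
  have hδ0 : 0 < δ := by rw [hδ]; positivity
  have hq : L ^ 2 / lam ^ 2 ≤ 16 * W := by
    rw [div_le_iff₀ (by positivity), hW]
    calc L ^ 2 ≤ (4 * F * lam) ^ 2 := pow_le_pow_left₀ hL0 hL 2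
      _ = _ := by ring
  constructor
  · calc L * OV ≤ L * (6 * M * L * (18 * (2 * X) / (M ^ 2 * lam ^ 2))) :=
          mul_le_mul_of_nonneg_left (hO.trans (mul_le_mul_of_nonneg_right hJ (by positivity))) hL0
      _ = (L ^ 2 / lam ^ 2) * (216 * X / M) := by field_simp; ring
      _ ≤ 16 * W * (216 * X / M) := mul_le_mul_of_nonneg_right hq (by positivity)
      _ = X * (3456 / 1440000) := by rw [hM]; field_simp; ring
      _ ≤ _ := by linarith
  · calc 2 * δ * (L * BL) ≤ 2 * δ * (L * (6 * M * L * (9 * (2 * X) / (M * lam ^ 2)))) :=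
          mul_le_mul_of_nonneg_left (mul_le_mul_of_nonneg_left
            (hB.trans (mul_le_mul_of_nonneg_right hJ (by positivity))) hL0) (by positivity)
      _ = δ * ((L ^ 2 / lam ^ 2) * (216 * X)) := by field_simp; ring
      _ ≤ δ * (16 * W * (216 * X)) := mul_le_mul_of_nonneg_left
          (mul_le_mul_of_nonneg_right hq (by positivity)) hδ0.le
      _ = X * (3456 / 360000) := by rw [hδ]; field_simp; ring
      _ ≤ _ := by linarith

set_option maxHeartbeats 1000000 in
open Classical in
/-- Lower bound for the primes in `(X, 2 X]` avoiding the bad classes, weighted by the von Mangoldt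
function. The parameters are the sifting levels `z = 2 ^ 2 ^ t` for the bad classes and
`y = 2 ^ 2 ^ (t + a) = z ^ 2 ^ a` for the roughness, and `X` lies between `y ^ E` and `y ^ (2 * E)`. -/
theorem main_lower (D : ℕ) (hD : 1 ≤ D) : ∃ a b E Q₁ : ℕ, 2 ≤ E ∧ eps (2 * D) b ≤ 1 ∧
    Cx (2 * D) b + 2 ≤ E ∧ ∀ Q₀ ≥ Q₁, ∃ t₀, ∀ B, IsBad D Q₀ B →
    ∀ t ≥ t₀, ∀ X : ℕ, (2 ^ 2 ^ (t + a)) ^ E ≤ X → X < (2 ^ 2 ^ (t + a)) ^ (2 * E) →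
      VH B Q₀ t * X / 10 ≤ ∑ n ∈ Ioc X (2 * X) with Good B Q₀ (t + a) t n, ArithmeticFunction.vonMangoldt n := by
  obtain ⟨b, hb⟩ := exists_b (2 * D)
  obtain ⟨C, hC⟩ : ∃ C, C = Cx (2 * D) b := ⟨_, rfl⟩
  rw [← hC] at hb
  -- `E` makes `X` exceed the error terms of the sieve, which are powers of `y`; `a` makes all boxes
  -- longer than the error terms of the large sieve, which are powers of `z`.
  obtain ⟨E, hE⟩ : ∃ E, E = 2 * (C + 1) := ⟨_, rfl⟩
  rw [← hE] at hb
  obtain ⟨a, ha⟩ : ∃ a, a = 3 * Cx 1 b + 2 := ⟨_, rfl⟩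
  -- `W` is of the order of `(log X / log z) ^ 2`; the fineness `M` of the subdivision and the gain `δ`
  -- from the lower bound on `Q₀` have to beat it.
  obtain ⟨W, hW⟩ : ∃ W, W = E ^ 2 * 4 ^ a := ⟨_, rfl⟩
  obtain ⟨M, hM⟩ : ∃ M, M = 1440000 * W := ⟨_, rfl⟩
  have hE1 : 2 ≤ E := by omega
  have hW1 : 1 ≤ W := by
    rw [hW]; exact Nat.one_le_iff_ne_zero.2 (by positivity)
  have hW1' : (1 : ℝ) ≤ W := by exact_mod_cast hW1
  obtain ⟨δ, hδ⟩ : ∃ δ : ℝ, δ = 1 / (360000 * W) := ⟨_, rfl⟩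
  have hδ0 : 0 < δ := by rw [hδ]; positivity
  have hδ1 : δ ≤ 1 := by rw [hδ, div_le_one (by positivity)]; linarith
  obtain ⟨Q₁, hQ₁⟩ := exists_nat_ge (Real.exp (12 * (2 * D : ℕ)) * (4 * D) / δ)
  obtain ⟨N₀, hN₀⟩ := theta_two_mul_sub_ge
  obtain ⟨t₁, ht₁⟩ := exists_t (300 * (4 * E * 2 ^ a)) (32 * D + 1)
  have he1 : eps (2 * D) b ≤ 1 := by
    have h1 : (1 : ℝ) ≤ E := by exact_mod_cast (by omega : 1 ≤ E)
    have h2 := mul_le_mul_of_nonneg_left h1 (eps_pos (2 * D) b).le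
    linarith
  refine ⟨a, b, E, Q₁ + 1, hE1, he1, by omega, fun Q₀ hQ₀ => ⟨t₁ + N₀ + 16 * M + 1000, fun B h t ht X hX1 hX2 => ?_⟩⟩
  have hδQ : Real.exp (12 * (2 * D : ℕ)) * (4 * D / Q₀) ≤ δ := by
    have h1 : (Q₁ : ℝ) + 1 ≤ Q₀ := by exact_mod_cast hQ₀
    have h2 : (0 : ℝ) < Q₀ := by have : (0 : ℝ) ≤ Q₁ := Nat.cast_nonneg _; linarith
    rw [← mul_div_assoc, div_le_iff₀ h2]
    rw [div_le_iff₀ hδ0] at hQ₁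
    have h3 := mul_le_mul_of_nonneg_right h1 hδ0.le
    linarith
  obtain ⟨s, hs⟩ : ∃ s, s = t + a := ⟨_, rfl⟩
  rw [← hs] at hX1 hX2 ⊢
  have hts : t ≤ s := by omega
  obtain ⟨y, hy⟩ : ∃ y : ℕ, y = 2 ^ 2 ^ s := ⟨_, rfl⟩
  rw [← hy] at hX1 hX2
  obtain ⟨z, hz⟩ : ∃ z : ℕ, z = 2 ^ 2 ^ t := ⟨_, rfl⟩
  have hyz : y = z ^ 2 ^ a := by rw [hy, hz, ← pow_mul, ← pow_add, hs]
  have hzt : t ≤ z := hz ▸ (Nat.lt_two_pow_self.trans Nat.lt_two_pow_self).le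
  have hz1 : 1 ≤ z := hz ▸ Nat.one_le_two_pow
  have hzy : z ≤ y := by rw [hyz]; exact Nat.le_self_pow (by positivity) z
  have hy1 : 1 ≤ y := hz1.trans hzy
  have hyX : y ≤ X := (Nat.le_self_pow (by omega) y).trans hX1
  -- `log X`, `log y` and `log z` have the same order of magnitude.
  obtain ⟨lam, hlam⟩ : ∃ lam : ℝ, lam = Real.log (2 ^ 2 ^ t) := ⟨_, rfl⟩
  have hlam' : lam = 2 ^ t * Real.log 2 := by rw [hlam, Real.log_pow]; push_cast; rfl
  have hlamt : (t : ℝ) / 2 ≤ lam := by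
    have h1 : (t : ℝ) ≤ 2 ^ t := by exact_mod_cast Nat.lt_two_pow_self.le
    have := Real.log_two_gt_d9
    rw [hlam', div_eq_mul_one_div]
    exact mul_le_mul h1 (by linarith) (by norm_num) (by positivity)
  have ht1000 : (1000 : ℝ) ≤ t := by exact_mod_cast (by omega : 1000 ≤ t)
  have hlam400 : 400 ≤ lam := by linarith
  have hlamu : lam ≤ 2 ^ t := by
    have := Real.log_two_lt_d9
    rw [hlam']
    exact mul_le_of_le_one_right (by positivity) (by linarith)
  have hlamz : lam ≤ z := by
    have : ((2 ^ t : ℕ) : ℝ) ≤ z := by rw [hz]; exact_mod_cast Nat.lt_two_pow_self.le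
    push_cast at this
    linarith
  have hlogy : Real.log (2 ^ 2 ^ s) = 2 ^ a * lam := by
    rw [hlam, Real.log_pow, Real.log_pow, hs, pow_add]; push_cast; ring
  have hX0 : (0 : ℝ) < X := by exact_mod_cast hy1.trans hyX
  have hX1' : (1 : ℝ) ≤ X := by exact_mod_cast hy1.trans hyX
  have hL0 : 0 ≤ Real.log X := Real.log_nonneg hX1'
  have hL0u : Real.log X ≤ 2 * E * (2 ^ a * lam) := by
    rw [← hlogy]
    have : (X : ℝ) ≤ ((2 : ℝ) ^ 2 ^ s) ^ (2 * E) := by rw [hy] at hX2; exact_mod_cast hX2.le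
    calc Real.log X ≤ Real.log (((2 : ℝ) ^ 2 ^ s) ^ (2 * E)) := Real.log_le_log hX0 this
      _ = _ := by rw [Real.log_pow]; push_cast; ring
  obtain ⟨L, hL⟩ : ∃ L : ℝ, L = Real.log (2 * X : ℕ) := ⟨_, rfl⟩
  have hL' : L = Real.log 2 + Real.log X := by
    rw [hL]; push_cast; rw [Real.log_mul (by norm_num) hX0.ne']
  have hL2 := Real.log_two_lt_d9
  have hL2' := Real.log_two_gt_d9
  have h2a : (1 : ℝ) ≤ 2 ^ a := one_le_pow₀ (by norm_num)
  have hE1' : (2 : ℝ) ≤ E := by exact_mod_cast hE1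
  have hLlam : L ≤ 4 * E * 2 ^ a * lam := by
    have h1 := mul_le_mul h2a hlam400 (by norm_num) (by positivity)
    have h2 := mul_le_mul hE1' h1 (by norm_num) (by positivity)
    have h3 : 4 * E * 2 ^ a * lam = 4 * (E * (2 ^ a * lam)) := by ring
    have h4 : 2 * E * (2 ^ a * lam) = 2 * (E * (2 ^ a * lam)) := by ring
    linarith
  -- The subdivision starts just below `y`, the smallest rough `d > 1`.
  obtain ⟨A₀, hA₀⟩ : ∃ A₀, A₀ = y - 1 := ⟨_, rfl⟩
  have hMz : 16 * M ≤ z := by omega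
  have hM1 : 1 ≤ M := by omega
  obtain ⟨J, hJ1, hJ2, hJ3, hJ4⟩ := exists_J (A₀ := A₀) (Y := 2 * X) (y := y) hM1 (by omega) (by omega) (by omega)
  rw [← hL] at hJ4
  have hM1' : (1 : ℝ) ≤ M := by exact_mod_cast hM1
  have hL1 : 1 / 2 ≤ L := by linarith
  have hlam0 : 0 < lam := by linarith
  have hJ5 : (J : ℝ) ≤ 6 * M * L := by
    have := mul_le_mul hM1' hL1 (by norm_num) (by positivity)
    linarith [show (4 : ℝ) * M * L = 4 * (M * L) by ring, show (6 : ℝ) * M * L = 6 * (M * L) by ring]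
  have hwy : 8 * M * lam * (2 * ((2 : ℝ) ^ 2 ^ t) ^ (3 * Cx 1 b)) ≤ y := by
    have e1 : (y : ℝ) = (z : ℝ) ^ 2 ^ a := by exact_mod_cast hyz
    have e2 : ((2 : ℝ) ^ 2 ^ t) = z := by rw [hz]; push_cast; rfl
    have hz1' : (1 : ℝ) ≤ z := by exact_mod_cast hz1
    have e3 : (16 * M : ℝ) ≤ z := by exact_mod_cast hMz
    rw [e1, e2]
    calc _ = (16 * M : ℝ) * lam * (z : ℝ) ^ (3 * Cx 1 b) := by ring
      _ ≤ z * z * (z : ℝ) ^ (3 * Cx 1 b) := by gcongr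
      _ = (z : ℝ) ^ a := by rw [ha]; ring
      _ ≤ (z : ℝ) ^ 2 ^ a := pow_le_pow_right₀ hz1' Nat.lt_two_pow_self.le
  obtain ⟨hOver, hBil⟩ := over_bil_le (X := X) (J := J) (A₀ := A₀) hlam (by linarith) rfl hwy hM1 (by omega : X ≤ 2 * X)
    (by omega) (by omega) hJ2
  have hWF : (W : ℝ) = (E * 2 ^ a) ^ 2 := by
    rw [hW]; push_cast
    rw [show (4 : ℝ) ^ a = (2 ^ a) ^ 2 by rw [← pow_mul, mul_comm a 2, pow_mul]; norm_num]; ring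
  push_cast at hOver hBil
  obtain ⟨hOv, hBl⟩ := box_arith (X := X) (by linarith) hlam0 (by linarith : L ≤ 4 * (E * 2 ^ a) * lam)
    hWF (by linarith) (by rw [hM]; push_cast; rfl) hδ hX0.le hJ5 hOver hBil
  have hXY : X ≤ 2 * X := by omega
  have hE1r : (1 : ℝ) ≤ E := by linarith
  have he0 := (eps_pos (2 * D) b).le
  have he : 8 * eps (2 * D) b * E ≤ 1 / 100 := hb
  have he' : eps (2 * D) b ≤ 1 := by
    have := mul_le_mul_of_nonneg_left hE1r he0
    linarith
  have he1' := eps_one_le hD b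
  have he1 : eps 1 b ≤ 1 := he1'.trans he'
  have hy2 : (2 : ℝ) ^ 2 ^ s = y := by rw [hy]; push_cast; rfl
  have hA0' : Aseq M A₀ 0 = A₀ := rfl
  have q2 := TT_Theta_le h b hts he' he1 hδQ hδ1 hXY (Aseq M A₀) (Aseq_mono M A₀) J (by omega) hJ3
  have q1 := good_ge h b (s := s) (t := t) (X := X) (Y := 2 * X) (A := Aseq M A₀ 0) (A' := Aseq M A₀ J)
    (by omega) (by rw [← hy]; exact hJ1)
  have q3 := TT_one_le (s := s) hXY (by rw [← hy]; exact hyX) (A := Aseq M A₀ 0) (A' := Aseq M A₀ J)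
    (by omega) (by rw [← hy]; exact hJ1)
  have q4 := card_good_ge h b hts he' hXY
  have q5 := card_rough_le' b s he1 hXY
  have q6 := hN₀ X (by omega)
  have q7 : Real.log X * ∑ n ∈ Ioc X (2 * X) with Good B Q₀ s t n, (1 : ℝ)
      ≤ ∑ n ∈ Ioc X (2 * X) with Good B Q₀ s t n, Real.log n := by
    rw [mul_sum]
    refine sum_le_sum fun n hn => ?_
    rw [mul_one]
    have := (mem_Ioc.1 (mem_filter.1 hn).1).1
    exact Real.log_le_log hX0 (by exact_mod_cast this.le)
  have q8 := VV_dvdf_le s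
  rw [hlogy] at q8
  have q9 := VV_dvdf_nonneg s
  have hy1' : (1 : ℝ) ≤ y := by exact_mod_cast hy1
  rw [hy2, ← hC] at q4
  rw [hy2] at q5
  rw [← hL] at q2 q3
  have hVX : VV Blk dvdf s * Real.log X ≤ 2 * E := by
    calc _ ≤ 1 / (2 ^ a * lam) * (2 * E * (2 ^ a * lam)) := mul_le_mul q8 hL0u hL0 (by positivity)
      _ = _ := by field_simp
  have hV400 : VV Blk dvdf s ≤ 1 / 400 := by
    have := mul_le_mul h2a hlam400 (by norm_num) (by positivity)
    exact q8.trans (one_div_le_one_div_of_le (by norm_num) (by linarith))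
  have hC1 : (y : ℝ) ^ Cx 1 b ≤ (y : ℝ) ^ (C + 1) := by
    refine pow_le_pow_right₀ hy1' ?_
    rw [hC, Cx, Cx]
    exact (Nat.mul_le_mul_right _ (by omega)).trans (Nat.le_succ _)
  have q5' : (∑ n ∈ Ioc X (2 * X), if Rough s n then (1 : ℝ) else 0)
      ≤ X * ((1 + eps (2 * D) b) * VV Blk dvdf s) + (y : ℝ) ^ (C + 1) := by
    refine q5.trans (add_le_add ?_ hC1)
    push_cast
    rw [show (2 * X - X : ℝ) = X by ring]
    exact mul_le_mul_of_nonneg_left (mul_le_mul_of_nonneg_right (by linarith) q9) hX0.le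
  have q4' : (X : ℝ) * ((1 - eps (2 * D) b) * (VV Blk dvdf s * VH B Q₀ t)) - (y : ℝ) ^ (C + 1)
      ≤ ∑ n ∈ Ioc X (2 * X) with Good B Q₀ s t n, (1 : ℝ) := by
    refine le_trans (le_of_eq ?_) q4
    push_cast; ring
  have hZ : 3 * L * (y : ℝ) ^ (C + 1) ≤ VH B Q₀ t * X / 100 := by
    have e1 := ht₁ t (by omega)
    have e2 := VH_ge h t
    have e3 : (y : ℝ) ^ (C + 1) * (y : ℝ) ^ (C + 1) ≤ X := by
      rw [← pow_add, ← two_mul, ← hE]; exact_mod_cast hX1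
    have e4 : ((2 : ℝ) ^ 2 ^ t) ≤ (y : ℝ) ^ (C + 1) := by
      have : z ≤ y ^ (C + 1) := hzy.trans (Nat.le_self_pow (by omega) y)
      rw [hz] at this
      exact_mod_cast this
    obtain ⟨T, hT⟩ : ∃ T : ℝ, T = (2 : ℝ) ^ t := ⟨_, rfl⟩
    obtain ⟨Z, hZ⟩ : ∃ Z : ℝ, Z = (y : ℝ) ^ (C + 1) := ⟨_, rfl⟩
    rw [← hT] at e1 e2
    rw [← hZ] at e3 e4 ⊢
    have hT0 : 0 < T := by rw [hT]; positivity
    have hZ0 : 0 ≤ Z := by rw [hZ]; positivity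
    have e5 : 300 * L * T ^ (32 * D) ≤ Z := by
      refine le_trans ?_ (e1.trans e4)
      have : L ≤ 4 * E * 2 ^ a * T := hLlam.trans (mul_le_mul_of_nonneg_left (hT ▸ hlamu) (by positivity))
      calc 300 * L * T ^ (32 * D) ≤ 300 * (4 * E * 2 ^ a * T) * T ^ (32 * D) :=
            mul_le_mul_of_nonneg_right (mul_le_mul_of_nonneg_left this (by norm_num)) (by positivity)
        _ = _ := by rw [pow_succ]; ring
    have e6 : 300 * L * Z ≤ (T ^ (32 * D))⁻¹ * (Z * Z) := by
      rw [inv_mul_eq_div, le_div_iff₀ (by positivity)]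
      calc 300 * L * Z * T ^ (32 * D) = (300 * L * T ^ (32 * D)) * Z := by ring
        _ ≤ _ := mul_le_mul_of_nonneg_right e5 hZ0
    have e7 : (T ^ (32 * D))⁻¹ * (Z * Z) ≤ VH B Q₀ t * X :=
      mul_le_mul e2 e3 (by positivity) (h.VH_pos t).le
    linarith
  have g2 : TT X (2 * X) s (Theta B Q₀ b t) (Ioc (Aseq M A₀ 0) (Aseq M A₀ J)) ≤
      (1 + eps (2 * D) b) * VH B Q₀ t * (TT X (2 * X) s 1 (Ioc (Aseq M A₀ 0) (Aseq M A₀ J))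
        + L * Over b t X (2 * X) (Aseq M A₀) J) + VH B Q₀ t * (2 * δ * (L * Bil b t X (2 * X) (Aseq M A₀) J)) := by
    refine q2.trans (le_of_eq ?_)
    ring
  exact final_arith q9 (h.VH_pos t).le (VH_le_one h t) he0 hX0.le (by positivity : (0 : ℝ) ≤ (y : ℝ) ^ (C + 1)) hL0
    (by linarith) (by linarith) (le_trans (sub_le_sub_right q7 _) q1) g2 q3 q4' q5'
    (by push_cast; exact q6) hVX hV400 he hE1r hOv hBl hZ

/-! ### Roots modulo primes and prime ideals of degree one -/

section numberfield

open Polynomial NumberField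

/-- The conductor of an integral generator of a number field contains a positive integer. -/
theorem exponent_ne_zero {K : Type*} [Field K] [NumberField K] (θ : 𝓞 K)
    (hθ : Algebra.adjoin ℚ {(θ : K)} = ⊤) : RingOfIntegers.exponent θ ≠ 0 := by
  have hi : IsIntegral ℤ (θ : K) := θ.isIntegral_coe
  have hiQ : IsIntegral ℚ (θ : K) := hi.tower_top
  set B := PowerBasis.ofAdjoinEqTop hiQ hθ with hB
  have hgen : B.gen = θ := PowerBasis.ofAdjoinEqTop_gen hiQ hθ
  have h_int : IsIntegral ℤ B.gen := hgen ▸ hi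
  have hd0 : Algebra.discr ℚ B.basis ≠ 0 := Algebra.discr_not_zero_of_basis ℚ B.basis
  have hdi : IsIntegral ℤ (Algebra.discr ℚ B.basis) := by
    refine Algebra.discr_isIntegral ℚ fun i => ?_
    rw [B.basis_eq_pow]
    exact h_int.pow _
  obtain ⟨d, hd⟩ := IsIntegrallyClosed.isIntegral_iff.1 hdi
  have hd1 : d ≠ 0 := by
    rintro rfl
    exact hd0 (by rw [← hd, map_zero])
  have key : ∀ x : 𝓞 K, (d : 𝓞 K) * x ∈ Algebra.adjoin ℤ {θ} := by
    intro x
    have h1 := Algebra.discr_mul_isIntegral_mem_adjoin ℚ h_int (z := (x : K)) x.isIntegral_coe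
    rw [hgen, ← hd] at h1
    have h2 : (algebraMap ℤ ℚ d) • (x : K) = algebraMap (𝓞 K) K ((d : 𝓞 K) * x) := by
      rw [map_mul, Algebra.smul_def]
      simp
    rw [h2, show ({(θ : K)} : Set K) = Set.image (IsScalarTower.toAlgHom ℤ (𝓞 K) K) {θ} by simp, Algebra.adjoin_image] at h1
    obtain ⟨w, hw, hw'⟩ := h1
    have : w = (d : 𝓞 K) * x := RingOfIntegers.coe_injective hw'
    exact this ▸ hw
  have hmem : d.natAbs ∈ {d : ℕ | 0 < d ∧ (d : 𝓞 K) ∈ conductor ℤ θ} := by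
    refine ⟨Int.natAbs_pos.2 hd1, fun x => ?_⟩
    rcases Int.natAbs_eq d with h | h
    · have := key x
      rw [h] at this
      simpa using this
    · have := neg_mem (key x)
      rw [h] at this
      simpa using this
  rw [RingOfIntegers.exponent_eq_sInf]
  exact (Nat.sInf_mem ⟨_, hmem⟩).1.ne'

/-- A root of the minimal polynomial of `θ` modulo `p` extends to a homomorphism `𝓞 K → ZMod p`. -/
theorem exists_hom {K : Type*} [Field K] [NumberField K] (θ : 𝓞 K) {p : ℕ} [Fact p.Prime]
    (hp : ¬ p ∣ RingOfIntegers.exponent θ) (r : ZMod p)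
    (hr : ((minpoly ℤ θ).map (Int.castRingHom (ZMod p))).eval r = 0) : ∃ φ : 𝓞 K →+* ZMod p, φ θ = r := by
  have h1 : ∀ a ∈ Ideal.span {(minpoly ℤ θ).map (Int.castRingHom (ZMod p))}, evalRingHom r a = 0 := by
    intro a ha
    obtain ⟨c, rfl⟩ := Ideal.mem_span_singleton.1 ha
    rw [map_mul, coe_evalRingHom, hr, zero_mul]
  set e := RingOfIntegers.ZModXQuotSpanEquivQuotSpan hp with he
  refine ⟨((Ideal.Quotient.lift _ (evalRingHom r) h1).comp e.symm.toRingHom).comp (Ideal.Quotient.mk _), ?_⟩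
  have h2 := RingOfIntegers.ZModXQuotSpanEquivQuotSpan_mk_apply hp X
  rw [aeval_X, ← he] at h2
  simp only [RingHom.comp_apply]
  rw [← h2]
  simp

/-- The kernel of a homomorphism to `ZMod l` is a prime ideal of norm `l`. -/
theorem ker_hom {R : Type*} [CommRing R] [IsDedekindDomain R] [Module.Free ℤ R] {p : ℕ} [Fact p.Prime]
    (φ : R →+* ZMod p) : (RingHom.ker φ).IsPrime ∧ Ideal.absNorm (RingHom.ker φ) = p := by
  refine ⟨RingHom.ker_isPrime φ, ?_⟩
  have h := RingHom.quotientKerEquivOfSurjective (ZMod.ringHom_surjective φ)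
  rw [Ideal.absNorm_apply, Submodule.cardQuot_apply]
  rw [Nat.card_congr h.toEquiv, Nat.card_zmod]

/-- The roots of an irreducible polynomial modulo all but finitely many primes `l` inject into the
primes of norm `l` of a number field. -/
theorem exists_field (h : ℤ[X]) (hi : Irreducible h) (hd : 0 < h.natDegree) :
    ∃ (K : Type) (_ : Field K) (_ : NumberField K) (N : ℕ) (P : ℕ → ℕ → Ideal (𝓞 K)), N ≠ 0 ∧
      ∀ l : ℕ, l.Prime → ¬ l ∣ N → ∀ r < l, (l : ℤ) ∣ h.eval (r : ℤ) → (P l r).IsPrime ∧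
        Ideal.absNorm (P l r) = l ∧ ∀ r' < l, (l : ℤ) ∣ h.eval (r' : ℤ) → P l r = P l r' → r = r' := by
  have hprim : h.IsPrimitive := hi.isPrimitive hd.ne'
  have hirr : Irreducible (h.map (Int.castRingHom ℚ)) :=
    (IsPrimitive.Int.irreducible_iff_irreducible_map_cast hprim).1 hi
  have : Fact (Irreducible (h.map (Int.castRingHom ℚ))) := ⟨hirr⟩
  let K := AdjoinRoot (h.map (Int.castRingHom ℚ))
  let τ : K := AdjoinRoot.root (h.map (Int.castRingHom ℚ))
  have hτ0 : IsAlgebraic ℤ τ := by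
    refine ⟨h, hi.ne_zero, ?_⟩
    have := AdjoinRoot.eval₂_root (h.map (Int.castRingHom ℚ))
    rw [eval₂_map] at this
    rw [aeval_def, ← this]
    congr 1
  obtain ⟨c, hc0, hci⟩ := hτ0.exists_integral_multiple
  let θ : 𝓞 K := ⟨c • τ, hci⟩
  have hθc : (θ : K) = c • τ := rfl
  have hcQ : (c : ℚ) ≠ 0 := by exact_mod_cast hc0
  have hθ : Algebra.adjoin ℚ {(θ : K)} = ⊤ := by
    refine eq_top_iff.2 ((AdjoinRoot.adjoinRoot_eq_top (f := h.map (Int.castRingHom ℚ))).ge.trans ?_)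
    refine Algebra.adjoin_le (Set.singleton_subset_iff.2 ?_)
    have h1 := Subalgebra.smul_mem _ (Algebra.self_mem_adjoin_singleton ℚ (θ : K)) (c : ℚ)⁻¹
    have h2 : (c : ℚ)⁻¹ • (θ : K) = τ := by
      rw [hθc, ← Int.cast_smul_eq_zsmul ℚ, smul_smul, inv_mul_cancel₀ hcQ, one_smul]
    rw [h2] at h1
    exact h1
  have hdvd : h ∣ (minpoly ℤ θ).comp (C c * X) := by
    rw [IsPrimitive.Int.dvd_iff_map_cast_dvd_map_cast _ _ hprim]
    rw [← AdjoinRoot.mk_eq_zero, ← AdjoinRoot.aeval_eq]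
    change aeval τ (((minpoly ℤ θ).comp (C c * X)).map (algebraMap ℤ ℚ)) = 0
    rw [aeval_map_algebraMap, aeval_comp]
    have h1 : aeval τ (C c * X : ℤ[X]) = algebraMap (𝓞 K) K θ := by
      rw [map_mul, aeval_C, aeval_X]
      change _ = c • τ
      rw [Algebra.smul_def]
    rw [h1, aeval_algebraMap_apply, minpoly.aeval, map_zero]
  have hroot : ∀ (l : ℕ) (r : ℤ), (l : ℤ) ∣ h.eval r →
      ((minpoly ℤ θ).map (Int.castRingHom (ZMod l))).eval ((c * r : ℤ) : ZMod l) = 0 := by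
    intro l r hr
    obtain ⟨q, hq⟩ := hdvd
    have h1 : (minpoly ℤ θ).eval (c * r) = h.eval r * q.eval r := by
      rw [← eval_mul, ← hq]; simp
    rw [eval_map, ← eq_intCast (Int.castRingHom (ZMod l)), eval₂_at_apply, h1]
    exact (ZMod.intCast_zmod_eq_zero_iff_dvd _ _).2 (hr.mul_right _)
  have key : ∀ l r : ℕ, ∃ P : Ideal (𝓞 K), l.Prime → ¬ l ∣ RingOfIntegers.exponent θ →
      (l : ℤ) ∣ h.eval (r : ℤ) → P.IsPrime ∧ Ideal.absNorm P = l ∧ (θ - ((c * r : ℤ) : 𝓞 K)) ∈ P ∧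
        ∀ m : ℤ, (m : 𝓞 K) ∈ P → (l : ℤ) ∣ m := by
    intro l r
    by_cases hl : l.Prime ∧ ¬ l ∣ RingOfIntegers.exponent θ ∧ (l : ℤ) ∣ h.eval (r : ℤ)
    swap
    · exact ⟨⊥, fun a b d => absurd ⟨a, b, d⟩ hl⟩
    have : Fact l.Prime := ⟨hl.1⟩
    obtain ⟨φ, hφ⟩ := exists_hom θ hl.2.1 _ (hroot l r hl.2.2)
    obtain ⟨h1, h2⟩ := ker_hom φ
    refine ⟨RingHom.ker φ, fun _ _ _ => ⟨h1, h2, ?_, fun m hm => ?_⟩⟩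
    · rw [RingHom.mem_ker, map_sub, hφ, map_intCast, sub_self]
    · rw [RingHom.mem_ker, map_intCast] at hm
      exact (ZMod.intCast_zmod_eq_zero_iff_dvd _ _).1 hm
  choose P hP using key
  refine ⟨K, inferInstance, inferInstance, c.natAbs * RingOfIntegers.exponent θ, P,
    mul_ne_zero (Int.natAbs_ne_zero.2 hc0) (exponent_ne_zero θ hθ), ?_⟩
  intro l hl hlN r hr hlr
  have hle : ¬ l ∣ RingOfIntegers.exponent θ := fun hh => hlN (hh.mul_left _)
  have hlc : ¬ (l : ℤ) ∣ c := fun hh => hlN ((Int.natCast_dvd.1 hh).mul_right _)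
  obtain ⟨h1, h2, h3, h4⟩ := hP l r hl hle hlr
  refine ⟨h1, h2, fun r' hr' hlr' he => ?_⟩
  obtain ⟨-, -, h3', -⟩ := hP l r' hl hle hlr'
  rw [← he] at h3'
  have h5 := h4 (c * (r - r')) (by
    have := (P l r).sub_mem h3' h3
    refine (congrArg (· ∈ P l r) ?_).mp this
    push_cast; ring)
  have h6 := ((Nat.prime_iff_prime_int.1 hl).dvd_or_dvd h5).resolve_left hlc
  have h8 : (r : ℤ) - r' = 0 := Int.eq_zero_of_abs_lt_dvd h6 (by rw [abs_lt]; omega)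
  omega

end numberfield

/-! ### Dirichlet series of ideals near the pole -/

section zeta

open NumberField

/-- The Dirichlet series of ideals is `O(1 / (s - 1))` to the right of `1`. -/
theorem zeta_bound (K : Type) [Field K] [NumberField K] : ∃ C δ : ℝ, 0 < C ∧ 0 < δ ∧ ∀ s : ℝ, 1 < s → s < 1 + δ →
    ∀ T : Finset (Ideal (𝓞 K)), (∀ I ∈ T, I ≠ ⊥) →
      ∑ I ∈ T, (Ideal.absNorm I : ℝ) ^ (-s) ≤ C / (s - 1) := by
  have ht := tendsto_sub_one_mul_dedekindZeta_nhdsGT K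
  have hpos := dedekindZeta_residue_pos K
  set ρ := dedekindZeta_residue K with hρ
  have h1 := ht.norm
  have hρn : ‖((ρ : ℝ) : ℂ)‖ = ρ := by rw [Complex.norm_real, Real.norm_of_nonneg hpos.le]
  rw [hρn] at h1
  have h2 := (h1.eventually (lt_mem_nhds (half_lt_self hpos))).and (h1.eventually (gt_mem_nhds (show ρ < 2 * ρ by linarith)))
  obtain ⟨u, hu, hu2⟩ := mem_nhdsGT_iff_exists_Ioo_subset.1 h2
  refine ⟨2 * ρ, u - 1, by positivity, sub_pos.2 hu, fun s hs1 hs2 T hT => ?_⟩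
  obtain ⟨h3, h4⟩ := hu2 (show s ∈ Set.Ioo 1 u from ⟨hs1, by linarith⟩)
  have hs0 : 0 < s - 1 := by linarith
  rw [norm_mul] at h3 h4
  have hns : ‖((s : ℂ) - 1)‖ = s - 1 := by
    rw [← Complex.ofReal_one, ← Complex.ofReal_sub, Complex.norm_real, Real.norm_of_nonneg hs0.le]
  rw [hns] at h3 h4
  set a : ℕ → ℕ := fun n => Nat.card {I : Ideal (𝓞 K) // Ideal.absNorm I = n} with ha
  set f : ℕ → ℂ := LSeries.term (fun n => (a n : ℂ)) s with hf
  have hz : dedekindZeta K s = ∑' n, f n := rfl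
  have hsum : Summable f := by
    by_contra hc
    rw [hz, tsum_eq_zero_of_not_summable hc, norm_zero, mul_zero] at h3
    linarith
  have hfr : ∀ n, f n = ((if n = 0 then 0 else (a n : ℝ) * (n : ℝ) ^ (-s) : ℝ) : ℂ) := by
    intro n
    rw [hf, LSeries.term]
    split_ifs with hn
    · simp
    · rw [Real.rpow_neg (Nat.cast_nonneg _), ← div_eq_mul_inv]
      push_cast
      rw [Complex.ofReal_cpow (Nat.cast_nonneg _)]
      simp
  set g : ℕ → ℝ := fun n => if n = 0 then 0 else (a n : ℝ) * (n : ℝ) ^ (-s) with hg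
  have hfg : f = fun n => (g n : ℂ) := funext hfr
  rw [hfg] at hsum hz
  have hgs : Summable g := Complex.summable_ofReal.1 hsum
  have hg0 : ∀ n, 0 ≤ g n := by
    intro n
    simp only [hg]
    split_ifs
    · exact le_rfl
    · positivity
  have hzg : ‖dedekindZeta K s‖ = ∑' n, g n := by
    rw [hz, ← Complex.ofReal_tsum, Complex.norm_real, Real.norm_of_nonneg (tsum_nonneg hg0)]
  have h5 : ∑' n, g n ≤ 2 * ρ / (s - 1) := by
    rw [le_div_iff₀ hs0, ← hzg, mul_comm]; exact h4.le
  refine le_trans ?_ ((hgs.sum_le_tsum (T.image Ideal.absNorm) fun n _ => hg0 n).trans h5)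
  rw [← sum_fiberwise_of_maps_to (g := fun I => Ideal.absNorm I) (t := T.image Ideal.absNorm)
    (fun I hI => mem_image_of_mem _ hI)]
  refine sum_le_sum fun n hn => ?_
  obtain ⟨I, hI, rfl⟩ := mem_image.1 hn
  have hn0 : Ideal.absNorm I ≠ 0 := by
    rw [Ne, Ideal.absNorm_eq_zero_iff]; exact hT I hI
  simp only [hg]
  rw [if_neg hn0]
  have : ∀ J ∈ T.filter fun J => Ideal.absNorm J = Ideal.absNorm I,
      (Ideal.absNorm J : ℝ) ^ (-s) = (Ideal.absNorm I : ℝ) ^ (-s) := fun J hJ => by rw [(mem_filter.1 hJ).2]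
  rw [sum_congr rfl this, sum_const, nsmul_eq_mul]
  refine mul_le_mul_of_nonneg_right ?_ (by positivity)
  have hfin := Ideal.finite_setOfPred_absNorm_eq (S := 𝓞 K) (Ideal.absNorm I)
  have : (#{J ∈ T | Ideal.absNorm J = Ideal.absNorm I}) ≤ a (Ideal.absNorm I) := by
    have h6 : ((T.filter fun J => Ideal.absNorm J = Ideal.absNorm I : Finset (Ideal (𝓞 K))) : Set (Ideal (𝓞 K)))
        ⊆ {J | Ideal.absNorm J = Ideal.absNorm I} := fun J hJ => (mem_filter.1 hJ).2
    have := Set.ncard_le_ncard h6 hfin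
    rw [Set.ncard_coe_finset] at this
    exact this
  exact_mod_cast this

/-- A product over prime ideals, multiplied out, is part of the Dirichlet series of all ideals by unique
factorisation. -/
theorem prod_primes_le {R : Type*} [CommRing R] [IsDedekindDomain R] [Module.Free ℤ R] [Module.Finite ℤ R] {C s : ℝ}
    (hC : ∀ T : Finset (Ideal R), (∀ I ∈ T, I ≠ ⊥) → ∑ I ∈ T, (Ideal.absNorm I : ℝ) ^ (-s) ≤ C)
    (T : Finset (Ideal R)) (hT : ∀ P ∈ T, P.IsPrime ∧ P ≠ ⊥) :
    ∏ P ∈ T, (1 + (Ideal.absNorm P : ℝ) ^ (-s)) ≤ C := by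
  classical
  have hprime : ∀ P ∈ T, Prime P := fun P hP => Ideal.prime_of_isPrime (hT P hP).2 (hT P hP).1
  rw [prod_one_add]
  have hinj : Set.InjOn (fun U : Finset (Ideal R) => ∏ P ∈ U, P) (T.powerset : Set (Finset (Ideal R))) := by
    have key : ∀ U ∈ T.powerset, ∀ P ∈ T, P ∈ U ↔ P ∣ ∏ Q ∈ U, Q := by
      intro U hU P hP
      refine ⟨fun h => dvd_prod_of_mem _ h, fun h => ?_⟩
      obtain ⟨Q, hQ, hPQ⟩ := (hprime P hP).exists_mem_finset_dvd h
      have := (hprime P hP).associated_of_dvd (hprime Q (mem_powerset.1 hU hQ)) hPQ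
      rw [associated_iff_eq] at this
      exact this ▸ hQ
    intro U hU V hV h
    ext P
    have hU' := mem_powerset.1 (mem_coe.1 hU)
    have hV' := mem_powerset.1 (mem_coe.1 hV)
    simp only at h
    constructor
    · intro hp
      exact (key V hV P (hU' hp)).2 (h ▸ (key U hU P (hU' hp)).1 hp)
    · intro hp
      exact (key U hU P (hV' hp)).2 (h ▸ (key V hV P (hV' hp)).1 hp)
  have h1 := hC (T.powerset.image fun U => ∏ P ∈ U, P) (by
    intro I hI
    obtain ⟨U, hU, rfl⟩ := mem_image.1 hI
    exact prod_ne_zero_iff.2 fun P hP => (hT P (mem_powerset.1 hU hP)).2)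
  rw [sum_image hinj] at h1
  refine le_trans (le_of_eq ?_) h1
  refine sum_congr rfl fun U _ => ?_
  rw [map_prod]
  push_cast
  rw [Real.finsetProd_rpow _ _ fun _ _ => Nat.cast_nonneg _]

end zeta

/-- The number of roots modulo `l`. -/
def rootNum (h : Polynomial ℤ) (l : ℕ) : ℕ := #((range l).filter fun r : ℕ => (l : ℤ) ∣ h.eval (r : ℤ))

theorem rootNum_le (h : Polynomial ℤ) {l : ℕ} (hl : l.Prime) (hlc : ¬ (l : ℤ) ∣ h.leadingCoeff) :
    rootNum h l ≤ h.natDegree := by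
  classical
  have : Fact l.Prime := ⟨hl⟩
  have hlc' : Int.castRingHom (ZMod l) h.leadingCoeff ≠ 0 := by
    rw [eq_intCast, Ne, ZMod.intCast_zmod_eq_zero_iff_dvd]; exact hlc
  set q := h.map (Int.castRingHom (ZMod l)) with hq
  have hdeg : q.natDegree = h.natDegree := Polynomial.natDegree_map_of_leadingCoeff_ne_zero _ hlc'
  have hq0 : q ≠ 0 := by
    intro h0
    have := Polynomial.leadingCoeff_map_of_leadingCoeff_ne_zero (Int.castRingHom (ZMod l)) hlc'
    rw [← hq, h0, Polynomial.leadingCoeff_zero] at this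
    exact hlc' this.symm
  rw [← hdeg]
  refine le_trans ?_ (q.roots.toFinset_card_le.trans q.card_roots')
  refine card_le_card_of_injOn (fun r => (r : ZMod l)) (fun r hr => ?_) fun r hr r' hr' he => ?_
  · have hr2 := (mem_filter.1 (mem_coe.1 hr)).2
    rw [mem_coe, Multiset.mem_toFinset, Polynomial.mem_roots hq0, Polynomial.IsRoot]
    rw [hq, Polynomial.eval_map]
    change Polynomial.eval₂ _ ((r : ℕ) : ZMod l) h = 0
    rw [show ((r : ℕ) : ZMod l) = Int.castRingHom (ZMod l) (r : ℤ) by simp,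
      Polynomial.eval₂_at_apply, eq_intCast]
    exact (ZMod.intCast_zmod_eq_zero_iff_dvd _ _).2 hr2
  · have h1 := mem_range.1 (mem_filter.1 (mem_coe.1 hr)).1
    have h2 := mem_range.1 (mem_filter.1 (mem_coe.1 hr')).1
    have := (ZMod.natCast_eq_natCast_iff' _ _ _).1 he
    rwa [Nat.mod_eq_of_lt h1, Nat.mod_eq_of_lt h2] at this

/-! ### The average number of roots modulo primes -/

theorem log_one_add_ge {x : ℝ} (hx : 0 ≤ x) : x - x ^ 2 ≤ Real.log (1 + x) := by
  have h1 := Real.one_sub_inv_le_log_of_pos (show 0 < 1 + x by linarith)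
  refine le_trans ?_ h1
  have h2 : (1 + x)⁻¹ ≤ 1 - x + x ^ 2 := by
    rw [inv_le_iff_one_le_mul₀ (by linarith)]
    have : 0 ≤ x ^ 3 := by positivity
    linarith [show (1 - x + x ^ 2) * (1 + x) = 1 + x ^ 3 by ring]
  linarith

theorem sum_inv_sq_Blk_le (i : ℕ) : ∑ l ∈ Blk i, (1 : ℝ) / (l : ℝ) ^ 2 ≤ 4 / 2 ^ i := by
  have h1 : ∀ l ∈ Blk i, (1 : ℝ) / (l : ℝ) ^ 2 ≤ (1 / 2 ^ i) * (1 / l) := by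
    intro l hl
    obtain ⟨-, hp, h2⟩ := mem_Blk.1 hl
    have h3 : (2 : ℝ) ^ i ≤ l := by
      have : 2 ^ i ≤ l := (Nat.lt_two_pow_self (n := 2 ^ i)).le.trans h2
      exact_mod_cast this
    rw [one_div_mul_one_div]
    have hl0 : (0 : ℝ) < l := by exact_mod_cast hp.pos
    refine one_div_le_one_div_of_le (by positivity) ?_
    rw [sq]
    exact mul_le_mul_of_nonneg_right h3 hl0.le
  refine (sum_le_sum h1).trans ?_
  rw [← mul_sum]
  calc _ ≤ 1 / 2 ^ i * 4 := mul_le_mul_of_nonneg_left (sum_inv_Blk_le i) (by positivity)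
    _ = _ := by ring

theorem sum_inv_sq_le (t : ℕ) : ∑ i ∈ range t, ∑ l ∈ Blk i, (1 : ℝ) / (l : ℝ) ^ 2 ≤ 8 := by
  refine (sum_le_sum fun i _ => sum_inv_sq_Blk_le i).trans ?_
  have : ∀ t : ℕ, ∑ i ∈ range t, (4 : ℝ) / 2 ^ i = 8 - 8 / 2 ^ t := by
    intro t
    induction t with
    | zero => norm_num
    | succ t ih => rw [sum_range_succ, ih, pow_succ]; field_simp; ring
  rw [this]
  have : (0 : ℝ) ≤ 8 / 2 ^ t := by positivity
  linarith

/-- A Mertens-type bound for the sum of `log l / l` over the primes below `2 ^ 2 ^ t`. -/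
theorem sum_log_Blk_le (t : ℕ) :
    ∑ i ∈ range t, ∑ l ∈ Blk i, Real.log l / l ≤ 8 * (2 ^ t * Real.log 2) := by
  have hl2 : 0 < Real.log 2 := Real.log_pos (by norm_num)
  have h1 : ∀ i ∈ range t, ∑ l ∈ Blk i, Real.log l / l ≤ 8 * Real.log 2 * 2 ^ i := by
    intro i _
    have h2 : ∀ l ∈ Blk i, Real.log l / l ≤ (2 ^ (i + 1) * Real.log 2) * (1 / l) := by
      intro l hl
      obtain ⟨h3, hp, -⟩ := mem_Blk.1 hl
      have hl0 : (0 : ℝ) < l := by exact_mod_cast hp.pos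
      rw [mul_one_div]
      refine div_le_div_of_nonneg_right ?_ hl0.le
      calc Real.log l ≤ Real.log ((2 : ℝ) ^ 2 ^ (i + 1)) := Real.log_le_log hl0 (by exact_mod_cast h3.le)
        _ = _ := by rw [Real.log_pow]; push_cast; rfl
    refine (sum_le_sum h2).trans ?_
    rw [← mul_sum]
    calc _ ≤ 2 ^ (i + 1) * Real.log 2 * 4 := mul_le_mul_of_nonneg_left (sum_inv_Blk_le i) (by positivity)
      _ = _ := by ring
  refine (sum_le_sum h1).trans ?_
  rw [← mul_sum, geom_sum_eq (by norm_num)]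
  nlinarith

/-- The primes exceeding `N` below `2 ^ 2 ^ t`. -/
def PR (N t : ℕ) : Finset ℕ := (range t).biUnion fun i => PB N i

theorem PB_subset (N i : ℕ) : PB N i ⊆ Blk i := filter_subset _ _

theorem sum_PR (N t : ℕ) (f : ℕ → ℝ) : ∑ l ∈ PR N t, f l = ∑ i ∈ range t, ∑ l ∈ PB N i, f l :=
  sum_biUnion fun _ _ _ _ h => (Blk_disjoint h).mono (PB_subset _ _) (PB_subset _ _)

theorem prod_PR (N t : ℕ) (f : ℕ → ℝ) : ∏ l ∈ PR N t, f l = ∏ i ∈ range t, ∏ l ∈ PB N i, f l :=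
  prod_biUnion fun _ _ _ _ h => (Blk_disjoint h).mono (PB_subset _ _) (PB_subset _ _)

theorem mem_PR {N t l : ℕ} : l ∈ PR N t ↔ l.Prime ∧ N < l ∧ l < 2 ^ 2 ^ t := by
  rw [PR, mem_biUnion]
  constructor
  · rintro ⟨i, hi, hl⟩
    obtain ⟨h1, h2⟩ := mem_filter.1 hl
    obtain ⟨h3, h4, -⟩ := mem_Blk.1 h1
    refine ⟨h4, h2, h3.trans_le ?_⟩
    exact Nat.pow_le_pow_right (by norm_num) (Nat.pow_le_pow_right (by norm_num) (mem_range.1 hi))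
  · rintro ⟨h1, h2, h3⟩
    obtain ⟨i, hi, hl⟩ := exists_Blk h1 h3
    exact ⟨i, mem_range.2 hi, mem_filter.2 ⟨hl, h2⟩⟩

/-- Mertens-type upper bound for the number of roots of an irreducible polynomial. -/
theorem sum_rootNum_le (h : Polynomial ℤ) (hi : Irreducible h) (hd : 0 < h.natDegree) :
    ∃ (C : ℝ) (N t₀ : ℕ), ∀ Q ≥ N, ∀ t ≥ t₀, ∑ l ∈ PR Q t, (rootNum h l : ℝ) / l ≤ t * Real.log 2 + C := by
  classical
  obtain ⟨K, _, _, N, P, hN, hP⟩ := exists_field h hi hd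
  obtain ⟨C, δ, hC, hδ, hz⟩ := zeta_bound K
  obtain ⟨t₀, ht₀⟩ := exists_nat_ge (2 / δ)
  set k := h.natDegree with hk
  refine ⟨Real.log C + 8 * k + 8 * k, N + h.leadingCoeff.natAbs, t₀, fun Q hQ t ht => ?_⟩
  have hl2 := Real.log_two_gt_d9
  have hl2' := Real.log_two_lt_d9
  set L : ℝ := 2 ^ t * Real.log 2 with hL
  have htL : (t : ℝ) < 2 ^ t := by exact_mod_cast Nat.lt_two_pow_self
  have h2t : (1 : ℝ) ≤ 2 ^ t := one_le_pow₀ (by norm_num)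
  have hL0 : 0 < L := by positivity
  have hLδ : 1 / L < δ := by
    have h1 : (t₀ : ℝ) ≤ t := by exact_mod_cast ht
    have h2 : 2 / δ < 2 ^ t := by linarith
    rw [div_lt_iff₀ hδ] at h2
    rw [div_lt_iff₀ hL0, hL]
    nlinarith
  -- At this distance from the pole, `l ^ (-s)` and `l ^ (-1)` are comparable for all `l < 2 ^ 2 ^ t`.
  set s : ℝ := 1 + 1 / L with hs
  have hs1 : 1 < s := by rw [hs]; have : 0 < 1 / L := by positivity
                         linarith
  have hz' := hz s hs1 (by linarith)
  have hsL : C / (s - 1) = C * L := by rw [hs]; field_simp; ring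
  rw [hsL] at hz'
  have hlN : ∀ l ∈ PR Q t, l.Prime ∧ ¬ l ∣ N ∧ ¬ (l : ℤ) ∣ h.leadingCoeff ∧ 0 < (l : ℝ) ∧ (1 : ℝ) ≤ l ∧
      Real.log l ≤ L := by
    intro l hl
    obtain ⟨h1, h2, h3⟩ := mem_PR.1 hl
    have hlc : 0 < h.leadingCoeff.natAbs := Int.natAbs_pos.2 (Polynomial.leadingCoeff_ne_zero.2 hi.ne_zero)
    refine ⟨h1, fun hh => ?_, fun hh => ?_, by exact_mod_cast h1.pos, by exact_mod_cast h1.one_le, ?_⟩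
    · have := Nat.le_of_dvd (Nat.pos_of_ne_zero hN) hh
      omega
    · have := Nat.le_of_dvd hlc (Int.natCast_dvd.1 hh)
      omega
    · calc Real.log l ≤ Real.log ((2 : ℝ) ^ 2 ^ t) :=
            Real.log_le_log (by exact_mod_cast h1.pos) (by exact_mod_cast h3.le)
        _ = _ := by rw [Real.log_pow]; push_cast; rfl
  -- distinct pairs of a prime and a root give distinct prime ideals
  set S := (PR Q t).sigma fun l => (range l).filter fun r : ℕ => (l : ℤ) ∣ h.eval (r : ℤ) with hS
  have hSm : ∀ x ∈ S, x.1 ∈ PR Q t ∧ x.2 < x.1 ∧ (x.1 : ℤ) ∣ h.eval (x.2 : ℤ) := by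
    intro x hx
    obtain ⟨h1, h2⟩ := mem_sigma.1 hx
    obtain ⟨h3, h4⟩ := mem_filter.1 h2
    exact ⟨h1, mem_range.1 h3, h4⟩
  have hnorm : ∀ x ∈ S, (P x.1 x.2).IsPrime ∧ Ideal.absNorm (P x.1 x.2) = x.1 := by
    intro x hx
    obtain ⟨h1, h2, h3⟩ := hSm x hx
    have := hP x.1 (hlN _ h1).1 (hlN _ h1).2.1 x.2 h2 h3
    exact ⟨this.1, this.2.1⟩
  have hinj : Set.InjOn (fun x : (_ : ℕ) × ℕ => P x.1 x.2) S := by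
    rintro ⟨l, r⟩ hx ⟨l', r'⟩ hx' he
    simp only at he
    have e1 := (hnorm _ hx).2
    have e2 := (hnorm _ hx').2
    simp only at e1 e2
    rw [← he, e1] at e2
    subst e2
    obtain ⟨h1, h2, h3⟩ := hSm _ hx
    obtain ⟨h1', h2', h3'⟩ := hSm _ hx'
    have := (hP l (hlN _ h1).1 (hlN _ h1).2.1 r h2 h3).2.2 r' h2' h3' he
    subst this
    rfl
  have h1 := prod_primes_le hz' (S.image fun x => P x.1 x.2) (by
    intro I hI
    obtain ⟨x, hx, rfl⟩ := mem_image.1 hI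
    refine ⟨(hnorm x hx).1, fun h0 => ?_⟩
    have := (hnorm x hx).2
    rw [h0, Ideal.absNorm_bot] at this
    exact (hlN _ (hSm x hx).1).1.pos.ne this)
  rw [prod_image hinj, prod_congr rfl fun x hx => by rw [(hnorm x hx).2], hS, prod_sigma] at h1
  simp only [prod_const] at h1
  have h2 : ∑ l ∈ PR Q t, (rootNum h l : ℝ) * Real.log (1 + (l : ℝ) ^ (-s)) ≤ Real.log C + Real.log L := by
    rw [← Real.log_mul hC.ne' hL0.ne']
    refine le_trans (le_of_eq ?_) (Real.log_le_log (prod_pos fun l _ => by positivity) h1)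
    rw [Real.log_prod fun l _ => by positivity]
    exact sum_congr rfl fun l _ => by rw [Real.log_pow]; rfl
  have h3 : ∀ l ∈ PR Q t, (rootNum h l : ℝ) / l - k * (1 / (l : ℝ) ^ 2) - k / L * (Real.log l / l)
      ≤ (rootNum h l : ℝ) * Real.log (1 + (l : ℝ) ^ (-s)) := by
    intro l hl
    obtain ⟨hp, -, hlc, hl0, hl1, hll⟩ := hlN l hl
    have hk' : (rootNum h l : ℝ) ≤ k := by exact_mod_cast rootNum_le h hp hlc
    have hr0 : (0 : ℝ) ≤ rootNum h l := Nat.cast_nonneg _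
    have hlog : 0 ≤ Real.log l := Real.log_nonneg hl1
    have e1 : (l : ℝ) ^ (-s) = 1 / l * Real.exp (-(Real.log l / L)) := by
      rw [hs, show -(1 + 1 / L) = -1 + -(1 / L) by ring, Real.rpow_add hl0, Real.rpow_neg_one, one_div,
        Real.rpow_def_of_pos hl0]
      rw [one_div, mul_neg, div_eq_mul_inv]
    have e2 : 1 / l * (1 - Real.log l / L) ≤ (l : ℝ) ^ (-s) := by
      rw [e1]
      refine mul_le_mul_of_nonneg_left ?_ (by positivity)
      linarith [Real.add_one_le_exp (-(Real.log l / L))]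
    have e3 : (l : ℝ) ^ (-s) ≤ 1 / l := by
      rw [e1]
      refine mul_le_of_le_one_right (by positivity) (Real.exp_le_one_iff.2 ?_)
      have : 0 ≤ Real.log l / L := by positivity
      linarith
    have e4 : (0 : ℝ) ≤ (l : ℝ) ^ (-s) := by positivity
    have e5 : ((l : ℝ) ^ (-s)) ^ 2 ≤ 1 / (l : ℝ) ^ 2 := by
      rw [← one_div_pow]; exact pow_le_pow_left₀ e4 e3 2
    have e6 := log_one_add_ge e4
    have e7 : 1 / l * (1 - Real.log l / L) - 1 / (l : ℝ) ^ 2 ≤ Real.log (1 + (l : ℝ) ^ (-s)) := by linarith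
    refine le_trans ?_ (mul_le_mul_of_nonneg_left e7 hr0)
    have e8 : (rootNum h l : ℝ) * (1 / (l : ℝ) ^ 2) ≤ k * (1 / (l : ℝ) ^ 2) :=
      mul_le_mul_of_nonneg_right hk' (by positivity)
    have e9 : (rootNum h l : ℝ) * (Real.log l / l / L) ≤ k * (Real.log l / l / L) :=
      mul_le_mul_of_nonneg_right hk' (by positivity)
    have e10 : (rootNum h l : ℝ) * (1 / l * (1 - Real.log l / L) - 1 / (l : ℝ) ^ 2) =
      (rootNum h l : ℝ) / l - (rootNum h l : ℝ) * (1 / (l : ℝ) ^ 2) - (rootNum h l : ℝ) * (Real.log l / l / L) := by ring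
    have e11 : (k : ℝ) / L * (Real.log l / l) = k * (Real.log l / l / L) := by ring
    linarith
  have h4 := (sum_le_sum h3).trans h2
  rw [sum_sub_distrib, sum_sub_distrib, ← mul_sum (PR Q t), ← mul_sum (PR Q t)] at h4
  have h5 : ∑ l ∈ PR Q t, (1 : ℝ) / (l : ℝ) ^ 2 ≤ 8 := by
    rw [sum_PR]
    refine le_trans (sum_le_sum fun i _ => ?_) (sum_inv_sq_le t)
    exact sum_le_sum_of_subset_of_nonneg (PB_subset _ _) fun l _ _ => by positivity
  have h6 : ∑ l ∈ PR Q t, Real.log l / l ≤ 8 * L := by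
    rw [sum_PR]
    refine le_trans (sum_le_sum fun i _ => ?_) (sum_log_Blk_le t)
    exact sum_le_sum_of_subset_of_nonneg (PB_subset _ _) fun l _ _ =>
      div_nonneg (Real.log_natCast_nonneg _) (Nat.cast_nonneg _)
  have h7 : (k : ℝ) / L * ∑ l ∈ PR Q t, Real.log l / l ≤ 8 * k := by
    calc _ ≤ (k : ℝ) / L * (8 * L) := mul_le_mul_of_nonneg_left h6 (by positivity)
      _ = _ := by field_simp
  have h8 : (k : ℝ) * ∑ l ∈ PR Q t, (1 : ℝ) / (l : ℝ) ^ 2 ≤ k * 8 :=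
    mul_le_mul_of_nonneg_left h5 (Nat.cast_nonneg _)
  have h9 : Real.log L ≤ t * Real.log 2 := by
    rw [← Real.log_pow]
    refine Real.log_le_log hL0 ?_
    rw [hL]
    exact mul_le_of_le_one_right (by positivity) (by linarith)
  linarith

/-! ### The density of the sieve for polynomial values -/

open Classical in
/-- The indicator of the invertible roots of `H` modulo `l`. -/
noncomputable def badH (H : Polynomial ℤ) (l n : ℕ) : ℝ := if ¬ l ∣ n ∧ (l : ℤ) ∣ H.eval (n : ℤ) then 1 else 0

theorem dvd_eval_add (H : Polynomial ℤ) (l n : ℕ) :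
    (l : ℤ) ∣ H.eval ((n + l : ℕ) : ℤ) ↔ (l : ℤ) ∣ H.eval (n : ℤ) := by
  have h1 := Polynomial.sub_dvd_eval_sub ((n + l : ℕ) : ℤ) (n : ℤ) H
  rw [show ((n + l : ℕ) : ℤ) - n = l by push_cast; ring] at h1
  exact (dvd_iff_dvd_of_dvd_sub h1)

theorem rho_badH_le (H : Polynomial ℤ) (l : ℕ) : rho (badH H) l ≤ rootNum H l := by
  unfold rho rootNum badH
  rw [← sum_boole]
  refine sum_le_sum fun n _ => ?_
  split_ifs with h1 h2 h2
  · exact le_rfl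
  · exact absurd h1.2 h2
  · exact zero_le_one
  · exact le_rfl

theorem isBad_badH {H : Polynomial ℤ} (hd : 1 ≤ H.natDegree) {Q₀ : ℕ} (h1 : 4 * (H.natDegree + 1) ≤ Q₀)
    (h2 : H.leadingCoeff.natAbs ≤ Q₀) : IsBad H.natDegree Q₀ (badH H) where
  one_le := hd
  zo l n := by unfold badH; split_ifs <;> simp
  per l n := by
    unfold badH
    simp only [dvd_eval_add, Nat.dvd_add_self_right]
  dvd l n hl := by unfold badH; rw [if_neg fun h => h.1 hl]
  le l hl hQ := by
    refine (rho_badH_le H l).trans ?_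
    have h0 : H ≠ 0 := by rintro rfl; simp at hd
    have hlc : 0 < H.leadingCoeff.natAbs := Int.natAbs_pos.2 (Polynomial.leadingCoeff_ne_zero.2 h0)
    exact_mod_cast rootNum_le H hl fun hh => by
      have := Nat.le_of_dvd hlc (Int.natCast_dvd.1 hh)
      omega
  large := h1

/-- The roots of a product modulo a prime are roots of the factors; no multiplicity is gained if factors
share roots. -/
theorem rootNum_prod_le {g : ℕ} (h : Fin g → Polynomial ℤ) {l : ℕ} (hl : l.Prime) :
    rootNum (∏ i, h i) l ≤ ∑ i, rootNum (h i) l := by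
  classical
  unfold rootNum
  refine le_trans (card_le_card fun r hr => ?_) card_biUnion_le
  obtain ⟨h1, h2⟩ := mem_filter.1 hr
  rw [Polynomial.eval_prod] at h2
  obtain ⟨i, hi, h3⟩ := (Prime.dvd_finsetProd_iff (Nat.prime_iff_prime_int.1 hl) _).1 h2
  exact mem_biUnion.2 ⟨i, hi, mem_filter.2 ⟨h1, h3⟩⟩

theorem exp_neg_le_one_sub' {x : ℝ} (h1 : x ≤ 1 / 2) : Real.exp (-(x + 2 * x ^ 2)) ≤ 1 - x := by
  rw [← Real.le_log_iff_exp_le (by linarith)]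
  refine le_trans ?_ (Real.one_sub_inv_le_log_of_pos (by linarith))
  have : (1 - x)⁻¹ ≤ 1 + x + 2 * x ^ 2 := by
    rw [inv_le_iff_one_le_mul₀ (by linarith)]
    have : 0 ≤ x ^ 2 * (1 - 2 * x) := mul_nonneg (sq_nonneg _) (by linarith)
    linarith [show (1 + x + 2 * x ^ 2) * (1 - x) = 1 + x ^ 2 * (1 - 2 * x) by ring]
  linarith

/-- The density is at least of the order of `(log z) ^ (-g)`, where `g` is the number of irreducible
factors: on average each of them has at most one root modulo a prime. -/
theorem VH_badH_ge {g : ℕ} (h : Fin g → Polynomial ℤ) (hi : ∀ i, Irreducible (h i))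
    (hd : ∀ i, 0 < (h i).natDegree) (hD : 1 ≤ (∏ i, h i).natDegree) :
    ∃ (c : ℝ) (N t₀ : ℕ), 0 < c ∧ ∀ Q ≥ N, IsBad (∏ i, h i).natDegree Q (badH (∏ i, h i)) ∧
      ∀ t ≥ t₀, c / ((2 : ℝ) ^ t) ^ g ≤ VH (badH (∏ i, h i)) Q t := by
  choose C N t₀ hC using fun i => sum_rootNum_le (h i) (hi i) (hd i)
  obtain ⟨H, hH⟩ : ∃ H, H = ∏ i, h i := ⟨_, rfl⟩
  rw [← hH] at hD ⊢
  obtain ⟨D, hDd⟩ : ∃ D : ℝ, D = H.natDegree := ⟨_, rfl⟩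
  have hD1 : (1 : ℝ) ≤ D := by rw [hDd]; exact_mod_cast hD
  refine ⟨Real.exp (-(∑ i, C i + 8 * (2 * D + 8 * D ^ 2))), ∑ i, N i + 4 * (H.natDegree + 1) + H.leadingCoeff.natAbs,
    ∑ i, t₀ i, Real.exp_pos _, fun Q hQ => ?_⟩
  have hB : IsBad H.natDegree Q (badH H) := isBad_badH hD (by omega) (by omega)
  refine ⟨hB, fun t ht => ?_⟩
  have hN : ∀ i, N i ≤ Q := fun i => by
    have := single_le_sum (f := N) (fun j _ => Nat.zero_le _) (mem_univ i)
    omega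
  have ht₀ : ∀ i, t₀ i ≤ t := fun i => by
    have := single_le_sum (f := t₀) (fun j _ => Nat.zero_le _) (mem_univ i)
    omega
  have h1 : ∀ l ∈ PR Q t, gg (badH H) l + 2 * gg (badH H) l ^ 2 ≤
      ∑ i, (rootNum (h i) l : ℝ) / l + (2 * D + 8 * D ^ 2) * (1 / (l : ℝ) ^ 2) := by
    intro l hl
    obtain ⟨hp, hQl, -⟩ := mem_PR.1 hl
    have hl2 : (2 : ℝ) ≤ l := by exact_mod_cast hp.two_le
    have e0 := hB.gg_nonneg hp
    have e1 := hB.gg_le hp hQl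
    rw [← hDd] at e1
    have e2 : gg (badH H) l ^ 2 ≤ (2 * D * (1 / l)) ^ 2 := pow_le_pow_left₀ e0 e1 2
    have e3 : gg (badH H) l = rho (badH H) l / l + gg (badH H) l / l := by
      rw [gg]
      have : (l : ℝ) - 1 ≠ 0 := by linarith
      field_simp; ring
    have e4 : gg (badH H) l / l ≤ 2 * D * (1 / l) / l := div_le_div_of_nonneg_right e1 (by linarith)
    have e5 : rho (badH H) l / l ≤ ∑ i, (rootNum (h i) l : ℝ) / l := by
      rw [← sum_div]
      refine div_le_div_of_nonneg_right ((rho_badH_le H l).trans ?_) (by linarith)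
      rw [hH]
      exact_mod_cast rootNum_prod_le h hp
    have e6 : 2 * D * (1 / l) / l + 2 * (2 * D * (1 / l)) ^ 2 = (2 * D + 8 * D ^ 2) * (1 / (l : ℝ) ^ 2) := by
      field_simp; ring
    linarith
  have h2 : ∑ l ∈ PR Q t, (gg (badH H) l + 2 * gg (badH H) l ^ 2) ≤
      g * (t * Real.log 2) + ∑ i, C i + 8 * (2 * D + 8 * D ^ 2) := by
    refine (sum_le_sum h1).trans ?_
    rw [sum_add_distrib, ← mul_sum (PR Q t), sum_comm]
    have e1 : ∑ i, ∑ l ∈ PR Q t, (rootNum (h i) l : ℝ) / l ≤ ∑ i, (t * Real.log 2 + C i) :=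
      sum_le_sum fun i _ => hC i Q (hN i) t (ht₀ i)
    rw [sum_add_distrib, sum_const, card_univ, Fintype.card_fin, nsmul_eq_mul] at e1
    have e2 : ∑ l ∈ PR Q t, (1 : ℝ) / (l : ℝ) ^ 2 ≤ 8 := by
      rw [sum_PR]
      refine le_trans (sum_le_sum fun i _ => ?_) (sum_inv_sq_le t)
      exact sum_le_sum_of_subset_of_nonneg (PB_subset _ _) fun l _ _ => by positivity
    have e3 := mul_le_mul_of_nonneg_left e2 (show 0 ≤ 2 * D + 8 * D ^ 2 by positivity)
    linarith
  have h3 : Real.exp (-(∑ l ∈ PR Q t, (gg (badH H) l + 2 * gg (badH H) l ^ 2))) ≤ VH (badH H) Q t := by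
    rw [VH, ← prod_PR Q t fun l => 1 - gg (badH H) l, ← sum_neg_distrib, Real.exp_sum]
    refine prod_le_prod (fun _ _ => (Real.exp_pos _).le) fun l hl => ?_
    obtain ⟨hp, hQl, -⟩ := mem_PR.1 hl
    exact exp_neg_le_one_sub' (hB.gg_le_half hp hQl)
  refine le_trans ?_ h3
  have h4 : ((2 : ℝ) ^ t) ^ g = Real.exp (g * (t * Real.log 2)) := by
    rw [Real.exp_nat_mul, Real.exp_nat_mul, Real.exp_log (by norm_num)]
  rw [h4, ← Real.exp_sub]
  refine Real.exp_le_exp.2 ?_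
  linarith

/-! ### High powers of small primes dividing polynomial values -/

theorem prime_pow_dvd_of_dvd_mul {p : ℤ} (hp : Prime p) (m : ℕ) {y : ℤ} : ∀ (j : ℕ) {x : ℤ},
    ¬ p ^ j ∣ x → p ^ (m + j) ∣ x * y → p ^ m ∣ y
  | 0, x, h1, _ => absurd (by simp) h1
  | j + 1, x, h1, h2 => by
    by_cases hx : p ∣ x
    · obtain ⟨x', rfl⟩ := hx
      refine prime_pow_dvd_of_dvd_mul hp m j (x := x') (fun h => h1 ?_) ?_
      · rw [pow_succ, mul_comm]; exact mul_dvd_mul_left p h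
      · rw [← add_assoc, pow_succ, mul_comm, mul_assoc] at h2
        exact (mul_dvd_mul_iff_left hp.ne_zero).1 h2
    · exact (pow_dvd_pow p (by omega)).trans (hp.pow_dvd_of_dvd_mul_left _ hx h2)

/-- The integers at which a polynomial of degree `d` is divisible by a high power of `p` occupy at
most `d` residue classes modulo `p ^ j`. -/
theorem card_image_emod_le {p : ℕ} (hp : p.Prime) (j : ℕ) : ∀ (d : ℕ) (H : Polynomial ℤ), H ≠ 0 → H.natDegree = d →
    ∀ S : Finset ℤ, (∀ n ∈ S, (p : ℤ) ^ (H.leadingCoeff.natAbs + d * j) ∣ H.eval n) →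
      #(S.image fun n => n % (p : ℤ) ^ j) ≤ d := by
  intro d
  induction d with
  | zero =>
    intro H h0 hd S hS
    rw [Nat.le_zero, card_eq_zero, image_eq_empty, eq_empty_iff_forall_notMem]
    intro n hn
    have h1 := hS n hn
    have hlc : 0 < H.leadingCoeff.natAbs := Int.natAbs_pos.2 (Polynomial.leadingCoeff_ne_zero.2 h0)
    have h2 : H.eval n = H.leadingCoeff := by
      rw [Polynomial.leadingCoeff, hd, Polynomial.eq_C_of_natDegree_eq_zero hd]; simp
    rw [h2, zero_mul, add_zero, ← Nat.cast_pow] at h1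
    have h3 := Nat.le_of_dvd hlc (Int.natCast_dvd.1 h1)
    exact absurd h3 (not_le.2 (Nat.lt_pow_self hp.one_lt))
  | succ d ih =>
    intro H h0 hd S hS
    rcases S.eq_empty_or_nonempty with rfl | ⟨a, ha⟩
    · simp
    have hmon := Polynomial.monic_X_sub_C a
    obtain ⟨G, hG⟩ : ∃ G, G = H /ₘ (Polynomial.X - Polynomial.C a) := ⟨_, rfl⟩
    have hdeg : G.natDegree = d := by
      rw [hG, Polynomial.natDegree_divByMonic H hmon, hd, Polynomial.natDegree_X_sub_C]; rfl
    have hlc : G.leadingCoeff = H.leadingCoeff := by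
      rw [hG]
      refine Polynomial.leadingCoeff_divByMonic_of_monic hmon ?_
      rw [Polynomial.degree_X_sub_C]
      rw [Polynomial.degree_eq_natDegree h0, hd]
      exact_mod_cast Nat.succ_le_succ (Nat.zero_le d)
    have hG0 : G ≠ 0 := by
      rw [← Polynomial.leadingCoeff_ne_zero, hlc]; exact Polynomial.leadingCoeff_ne_zero.2 h0
    have hev : ∀ n, H.eval n = H.eval a + (n - a) * G.eval n := by
      intro n
      have := congrArg (Polynomial.eval n) (Polynomial.modByMonic_add_div H (Polynomial.X - Polynomial.C a))
      rw [Polynomial.modByMonic_X_sub_C_eq_C_eval, ← hG] at this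
      simpa using this.symm
    have h1 := ih G hG0 hdeg (S.filter fun n => ¬ (p : ℤ) ^ j ∣ n - a) (by
      intro n hn
      obtain ⟨hn, hna⟩ := mem_filter.1 hn
      refine prime_pow_dvd_of_dvd_mul (Nat.prime_iff_prime_int.1 hp) _ j hna ?_
      rw [hlc, add_assoc, ← Nat.succ_mul]
      have h2 := hev n
      have h3 := dvd_sub (hS n hn) (hS a ha)
      rwa [h2, add_sub_cancel_left] at h3)
    calc _ ≤ #(insert (a % (p : ℤ) ^ j) ((S.filter fun n => ¬ (p : ℤ) ^ j ∣ n - a).image fun n => n % (p : ℤ) ^ j)) := by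
          refine card_le_card fun r hr => ?_
          obtain ⟨n, hn, rfl⟩ := mem_image.1 hr
          by_cases hna : (p : ℤ) ^ j ∣ n - a
          · exact mem_insert.2 (Or.inl ((Int.modEq_iff_dvd.2 hna).symm))
          · exact mem_insert_of_mem (mem_image_of_mem _ (mem_filter.2 ⟨hn, hna⟩))
      _ ≤ _ := (card_insert_le _ _).trans (by omega)

/-- Residues modulo `p ^ m` at which `p ^ m` divides a polynomial of degree `d` have a proportion of at
most `d / p ^ j ≤ d / 2 ^ j`. -/
theorem card_pow_dvd_eval_le {p : ℕ} (hp : p.Prime) (j : ℕ) {H : Polynomial ℤ} (hd : 1 ≤ H.natDegree) {m : ℕ}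
    (hm : m = H.leadingCoeff.natAbs + H.natDegree * j) :
    (#((range (p ^ m)).filter fun n : ℕ => ((p ^ m : ℕ) : ℤ) ∣ H.eval (n : ℤ)) : ℝ) ≤ (p : ℝ) ^ m * (H.natDegree / 2 ^ j) := by
  have h0 : H ≠ 0 := by rintro rfl; simp at hd
  have hjm : j ≤ m := by rw [hm]; nlinarith [Nat.zero_le H.leadingCoeff.natAbs]
  obtain ⟨S, hS⟩ : ∃ S, S = (range (p ^ m)).filter fun n : ℕ => ((p ^ m : ℕ) : ℤ) ∣ H.eval (n : ℤ) := ⟨_, rfl⟩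
  rw [← hS]
  have hpj : 0 < p ^ j := pow_pos hp.pos j
  have h1 : #(S.image fun n => n % p ^ j) ≤ H.natDegree := by
    have := card_image_emod_le hp j _ H h0 rfl (S.image fun n : ℕ => (n : ℤ)) (by
      intro n hn
      obtain ⟨n, hn', rfl⟩ := mem_image.1 hn
      rw [hS] at hn'
      have := (mem_filter.1 hn').2
      rw [← hm]
      exact_mod_cast this)
    rw [image_image] at this
    refine le_trans (le_of_eq ?_) this
    rw [← card_image_of_injective (S.image fun n => n % p ^ j) (Nat.cast_injective (R := ℤ)), image_image]
    congr 1
  have h2 : #S ≤ p ^ (m - j) * #(S.image fun n => n % p ^ j) := by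
    refine card_le_mul_card_image S _ fun r _ => ?_
    rw [← card_range (p ^ (m - j))]
    refine card_le_card_of_injOn (fun n => n / p ^ j) (fun n hn => ?_) fun n hn n' hn' he => ?_
    · have hn := (mem_filter.1 (mem_coe.1 hn)).1
      rw [hS] at hn
      have := mem_range.1 (mem_filter.1 hn).1
      refine mem_coe.2 (mem_range.2 (Nat.div_lt_of_lt_mul ?_))
      rwa [← pow_add, Nat.add_sub_cancel' hjm]
    · have e1 := (mem_filter.1 (mem_coe.1 hn)).2
      have e2 := (mem_filter.1 (mem_coe.1 hn')).2
      have e3 := Nat.div_add_mod n (p ^ j)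
      have e4 := Nat.div_add_mod n' (p ^ j)
      simp only at he
      rw [he, e1] at e3
      rw [e2] at e4
      exact e3.symm.trans e4
  have h3 : (#S : ℝ) ≤ (p : ℝ) ^ (m - j) * H.natDegree := by
    exact_mod_cast h2.trans (Nat.mul_le_mul_left _ h1)
  have hp2 : (2 : ℝ) ≤ p := by exact_mod_cast hp.two_le
  have h4 : (p : ℝ) ^ m = p ^ (m - j) * p ^ j := by rw [← pow_add, Nat.sub_add_cancel hjm]
  refine h3.trans ?_
  rw [h4, mul_assoc]
  refine mul_le_mul_of_nonneg_left ?_ (by positivity)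
  rw [← mul_div_assoc, le_div_iff₀ (by positivity), mul_comm]
  exact mul_le_mul_of_nonneg_right (pow_le_pow_left₀ (by norm_num) hp2 j) (Nat.cast_nonneg _)

/-! ### Upper bounds for good integers with weights -/

theorem isSieve_PB {D Q₀ : ℕ} {B : ℕ → ℕ → ℝ} (h : IsBad D Q₀ B) (t : ℕ) :
    IsSieve (2 * D) (PB Q₀) (fA B Q₀ t) where
  one_le := (isSieve_fA h t).one_le
  sub := PB_subset Q₀
  zo := (isSieve_fA h t).zo
  per := (isSieve_fA h t).per
  le i l hl := (isSieve_fA h t).le i l (PB_subset _ _ hl)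
  half i l hl := (isSieve_fA h t).half i l (PB_subset _ _ hl)

/-- Omitting the primes up to `Q₀` from the sieve changes the density by a bounded factor only. -/
theorem VV_PB_le {D Q₀ : ℕ} {B : ℕ → ℕ → ℝ} (h : IsBad D Q₀ B) {s t : ℕ} (hts : t ≤ s) :
    VV (PB Q₀) (fA B Q₀ t) s ≤ 2 ^ Q₀ * (VV Blk dvdf s * VH B Q₀ t) := by
  have hS := isSieve_fA h t
  rw [← VV_fA h hts]
  obtain ⟨U, hU⟩ : ∃ U, U = (range s).biUnion fun i => (Blk i).filter fun l : ℕ => ¬ Q₀ < l := ⟨_, rfl⟩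
  have h1 : VV Blk (fA B Q₀ t) s = VV (PB Q₀) (fA B Q₀ t) s * ∏ l ∈ U, (1 - rho (fA B Q₀ t) l / l) := by
    rw [hU, prod_biUnion fun i _ j _ hij => disjoint_of_subset_left (filter_subset _ _)
      (disjoint_of_subset_right (filter_subset _ _) (Blk_disjoint hij)), VV, VV, ← prod_mul_distrib]
    refine prod_congr rfl fun i _ => ?_
    rw [Vb, Vb, PB, prod_filter_mul_prod_filter_not]
  have h2 : (1 / 2 : ℝ) ^ Q₀ ≤ ∏ l ∈ U, (1 - rho (fA B Q₀ t) l / l) := by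
    have hc : #U ≤ Q₀ := by
      refine le_trans (card_le_card (t := Icc 1 Q₀) fun l hl => ?_) (by simp)
      rw [hU] at hl
      obtain ⟨i, -, hl⟩ := mem_biUnion.1 hl
      obtain ⟨h1, h2⟩ := mem_filter.1 hl
      exact mem_Icc.2 ⟨(mem_Blk.1 h1).2.1.one_le, not_lt.1 h2⟩
    refine (pow_le_pow_of_le_one (by norm_num) (by norm_num) hc).trans ?_
    rw [← prod_const]
    refine prod_le_prod (fun _ _ => by norm_num) fun l hl => ?_
    rw [hU] at hl
    obtain ⟨i, -, hl⟩ := mem_biUnion.1 hl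
    have hl' := (mem_filter.1 hl).1
    have hl0 : (0 : ℝ) < l := by exact_mod_cast (mem_Blk.1 hl').2.1.pos
    have h3 := hS.half i l hl'
    have : rho (fA B Q₀ t) l / l ≤ 1 / 2 := by rw [div_le_iff₀ hl0]; linarith
    linarith
  rw [h1]
  have h3 := mul_le_mul_of_nonneg_left h2 ((isSieve_PB h t).VV_pos s).le
  have h4 : (2 : ℝ) ^ Q₀ * (1 / 2) ^ Q₀ = 1 := by rw [← mul_pow]; norm_num
  calc VV (PB Q₀) (fA B Q₀ t) s = 2 ^ Q₀ * (VV (PB Q₀) (fA B Q₀ t) s * (1 / 2) ^ Q₀) := by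
        rw [mul_left_comm, h4, mul_one]
    _ ≤ _ := mul_le_mul_of_nonneg_left h3 (by positivity)

open Classical in
/-- Upper bound for the number of good integers in a set of residue classes modulo a product of small
primes. -/
theorem good_weight_le {D Q₀ : ℕ} {B : ℕ → ℕ → ℝ} (h : IsBad D Q₀ B) (b : ℕ) {s t : ℕ} (hts : t ≤ s)
    (he : eps (2 * D) b ≤ 1) {w : ℕ} (hw : 0 < w) (hwQ : ∀ l : ℕ, l.Prime → Q₀ < l → w.Coprime l)
    (q : ℕ → ℝ) (hq0 : ∀ n, 0 ≤ q n) (hq : Function.Periodic q w) {X Y : ℕ} (hXY : X ≤ Y) :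
    ∑ n ∈ Ioc X Y with Good B Q₀ s t n, q n ≤
      ((Y : ℝ) - X) / w * (∑ n ∈ range w, q n) * (2 * (2 ^ Q₀ * (VV Blk dvdf s * VH B Q₀ t)))
        + (∑ n ∈ range w, q n) * ((2 : ℝ) ^ 2 ^ s) ^ Cx (2 * D) b := by
  have h1 := (isSieve_PB h t).upper b s he w hw (fun i _ l hl =>
    hwQ l (mem_Blk.1 (PB_subset _ _ hl)).2.1 (mem_filter.1 hl).2) q hq0 hq hXY
  have hYX : (0 : ℝ) ≤ (Y : ℝ) - X := sub_nonneg.2 (by exact_mod_cast hXY)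
  have hσ : 0 ≤ ∑ n ∈ range w, q n := sum_nonneg fun n _ => hq0 n
  have h2 : (1 + eps (2 * D) b) * VV (PB Q₀) (fA B Q₀ t) s ≤ 2 * (2 ^ Q₀ * (VV Blk dvdf s * VH B Q₀ t)) :=
    mul_le_mul (by linarith) (VV_PB_le h hts) ((isSieve_PB h t).VV_pos s).le (by norm_num)
  have h3 := mul_le_mul_of_nonneg_left h2 (show 0 ≤ ((Y : ℝ) - X) / w * (∑ n ∈ range w, q n) by positivity)
  refine le_trans ?_ (h1.trans (by linarith))
  rw [sum_filter]
  refine sum_le_sum fun n _ => ?_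
  have h01 : ∀ l, 0 ≤ 1 - fA B Q₀ t l n := fun l => by
    rcases (isSieve_fA h t).zo l n with h | h <;> rw [h] <;> norm_num
  split_ifs with hg
  · refine le_of_eq ?_
    have h4 := prod_fA h hts n
    rw [if_pos hg] at h4
    have h5 : ∏ i ∈ range s, ∏ l ∈ PB Q₀ i, (1 - fA B Q₀ t l n) = 1 := by
      refine le_antisymm (prod_le_one (fun i _ => prod_nonneg fun l _ => h01 l) fun i _ =>
        prod_le_one (fun l _ => h01 l) fun l _ => ?_) ?_
      · rcases (isSieve_fA h t).zo l n with h | h <;> rw [h] <;> norm_num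
      · refine h4.ge.trans ?_
        refine prod_le_prod (fun i _ => prod_nonneg fun l _ => h01 l) fun i _ => ?_
        refine prod_le_prod_of_subset_of_le_one (PB_subset _ _) (fun l _ => h01 l) fun l _ _ => ?_
        rcases (isSieve_fA h t).zo l n with h | h <;> rw [h] <;> norm_num
    rw [h5, mul_one]
  · exact mul_nonneg (hq0 n) (prod_nonneg fun i _ => prod_nonneg fun l _ => h01 l)

/-- An integer without large powers of small primes and without medium-sized prime factors has
boundedly many prime factors. -/
theorem cardFactors_le {N Q₀ m z R : ℕ} (hN : N ≠ 0) (hz : 2 ≤ z) (h1 : ∀ q ≤ Q₀, q.Prime → ¬ q ^ m ∣ N)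
    (h2 : ∀ q, q.Prime → q ∣ N → Q₀ < q → z ≤ q) (h3 : N ≤ z ^ R) :
    ArithmeticFunction.cardFactors N ≤ Q₀ * m + R := by
  have e1 : ArithmeticFunction.cardFactors N = ∑ q ∈ N.primeFactors, N.factorization q := by
    rw [ArithmeticFunction.cardFactors_eq_sum_factorization]; rfl
  rw [e1, ← sum_filter_add_sum_filter_not N.primeFactors (fun q => q ≤ Q₀)]
  refine add_le_add ?_ ?_
  · have hc : #(N.primeFactors.filter fun q => q ≤ Q₀) ≤ Q₀ := by
      refine le_trans (card_le_card (t := Icc 1 Q₀) fun l hl => ?_) (by simp)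
      obtain ⟨h1, h2⟩ := mem_filter.1 hl
      exact mem_Icc.2 ⟨(Nat.prime_of_mem_primeFactors h1).one_le, h2⟩
    refine (sum_le_card_nsmul _ _ m fun q hq => ?_).trans ?_
    · obtain ⟨hq1, hq2⟩ := mem_filter.1 hq
      have hp := Nat.prime_of_mem_primeFactors hq1
      by_contra! hlt
      exact h1 q hq2 hp ((hp.pow_dvd_iff_le_factorization hN).2 hlt.le)
    · rw [smul_eq_mul]; exact Nat.mul_le_mul_right m hc
  · refine (Nat.pow_le_pow_iff_right (show 1 < z by omega)).1 (le_trans ?_ h3)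
    rw [← prod_pow_eq_pow_sum]
    calc ∏ q ∈ N.primeFactors.filter (fun q => ¬ q ≤ Q₀), z ^ N.factorization q
        ≤ ∏ q ∈ N.primeFactors.filter (fun q => ¬ q ≤ Q₀), q ^ N.factorization q := by
          refine prod_le_prod (fun _ _ => Nat.zero_le _) fun q hq => ?_
          obtain ⟨hq1, hq2⟩ := mem_filter.1 hq
          exact Nat.pow_le_pow_left (h2 q (Nat.prime_of_mem_primeFactors hq1) (Nat.dvd_of_mem_primeFactors hq1)
            (not_le.1 hq2)) _
      _ ≤ ∏ q ∈ N.primeFactors, q ^ N.factorization q := by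
          refine prod_le_prod_of_subset_of_one_le' (filter_subset _ _) fun q hq _ => ?_
          exact Nat.one_le_pow _ _ (Nat.prime_of_mem_primeFactors hq).pos
      _ = N := Nat.prod_factorization_pow_eq_self hN

theorem natAbs_eval_le (H : Polynomial ℤ) : ∃ C : ℕ, ∀ n : ℕ, 1 ≤ n → (H.eval (n : ℤ)).natAbs ≤ C * n ^ H.natDegree := by
  refine ⟨∑ i ∈ range (H.natDegree + 1), (H.coeff i).natAbs, fun n hn => ?_⟩
  rw [Polynomial.eval_eq_sum_range, sum_mul]
  refine (Int.natAbs_sum_le _ _).trans (sum_le_sum fun i hi => ?_)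
  rw [Int.natAbs_mul, Int.natAbs_pow, Int.natAbs_natCast]
  exact Nat.mul_le_mul_left _ (Nat.pow_le_pow_right hn (by have := mem_range.1 hi; omega))

/-! ### Removing high powers of small primes -/

/-- The contribution of the proper prime powers to a sum of the von Mangoldt function. -/
theorem sum_not_prime_le {X : ℕ} (hX : 1 ≤ X) :
    ∑ n ∈ Ioc X (2 * X) with ¬ n.Prime, ArithmeticFunction.vonMangoldt n ≤ 4 * √X * Real.log (2 * X) := by
  have hX' : (1 : ℝ) ≤ X := by exact_mod_cast hX
  have h1 := Chebyshev.psi_sub_theta_le (x := ((2 * X : ℕ) : ℝ)) (by exact_mod_cast (by omega : 1 ≤ 2 * X))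
  have h2 : ∑ n ∈ Ioc 0 (2 * X) with ¬ n.Prime, ArithmeticFunction.vonMangoldt n
      = Chebyshev.psi ((2 * X : ℕ) : ℝ) - Chebyshev.theta ((2 * X : ℕ) : ℝ) := by
    rw [Chebyshev.psi, Chebyshev.theta, Nat.floor_natCast, eq_sub_iff_add_eq, add_comm,
      ← sum_filter_add_sum_filter_not (Ioc 0 (2 * X)) (fun n => n.Prime)]
    congr 1
    exact sum_congr rfl fun p hp => (ArithmeticFunction.vonMangoldt_apply_prime (mem_filter.1 hp).2).symm
  have h3 : ∑ n ∈ Ioc X (2 * X) with ¬ n.Prime, ArithmeticFunction.vonMangoldt n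
      ≤ ∑ n ∈ Ioc 0 (2 * X) with ¬ n.Prime, ArithmeticFunction.vonMangoldt n :=
    sum_le_sum_of_subset_of_nonneg (filter_subset_filter _ (Ioc_subset_Ioc_left (Nat.zero_le X)))
      fun _ _ _ => ArithmeticFunction.vonMangoldt_nonneg
  rw [h2] at h3
  refine h3.trans (h1.trans ?_)
  have h4 : √((2 * X : ℕ) : ℝ) ≤ 2 * √X := by
    rw [show (2 : ℝ) = √4 by rw [show (4 : ℝ) = 2 ^ 2 by norm_num]; exact (Real.sqrt_sq (by norm_num)).symm,
      ← Real.sqrt_mul (by norm_num)]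
    refine Real.sqrt_le_sqrt ?_
    push_cast
    linarith
  have h5 : 0 ≤ Real.log (2 * X) := Real.log_nonneg (by linarith)
  push_cast at h4 ⊢
  calc 2 * √(2 * X) * Real.log (2 * X) ≤ 2 * (2 * √X) * Real.log (2 * X) := by gcongr
    _ = _ := by ring

/-- The number of good integers `n` at which a high power of a small prime `q` divides `H n`, by the
upper bound sieve. -/
theorem count_power_le {H : Polynomial ℤ} (hd : 1 ≤ H.natDegree) {Q₀ : ℕ} (hB : IsBad H.natDegree Q₀ (badH H))
    (b : ℕ) (he : eps (2 * H.natDegree) b ≤ 1) {j m : ℕ} (hm : m = H.leadingCoeff.natAbs + H.natDegree * j)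
    {s t : ℕ} (hts : t ≤ s) (X : ℕ) {q : ℕ} (hq : q.Prime) (hqQ : q ≤ Q₀) (F : Finset ℕ)
    (hF : ∀ n ∈ F, n ∈ Ioc X (2 * X) ∧ Good (badH H) Q₀ s t n) :
    (#(F.filter fun n : ℕ => ((q ^ m : ℕ) : ℤ) ∣ H.eval (n : ℤ)) : ℝ) ≤
      X * (H.natDegree / 2 ^ j) * (2 * (2 ^ Q₀ * (1 / Real.log (2 ^ 2 ^ s) * VH (badH H) Q₀ t)))
        + (Q₀ : ℝ) ^ m * ((2 : ℝ) ^ 2 ^ s) ^ Cx (2 * H.natDegree) b := by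
  classical
  obtain ⟨w, hw⟩ : ∃ w, w = q ^ m := ⟨_, rfl⟩
  have hw0 : 0 < w := hw ▸ pow_pos hq.pos m
  rw [← hw]
  have hV := hB.VH_pos t
  have h1 := good_weight_le hB b hts he hw0 (fun l hl hQl => by
    rw [hw]
    exact Nat.Coprime.pow_left _ ((Nat.coprime_primes hq hl).2 (by omega)))
    (fun n : ℕ => if (w : ℤ) ∣ H.eval (n : ℤ) then 1 else 0) (fun n => by split_ifs <;> norm_num)
    (fun n => by simp only [dvd_eval_add]) (show X ≤ 2 * X by omega)
  rw [sum_boole, sum_boole] at h1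
  have h2 := card_pow_dvd_eval_le hq j hd hm
  rw [← hw, ← Nat.cast_pow, ← hw] at h2
  obtain ⟨σ, hσ⟩ : ∃ σ : ℝ, σ = (#((range w).filter fun n : ℕ => (w : ℤ) ∣ H.eval (n : ℤ)) : ℝ) := ⟨_, rfl⟩
  rw [← hσ] at h1 h2
  have hσw : σ ≤ (Q₀ : ℝ) ^ m := by
    have e1 : #((range w).filter fun n : ℕ => (w : ℤ) ∣ H.eval (n : ℤ)) ≤ Q₀ ^ m := by
      refine (card_filter_le _ _).trans ?_
      rw [card_range, hw]
      exact Nat.pow_le_pow_left hqQ m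
    rw [hσ]
    exact_mod_cast e1
  have h3 : (#(F.filter fun n : ℕ => (w : ℤ) ∣ H.eval (n : ℤ)) : ℝ) ≤
      #((Ioc X (2 * X)).filter (fun n => Good (badH H) Q₀ s t n) |>.filter fun n : ℕ => (w : ℤ) ∣ H.eval (n : ℤ)) := by
    refine Nat.cast_le.2 (card_le_card (filter_subset_filter _ fun n hn => ?_))
    exact mem_filter.2 (hF n hn)
  refine h3.trans (h1.trans (add_le_add ?_ (mul_le_mul_of_nonneg_right hσw (by positivity))))
  have hw' : (0 : ℝ) < w := by exact_mod_cast hw0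
  have hvv := (isSieve_dvdf.VV_pos s).le
  have h4 : (((2 * X : ℕ) : ℝ) - X) / w * σ ≤ X * (H.natDegree / 2 ^ j) := by
    rw [show ((2 * X : ℕ) : ℝ) - X = X by push_cast; ring, div_mul_eq_mul_div, div_le_iff₀ hw']
    calc (X : ℝ) * σ ≤ X * (w * (H.natDegree / 2 ^ j)) := mul_le_mul_of_nonneg_left h2 (Nat.cast_nonneg _)
      _ = _ := by ring
  refine mul_le_mul h4 ?_ (by positivity) (by positivity)
  have h5 := VV_dvdf_le s
  gcongr

open Classical in
/-- The good primes `p` for which no prime `q ≤ Q₀` divides `H p` to the power `m`. Discarding the prime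
powers and the primes with `q ^ m ∣ H p` for some `q ≤ Q₀` costs at most half of the lower bound of
`main_lower`. -/
theorem count_ge {H : Polynomial ℤ} (hd : 1 ≤ H.natDegree) (N₀ : ℕ)
    (hB : ∀ Q ≥ N₀, IsBad H.natDegree Q (badH H)) : ∃ a E Q₀ m t₀ : ℕ, 2 ≤ E ∧ N₀ ≤ Q₀ ∧
    ∀ t ≥ t₀, ∀ X : ℕ, (2 ^ 2 ^ (t + a)) ^ E ≤ X → X < (2 ^ 2 ^ (t + a)) ^ (2 * E) →
      VH (badH H) Q₀ t * X / 20 ≤ Real.log (2 * X) *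
        #{p ∈ Ioc X (2 * X) | (p.Prime ∧ Good (badH H) Q₀ (t + a) t p) ∧
          ∀ q ≤ Q₀, q.Prime → ¬ ((q ^ m : ℕ) : ℤ) ∣ H.eval (p : ℤ)} := by
  obtain ⟨D, hD⟩ : ∃ D, D = H.natDegree := ⟨_, rfl⟩
  obtain ⟨a, b, E, Q₁, hE2, he, hCE, hmain⟩ := main_lower H.natDegree hd
  obtain ⟨Q₀, hQ₀⟩ : ∃ Q₀, Q₀ = max Q₁ N₀ := ⟨_, rfl⟩
  obtain ⟨t₁, ht₁⟩ := hmain Q₀ (hQ₀ ▸ le_max_left _ _)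
  have hB := hB Q₀ (hQ₀ ▸ le_max_right _ _)
  obtain ⟨F, hF⟩ : ∃ F : ℝ, F = 2 * E + 1 := ⟨_, rfl⟩
  have hF0 : 0 < F := by rw [hF]; positivity
  -- `j` makes the proportion `D / 2 ^ j` small compared to all constants of the upper bound sieve.
  obtain ⟨j, hj⟩ := pow_unbounded_of_one_lt (80 * ((Q₀ + 1) * F * D * (2 * 2 ^ Q₀))) (show (1 : ℝ) < 2 by norm_num)
  obtain ⟨m, hm⟩ : ∃ m, m = H.leadingCoeff.natAbs + H.natDegree * j := ⟨_, rfl⟩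
  obtain ⟨K, hK⟩ : ∃ K : ℝ, K = 160 * F + 80 * (F * (Q₀ + 1) * Q₀ ^ m) := ⟨_, rfl⟩
  obtain ⟨t₂, ht₂⟩ := exists_t K (32 * H.natDegree)
  refine ⟨a, E, Q₀, m, t₁ + t₂, hE2, hQ₀ ▸ le_max_right _ _, fun t ht X hX1 hX2 => ?_⟩
  have hS := ht₁ _ hB t (by omega) X hX1 hX2
  have hz := ht₂ t (by omega)
  obtain ⟨s, hs⟩ : ∃ s, s = t + a := ⟨_, rfl⟩
  rw [← hs] at hX1 hX2 hS ⊢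
  have hts : t ≤ s := by omega
  obtain ⟨V, hV⟩ : ∃ V, V = VH (badH H) Q₀ t := ⟨_, rfl⟩
  have hV0 : 0 < V := hV ▸ hB.VH_pos t
  have hVge := VH_ge hB t
  rw [← hV] at hVge hS ⊢
  obtain ⟨y, hy⟩ : ∃ y : ℝ, y = 2 ^ 2 ^ s := ⟨_, rfl⟩
  have hy2 : 2 ≤ y := by
    rw [hy]
    calc (2 : ℝ) = 2 ^ 1 := (pow_one _).symm
      _ ≤ _ := pow_le_pow_right₀ (by norm_num) Nat.one_le_two_pow
  have hy1 : 1 ≤ y := by linarith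
  have hXy : y ^ E ≤ X := by rw [hy]; exact_mod_cast hX1
  have hXy' : (X : ℝ) ≤ y ^ (2 * E) := by rw [hy]; exact_mod_cast hX2.le
  have hyV : K ≤ y * V := by
    have e1 : K * ((2 : ℝ) ^ t) ^ (32 * H.natDegree) ≤ y := by
      rw [hy]
      exact hz.trans (pow_le_pow_right₀ (by norm_num) (Nat.pow_le_pow_right (by norm_num) hts))
    have e2 : (0 : ℝ) < ((2 : ℝ) ^ t) ^ (32 * H.natDegree) := by positivity
    calc K ≤ y * (((2 : ℝ) ^ t) ^ (32 * H.natDegree))⁻¹ := by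
          rw [← div_eq_mul_inv]; exact (le_div_iff₀ e2).2 e1
      _ ≤ _ := mul_le_mul_of_nonneg_left hVge (by linarith)
  obtain ⟨lam, hlam⟩ : ∃ lam : ℝ, lam = Real.log y := ⟨_, rfl⟩
  have hlam0 : 0 < lam := hlam ▸ Real.log_pos (by linarith)
  have hlamy : lam ≤ y := hlam ▸ (Real.log_le_sub_one_of_pos (by linarith)).trans (by linarith)
  have hX1' : (1 : ℝ) ≤ X := (one_le_pow₀ hy1).trans hXy
  obtain ⟨L, hL⟩ : ∃ L : ℝ, L = Real.log (2 * X) := ⟨_, rfl⟩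
  have hL0 : 0 ≤ L := hL ▸ Real.log_nonneg (by linarith)
  have hLF : L ≤ F * lam := by
    calc L ≤ Real.log (y ^ (2 * E + 1)) := by
          rw [hL]
          refine Real.log_le_log (by linarith) ?_
          rw [pow_succ, mul_comm]
          exact mul_le_mul hXy' hy2 (by norm_num) (by positivity)
      _ = _ := by rw [Real.log_pow, hF, hlam]; push_cast; ring
  rw [← hL]
  obtain ⟨G, hG⟩ : ∃ G, G = (Ioc X (2 * X)).filter fun n => Good (badH H) Q₀ s t n := ⟨_, rfl⟩
  rw [← hG] at hS
  obtain ⟨A, hA⟩ : ∃ A, A = {p ∈ Ioc X (2 * X) | (p.Prime ∧ Good (badH H) Q₀ s t p) ∧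
          ∀ q ≤ Q₀, q.Prime → ¬ ((q ^ m : ℕ) : ℤ) ∣ H.eval (p : ℤ)} := ⟨_, rfl⟩
  rw [← hA]
  obtain ⟨Y, hY⟩ : ∃ Y, Y = (range (Q₀ + 1)).filter Nat.Prime := ⟨_, rfl⟩
  have hpt : ∀ n ∈ G, ArithmeticFunction.vonMangoldt n ≤ (if ¬ n.Prime then ArithmeticFunction.vonMangoldt n else 0) +
      L * ((if n ∈ A then 1 else 0) + ∑ q ∈ Y, if ((q ^ m : ℕ) : ℤ) ∣ H.eval (n : ℤ) then (1 : ℝ) else 0) := by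
    intro n hn
    rw [hG] at hn
    obtain ⟨hn1, hn2⟩ := mem_filter.1 hn
    have hn3 := mem_Ioc.1 hn1
    have h0 : 0 ≤ ∑ q ∈ Y, if ((q ^ m : ℕ) : ℤ) ∣ H.eval (n : ℤ) then (1 : ℝ) else 0 :=
      sum_nonneg fun q _ => by split_ifs <;> norm_num
    by_cases hp : n.Prime
    · rw [if_neg (not_not.2 hp), zero_add]
      have e1 : ArithmeticFunction.vonMangoldt n ≤ L := by
        rw [ArithmeticFunction.vonMangoldt_apply_prime hp, hL]
        exact Real.log_le_log (by exact_mod_cast hp.pos) (by exact_mod_cast hn3.2)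
      refine e1.trans (le_mul_of_one_le_right hL0 ?_)
      by_cases hnA : n ∈ A
      · rw [if_pos hnA]; linarith
      · rw [hA, mem_filter] at hnA
        push Not at hnA
        obtain ⟨q, hqQ, hq, hdv⟩ := hnA hn1 ⟨hp, hn2⟩
        have hqY : q ∈ Y := hY ▸ mem_filter.2 ⟨mem_range.2 (by omega), hq⟩
        have e2 := single_le_sum (f := fun q => if ((q ^ m : ℕ) : ℤ) ∣ H.eval (n : ℤ) then (1 : ℝ) else 0)
          (fun q _ => by split_ifs <;> norm_num) hqY
        rw [if_pos hdv] at e2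
        have e3 : (0 : ℝ) ≤ if n ∈ A then 1 else 0 := by split_ifs <;> norm_num
        linarith
    · rw [if_pos hp]
      have e3 : (0 : ℝ) ≤ if n ∈ A then 1 else 0 := by split_ifs <;> norm_num
      have := mul_nonneg hL0 (add_nonneg e3 h0)
      linarith
  have hsum := sum_le_sum hpt
  rw [sum_add_distrib, ← mul_sum G, sum_add_distrib, sum_comm, ← sum_filter] at hsum
  have g1 : ∑ n ∈ G with ¬ n.Prime, ArithmeticFunction.vonMangoldt n ≤ V * X / 40 := by
    have e1 : ∑ n ∈ G with ¬ n.Prime, ArithmeticFunction.vonMangoldt n ≤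
        ∑ n ∈ Ioc X (2 * X) with ¬ n.Prime, ArithmeticFunction.vonMangoldt n :=
      sum_le_sum_of_subset_of_nonneg (filter_subset_filter _ (hG ▸ filter_subset _ _))
        fun _ _ _ => ArithmeticFunction.vonMangoldt_nonneg
    refine e1.trans ((sum_not_prime_le (by exact_mod_cast hX1')).trans ?_)
    rw [← hL]
    have e2 : y ^ 2 ≤ √(X : ℝ) := by
      refine Real.le_sqrt_of_sq_le (le_trans ?_ hXy)
      rw [← pow_mul]
      refine pow_le_pow_right₀ hy1 ?_
      have : 6 ≤ Cx (2 * H.natDegree) b := by unfold Cx; nlinarith [Nat.zero_le b, Nat.zero_le H.natDegree]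
      omega
    have e3 : 160 * L ≤ V * √(X : ℝ) := by
      calc 160 * L ≤ 160 * F * y := by nlinarith
        _ ≤ K * y := mul_le_mul_of_nonneg_right (by rw [hK]; linarith [show 0 ≤ 80 * (F * (Q₀ + 1) * Q₀ ^ m) by positivity]) (by linarith)
        _ ≤ (y * V) * y := mul_le_mul_of_nonneg_right hyV (by linarith)
        _ = V * y ^ 2 := by ring
        _ ≤ _ := mul_le_mul_of_nonneg_left e2 hV0.le
    have e4 := mul_le_mul_of_nonneg_right e3 (Real.sqrt_nonneg (X : ℝ))
    rw [mul_assoc V, Real.mul_self_sqrt (by linarith)] at e4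
    linarith
  have g2 : ∑ n ∈ G, (if n ∈ A then (1 : ℝ) else 0) ≤ #A := by
    rw [sum_boole]
    exact_mod_cast card_le_card fun n hn => (mem_filter.1 hn).2
  have g3 : L * ∑ q ∈ Y, ∑ n ∈ G, (if ((q ^ m : ℕ) : ℤ) ∣ H.eval (n : ℤ) then (1 : ℝ) else 0) ≤ V * X / 40 := by
    obtain ⟨Z, hZ⟩ : ∃ Z : ℝ, Z = (Q₀ : ℝ) ^ m * y ^ Cx (2 * H.natDegree) b := ⟨_, rfl⟩
    have e1 : ∀ q ∈ Y, ∑ n ∈ G, (if ((q ^ m : ℕ) : ℤ) ∣ H.eval (n : ℤ) then (1 : ℝ) else 0) ≤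
        X * (D / 2 ^ j) * (2 * (2 ^ Q₀ * (1 / lam * V))) + Z := by
      intro q hq
      rw [hY] at hq
      obtain ⟨hq1, hq2⟩ := mem_filter.1 hq
      have := count_power_le hd hB b he hm hts X hq2 (by have := mem_range.1 hq1; omega) G (by
        intro n hn; rw [hG] at hn; exact mem_filter.1 hn)
      rw [sum_boole, hZ, hV, hlam, hy, hD]
      exact this
    have hZ0 : 0 ≤ Z := by rw [hZ]; positivity
    have e2 : ∑ q ∈ Y, ∑ n ∈ G, (if ((q ^ m : ℕ) : ℤ) ∣ H.eval (n : ℤ) then (1 : ℝ) else 0) ≤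
        (Q₀ + 1) * (X * (D / 2 ^ j) * (2 * (2 ^ Q₀ * (1 / lam * V))) + Z) := by
      refine (sum_le_card_nsmul Y _ _ e1).trans ?_
      rw [nsmul_eq_mul]
      refine mul_le_mul_of_nonneg_right ?_ (by positivity)
      have : #Y ≤ Q₀ + 1 := by rw [hY]; exact (card_filter_le _ _).trans (card_range _).le
      exact_mod_cast this
    have e3 : 0 ≤ ((Q₀ : ℝ) + 1) * (X * (D / 2 ^ j) * (2 * (2 ^ Q₀ * (1 / lam * V))) + Z) := by positivity
    have e4 : F * lam * ((Q₀ + 1) * (X * (D / 2 ^ j) * (2 * (2 ^ Q₀ * (1 / lam * V))) + Z))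
        = ((Q₀ + 1) * F * D * (2 * 2 ^ Q₀)) / 2 ^ j * (V * X) + F * (Q₀ + 1) * (lam * Z) := by
      field_simp
    have e5 : ((Q₀ + 1) * F * D * (2 * 2 ^ Q₀)) / 2 ^ j ≤ 1 / 80 := by
      rw [div_le_iff₀ (by positivity)]; linarith
    have e6 : F * (Q₀ + 1) * (lam * Z) ≤ V * X / 80 := by
      have f1 : F * (Q₀ + 1) * (lam * Z) ≤ F * (Q₀ + 1) * (y * Z) := by gcongr
      have f2 : 80 * (F * (Q₀ + 1) * Q₀ ^ m) ≤ y * V := by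
        refine le_trans ?_ hyV
        rw [hK]; linarith
      have f3 : y ^ (Cx (2 * H.natDegree) b + 2) ≤ X := (pow_le_pow_right₀ hy1 hCE).trans hXy
      have f4 := mul_le_mul_of_nonneg_right f2 (show 0 ≤ y * y ^ Cx (2 * H.natDegree) b by positivity)
      have f5 := mul_le_mul_of_nonneg_left f3 hV0.le
      have f6 : y * V * (y * y ^ Cx (2 * H.natDegree) b) = V * y ^ (Cx (2 * H.natDegree) b + 2) := by ring
      have f7 : 80 * (F * (Q₀ + 1) * Q₀ ^ m) * (y * y ^ Cx (2 * H.natDegree) b) = 80 * (F * (Q₀ + 1) * (y * Z)) := by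
        rw [hZ]; ring
      linarith
    have e7 := mul_le_mul_of_nonneg_right e5 (show 0 ≤ V * (X : ℝ) by positivity)
    calc _ ≤ L * ((Q₀ + 1) * (X * (D / 2 ^ j) * (2 * (2 ^ Q₀ * (1 / lam * V))) + Z)) :=
          mul_le_mul_of_nonneg_left e2 hL0
      _ ≤ F * lam * ((Q₀ + 1) * (X * (D / 2 ^ j) * (2 * (2 ^ Q₀ * (1 / lam * V))) + Z)) :=
          mul_le_mul_of_nonneg_right hLF e3
      _ ≤ _ := by rw [e4]; linarith
  rw [mul_add] at hsum
  have g4 := mul_le_mul_of_nonneg_left g2 hL0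
  linarith

/-! ### Counting primes with almost prime values -/

/-- Every large `X` lies in one of the ranges `[y ^ E, y ^ (2 * E))` with `y = 2 ^ 2 ^ (t + a)`. -/
theorem exists_scale (a E T X : ℕ) (hE : 2 ≤ E) (h : (2 ^ 2 ^ (T + a)) ^ E ≤ X) :
    ∃ t ≥ T, (2 ^ 2 ^ (t + a)) ^ E ≤ X ∧ X < (2 ^ 2 ^ (t + a)) ^ (2 * E) := by
  have hex : ∃ t, X < (2 ^ 2 ^ (t + a)) ^ E := by
    refine ⟨X, ?_⟩
    calc X < 2 ^ X := Nat.lt_two_pow_self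
      _ ≤ 2 ^ 2 ^ (X + a) := Nat.pow_le_pow_right (by norm_num) ((Nat.le_add_right X a).trans Nat.lt_two_pow_self.le)
      _ ≤ _ := Nat.le_self_pow (by omega) _
  classical
  obtain ⟨n, hn⟩ : ∃ n, n = Nat.find hex := ⟨_, rfl⟩
  have hspec : X < (2 ^ 2 ^ (n + a)) ^ E := hn ▸ Nat.find_spec hex
  have hTn : T < n := by
    by_contra hc
    have : (2 ^ 2 ^ (n + a)) ^ E ≤ (2 ^ 2 ^ (T + a)) ^ E :=
      Nat.pow_le_pow_left (Nat.pow_le_pow_right (by norm_num) (Nat.pow_le_pow_right (by norm_num) (by omega))) _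
    omega
  obtain ⟨t, rfl⟩ : ∃ t, n = t + 1 := ⟨n - 1, by omega⟩
  refine ⟨t, by omega, ?_, ?_⟩
  · have := Nat.find_min hex (m := t) (by omega)
    omega
  · refine hspec.trans_eq ?_
    rw [← pow_mul, ← pow_mul, show t + 1 + a = t + a + 1 by ring, pow_succ 2 (t + a)]
    congr 1; ring

/-- At the primes counted, `H p` has at most `m` factors `q` for each prime `q ≤ Q₀`, and its other prime
factors are at least `z = 2 ^ 2 ^ t`, while `|H p|` is at most a fixed power of `z`. -/
theorem bigOmega_bound {H : Polynomial ℤ} {C a E Q₀ m t X p : ℕ}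
    (hC : ∀ n : ℕ, 1 ≤ n → (H.eval (n : ℤ)).natAbs ≤ C * n ^ H.natDegree) (hCt : C ≤ 2 ^ 2 ^ t)
    (hX : X < (2 ^ 2 ^ (t + a)) ^ (2 * E)) (hp : p.Prime) (hpX : p ≤ 2 * X)
    (hgood : Good (badH H) Q₀ (t + a) t p)
    (hm : ∀ q ≤ Q₀, q.Prime → ¬ ((q ^ m : ℕ) : ℤ) ∣ H.eval (p : ℤ)) :
    ArithmeticFunction.cardFactors (H.eval (p : ℤ)).natAbs ≤
      Q₀ * m + (1 + (1 + 2 ^ a * (2 * E)) * H.natDegree) := by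
  by_cases h0 : (H.eval (p : ℤ)).natAbs = 0
  · rw [h0]; simp
  have hz : 2 ≤ 2 ^ 2 ^ t := Nat.le_self_pow (by positivity) 2
  refine cardFactors_le h0 hz (fun q hq hqp hdv => hm q hq hqp (Int.natCast_dvd.2 hdv)) ?_ ?_
  · intro q hq hdv hqQ
    by_contra hlt
    push Not at hlt
    obtain ⟨i, hi, hqi⟩ := exists_Blk hq hlt
    have h1 := hgood.2 i hi q (mem_filter.2 ⟨hqi, hqQ⟩)
    have h2 : ¬ q ∣ p := hgood.1 q hq (hlt.trans_le
      (Nat.pow_le_pow_right (by norm_num) (Nat.pow_le_pow_right (by norm_num) (by omega))))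
    unfold badH at h1
    rw [if_pos ⟨h2, Int.natCast_dvd.2 hdv⟩] at h1
    exact one_ne_zero h1
  · refine (hC p hp.one_lt.le).trans ?_
    rw [pow_add, pow_one]
    refine Nat.mul_le_mul hCt ?_
    rw [pow_mul]
    refine Nat.pow_le_pow_left (hpX.trans ?_) _
    rw [pow_add, pow_one]
    refine Nat.mul_le_mul hz (hX.le.trans_eq ?_)
    rw [← pow_mul, ← pow_mul, pow_add]
    congr 1; ring

/-- The lower bound of `count_ge` at the scale `X = ⌊x⌋`, with the density bounded below by
`c / (log x) ^ g`. -/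
theorem main_count {g : ℕ} (h : Fin g → Polynomial ℤ) (hi : ∀ i, Irreducible (h i))
    (hd : ∀ i, 0 < (h i).natDegree) (hD : 1 ≤ (∏ i, h i).natDegree) :
    ∃ (r : ℕ) (c : ℝ), 0 < c ∧ ∃ x₀ : ℝ, ∀ x : ℝ, x₀ ≤ x → c * x / (Real.log x) ^ (g + 1) ≤
      (Nat.card {p : ℕ | p.Prime ∧ x < (p : ℝ) ∧ (p : ℝ) ≤ 2 * x ∧
        ArithmeticFunction.cardFactors ((∏ i, h i).eval (p : ℤ)).natAbs ≤ r} : ℝ) := by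
  classical
  obtain ⟨c, N, t₁, hc, hV⟩ := VH_badH_ge h hi hd hD
  obtain ⟨H, hH⟩ : ∃ H, H = ∏ i, h i := ⟨_, rfl⟩
  rw [← hH] at hD hV ⊢
  obtain ⟨a, E, Q₀, m, t₀, hE, hNQ, hcount⟩ := count_ge hD N fun Q hQ => (hV Q hQ).1
  obtain ⟨C, hC⟩ := natAbs_eval_le H
  obtain ⟨T, hT⟩ : ∃ T, T = max (max t₀ t₁) C := ⟨_, rfl⟩
  refine ⟨Q₀ * m + (1 + (1 + 2 ^ a * (2 * E)) * H.natDegree), c / (80 * 2 ^ g), by positivity,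
    (((2 ^ 2 ^ (T + a)) ^ E : ℕ) : ℝ) + 2, fun x hx => ?_⟩
  have hx2 : (2 : ℝ) ≤ x := by
    have : (0 : ℝ) ≤ (((2 ^ 2 ^ (T + a)) ^ E : ℕ) : ℝ) := Nat.cast_nonneg _
    linarith
  obtain ⟨X, hX⟩ : ∃ X, X = ⌊x⌋₊ := ⟨_, rfl⟩
  have hXx : (X : ℝ) ≤ x := hX ▸ Nat.floor_le (by linarith)
  have hxX : x < X + 1 := hX ▸ Nat.lt_floor_add_one x
  have hTX : (2 ^ 2 ^ (T + a)) ^ E ≤ X := hX ▸ Nat.le_floor (by linarith)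
  obtain ⟨t, htT, ht1, ht2⟩ := exists_scale a E T X hE hTX
  have hcnt := hcount t (by omega) X ht1 ht2
  have hVt := (hV Q₀ hNQ).2 t (by omega)
  have hCt : C ≤ 2 ^ 2 ^ t := by
    have : C ≤ t := by omega
    exact this.trans (Nat.lt_two_pow_self.le.trans Nat.lt_two_pow_self.le)
  obtain ⟨A, hA⟩ : ∃ A, A = ({p ∈ Ioc X (2 * X) | (p.Prime ∧ Good (badH H) Q₀ (t + a) t p) ∧
          ∀ q ≤ Q₀, q.Prime → ¬ ((q ^ m : ℕ) : ℤ) ∣ H.eval (p : ℤ)} : Finset ℕ) := ⟨_, rfl⟩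
  rw [← hA] at hcnt
  have hcard : (#A : ℝ) ≤ (Nat.card {p : ℕ | p.Prime ∧ x < (p : ℝ) ∧ (p : ℝ) ≤ 2 * x ∧
        ArithmeticFunction.cardFactors (H.eval (p : ℤ)).natAbs ≤
          Q₀ * m + (1 + (1 + 2 ^ a * (2 * E)) * H.natDegree)} : ℝ) := by
    rw [Nat.card_coe_set_eq, ← Set.ncard_coe_finset]
    refine Nat.cast_le.2 (Set.ncard_le_ncard ?_ ?_)
    · intro p hp
      rw [hA, mem_coe, mem_filter, mem_Ioc] at hp
      obtain ⟨⟨h1, h2⟩, ⟨h3, h4⟩, h5⟩ := hp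
      refine ⟨h3, ?_, ?_, bigOmega_bound hC hCt ht2 h3 h2 h4 h5⟩
      · have : ((X + 1 : ℕ) : ℝ) ≤ p := Nat.cast_le.2 h1
        push_cast at this; linarith
      · have : (p : ℝ) ≤ ((2 * X : ℕ) : ℝ) := Nat.cast_le.2 h2
        push_cast at this; linarith
    · refine (Set.finite_Iic ⌊2 * x⌋₊).subset fun p hp => ?_
      exact Nat.le_floor hp.2.2.1
  refine le_trans ?_ hcard
  -- Lower bound for the density and upper bounds for the logarithms.
  have hlx : 0 < Real.log x := Real.log_pos (by linarith)
  have hX1 : (1 : ℝ) ≤ X := by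
    have : 1 ≤ X := (Nat.one_le_iff_ne_zero.2 (by positivity)).trans ht1
    exact_mod_cast this
  have hl2 : 1 / 2 ≤ Real.log 2 := by have := Real.log_two_gt_d9; linarith
  have hL : Real.log (2 * X) ≤ 2 * Real.log x := by
    rw [← Real.log_rpow (by linarith)]
    refine Real.log_le_log (by linarith) ?_
    rw [Real.rpow_two]; nlinarith
  have hL0 : 0 < Real.log (2 * X) := Real.log_pos (by linarith)
  have h2t : (2 : ℝ) ^ t ≤ 2 * Real.log x := by
    have e1 : (2 : ℝ) ^ 2 ^ t ≤ x := by
      have : 2 ^ 2 ^ t ≤ X := by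
        refine le_trans ?_ ht1
        refine (Nat.pow_le_pow_right (by norm_num) (Nat.pow_le_pow_right (by norm_num) (Nat.le_add_right t a))).trans
          (Nat.le_self_pow (by omega) _)
      have : ((2 ^ 2 ^ t : ℕ) : ℝ) ≤ X := Nat.cast_le.2 this
      push_cast at this; linarith
    have e2 := Real.log_le_log (by positivity) e1
    rw [Real.log_pow] at e2
    push_cast at e2
    have : (0 : ℝ) < 2 ^ t := by positivity
    nlinarith
  have hV2 : c / (2 * Real.log x) ^ g ≤ VH (badH H) Q₀ t :=
    (div_le_div_of_nonneg_left hc.le (by positivity) (pow_le_pow_left₀ (by positivity) h2t g)).trans hVt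
  have h3 : c / (2 * Real.log x) ^ g * (x / 2) / 20 ≤ (2 * Real.log x) * #A := by
    refine le_trans ?_ (hcnt.trans (mul_le_mul_of_nonneg_right hL (Nat.cast_nonneg _)))
    have h4 : x / 2 ≤ X := by linarith
    have h5 := mul_le_mul hV2 h4 (by linarith) (le_trans (by positivity) hV2)
    linarith
  have h6 : c / (80 * 2 ^ g) * x / Real.log x ^ (g + 1) =
      c / (2 * Real.log x) ^ g * (x / 2) / 20 / (2 * Real.log x) := by
    rw [mul_pow, pow_succ]
    field_simp
    norm_num
  rw [h6, div_le_iff₀ (by positivity)]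
  linarith

end APS

/-- For `H = h₁ ⋯ h_g` a product of `g` distinct irreducible integer
polynomials, each of degree `k ≥ 1`, such that for every prime `p` the number of
invertible roots of `H` mod `p` is `< p - 1`, there exist a natural number `r`, a
constant `c > 0` and `x₀` such that for all `x ≥ x₀` the number of primes
`x < p ≤ 2x` with `Ω(|H(p)|) ≤ r` is at least `c·x/(log x)^(g+1)`. -/
theorem almost_prime_values_of_polynomials_at_primes
    (g k : ℕ) (hg : 1 ≤ g) (hk : 1 ≤ k)
    (h : Fin g → Polynomial ℤ)
    (hirr : ∀ i, Irreducible (h i))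
    (hdeg : ∀ i, (h i).natDegree = k)
    (hdist : ∀ i j, i ≠ j → h i ≠ h j)
    (H : Polynomial ℤ) (hH : H = ∏ i, h i)
    (hroot : ∀ p : ℕ, p.Prime →
      Nat.card {a : ZMod p | IsUnit a ∧ Polynomial.aeval a H = 0} < p - 1) :
    ∃ (r : ℕ) (c : ℝ), 0 < c ∧ ∃ x₀ : ℝ, ∀ x : ℝ, x₀ ≤ x →
      c * x / (Real.log x) ^ (g + 1) ≤
        (Nat.card {p : ℕ | p.Prime ∧ x < (p : ℝ) ∧ (p : ℝ) ≤ 2 * x ∧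
          bigOmega (H.eval (p : ℤ)).natAbs ≤ r} : ℝ) := by
  subst hH
  refine APS.main_count h hirr (fun i => by rw [hdeg]; omega) ?_
  rw [Polynomial.natDegree_prod _ _ (fun i _ => (hirr i).ne_zero)]
  simp only [hdeg, Finset.sum_const, Finset.card_univ, Fintype.card_fin, smul_eq_mul]
  exact Nat.mul_pos hg hk
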